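/- arXiv:1411.5891 — 5 statements merged into one kernel-verified Lean document; each statement's English description precedes it below -/
import Mathlib

section
/- Let H be a complex separable Hilbert space of dimension at least 3. A surjective map Φ : B_s(H) → B_s(H) satisfies W(AB − BA) = W(Φ(A)Φ(B) − Φ(B)Φ(A)) for all A, B ∈ B_s(H) if and only if there exist a unitary operator U on H, a scalar ε ∈ {1, −1}, a subset S ⊆ D(H), and a functional f : B_s(H) → ℝ such that Φ(A) = ε·U A U* + f(A)·I whenever A ∈ B_s(H) \ S, and Φ(A) = −ε·U A U* + f(A)·I whenever A ∈ S. -/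
open scoped InnerProductSpace

noncomputable def numRange {H : Type*} [NormedAddCommGroup H] [InnerProductSpace ℂ H]
    (T : H →L[ℂ] H) : Set ℂ :=
  {z | ∃ x : H, ‖x‖ = 1 ∧ ⟪x, T x⟫_ℂ = z}

/-- `D(H)`: the set of real linear combinations of an orthogonal projection and the identity. -/
def DSet (H : Type*) [NormedAddCommGroup H] [InnerProductSpace ℂ H] [CompleteSpace H] :
    Set (H →L[ℂ] H) :=
  {A | ∃ (P : H →L[ℂ] H) (α δ : ℝ), IsSelfAdjoint P ∧ P * P = P ∧
    A = (α : ℂ) • P + (δ : ℂ) • 1}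

section Basics

variable {H : Type*} [NormedAddCommGroup H] [InnerProductSpace ℂ H] [CompleteSpace H]

/-- rank one operator `z ↦ ⟪y,z⟫ x` -/
noncomputable def ro (x y : H) : H →L[ℂ] H := InnerProductSpace.rankOne ℂ x y

@[simp] lemma ro_apply (x y z : H) : ro x y z = ⟪y, z⟫_ℂ • x := rfl

lemma sa_inner {A : H →L[ℂ] H} (hA : IsSelfAdjoint A) (x y : H) : ⟪A x, y⟫_ℂ = ⟪x, A y⟫_ℂ :=
  (ContinuousLinearMap.isSelfAdjoint_iff_isSymmetric.1 hA) x y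

lemma sa_of {A : H →L[ℂ] H} (h : ∀ x y, ⟪A x, y⟫_ℂ = ⟪x, A y⟫_ℂ) : IsSelfAdjoint A :=
  ContinuousLinearMap.isSelfAdjoint_iff_isSymmetric.2 h

lemma sa_ro (x : H) : IsSelfAdjoint (ro x x) := by
  apply sa_of; intro y z
  simp only [ro_apply, inner_smul_left, inner_smul_right, inner_conj_symm]; ring

lemma sa_ro_add (x y : H) : IsSelfAdjoint (ro x y + ro y x) := by
  apply sa_of; intro u v
  simp only [ro_apply, add_apply, inner_add_left, inner_add_right,
    inner_smul_left, inner_smul_right, inner_conj_symm]; ring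

lemma sa_ro_sub (x y : H) : IsSelfAdjoint (Complex.I • (ro x y - ro y x)) := by
  apply sa_of; intro u v
  simp only [ro_apply, sub_apply, smul_apply,
    inner_sub_left, inner_sub_right,
    inner_smul_left, inner_smul_right, inner_conj_symm, Complex.conj_I]; ring

lemma sa_real {A : H →L[ℂ] H} (hA : IsSelfAdjoint A) (x : H) :
    ((⟪x, A x⟫_ℂ).re : ℂ) = ⟪x, A x⟫_ℂ := by
  apply Complex.conj_eq_iff_re.1
  rw [inner_conj_symm, sa_inner hA]

lemma sa_smul {A : H →L[ℂ] H} (hA : IsSelfAdjoint A) (r : ℝ) : IsSelfAdjoint ((r : ℂ) • A) := by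
  apply sa_of; intro u v
  simp [inner_smul_left, inner_smul_right, sa_inner hA]

lemma sa_scalar (r : ℝ) : IsSelfAdjoint ((r : ℂ) • (1 : H →L[ℂ] H)) :=
  sa_smul (IsSelfAdjoint.one _) r

lemma op_eq_zero {T : H →L[ℂ] H} (h : ∀ x, ⟪x, T x⟫_ℂ = 0) : T = 0 := by
  have := (inner_map_self_eq_zero (T : H →ₗ[ℂ] H)).1 (by
    intro x
    rw [← inner_conj_symm]; simp [h x])
  ext x
  exact congrArg (fun f => f x) this

/-- commutator -/
def cm (A B : H →L[ℂ] H) : H →L[ℂ] H := A * B - B * A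

lemma inner_self_one {x : H} (hx : ‖x‖ = 1) : ⟪x, x⟫_ℂ = 1 := by
  rw [inner_self_eq_norm_sq_to_K, hx]; simp

lemma exists_unit [Nontrivial H] : ∃ x : H, ‖x‖ = 1 := by
  obtain ⟨x, hx⟩ := exists_ne (0 : H)
  refine ⟨((‖x‖⁻¹ : ℝ) : ℂ) • x, ?_⟩
  rw [norm_smul]; simp [norm_ne_zero_iff.2 hx]

lemma numRange_zero_iff [Nontrivial H] (T : H →L[ℂ] H) : numRange T = {0} ↔ T = 0 := by
  constructor
  · intro h
    apply op_eq_zero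
    intro x
    by_cases hx : x = 0
    · simp [hx]
    have hn : ‖x‖ ≠ 0 := norm_ne_zero_iff.2 hx
    have : ⟪((‖x‖⁻¹ : ℝ) : ℂ) • x, T (((‖x‖⁻¹ : ℝ) : ℂ) • x)⟫_ℂ ∈ numRange T :=
      ⟨_, by rw [norm_smul]; simp [hn], rfl⟩
    rw [h] at this
    simpa [inner_smul_left, inner_smul_right, hx] using this
  · rintro rfl
    obtain ⟨x, hx⟩ := exists_unit (H := H)
    ext z; constructor
    · rintro ⟨x, hx, rfl⟩; simp
    · rintro rfl; exact ⟨x, hx, by simp⟩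

/-- symmetric numerical range -/
def SymR (T : H →L[ℂ] H) : Prop := ∀ z ∈ numRange T, -z ∈ numRange T

lemma symR_of_D {A B : H →L[ℂ] H} (hA : A ∈ DSet H) : SymR (cm A B) := by
  obtain ⟨P, α, δ, hP, hPP, rfl⟩ := hA
  have hPP' : ∀ x, P (P x) = P x := fun x => congrArg (fun f : H →L[ℂ] H => f x) hPP
  rintro z ⟨x, hx, rfl⟩
  refine ⟨(2 : ℂ) • P x - x, ?_, ?_⟩
  · have : ‖(2 : ℂ) • P x - x‖ ^ 2 = ‖x‖ ^ 2 := by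
      apply Complex.ofReal_injective
      push_cast
      have e : ∀ y : H, ((‖y‖ : ℂ)) ^ 2 = ⟪y, y⟫_ℂ := fun y =>
        (inner_self_eq_norm_sq_to_K (𝕜 := ℂ) y).symm
      rw [e, e]
      simp only [inner_sub_left, inner_sub_right, inner_smul_left, inner_smul_right, sa_inner hP,
        hPP'] 
      simp only [Complex.conj_ofNat]; ring
    rw [hx] at this
    nlinarith [norm_nonneg ((2 : ℂ) • P x - x)]
  · simp only [cm, sub_apply, mul_apply_eq_comp,
      add_apply, smul_apply,
      one_apply_eq_self, map_sub, map_add, map_smul, inner_sub_left, inner_sub_right,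
      inner_add_right, inner_smul_left, inner_smul_right, sa_inner hP, hPP', Complex.conj_ofNat]
    ring

/-- strict asymmetry -/
def Gap (T : H →L[ℂ] H) : Prop := ∃ θ : ℝ, (θ = 1 ∨ θ = -1) ∧ ∃ b : H, ‖b‖ = 1 ∧
  ∃ ρ : ℝ, ρ < θ * (⟪b, T b⟫_ℂ).im ∧ ∀ z, ‖z‖ = 1 → -(θ * (⟪z, T z⟫_ℂ).im) ≤ ρ

lemma Gap.not_sym {T : H →L[ℂ] H} (h : Gap T) : ¬ SymR T := by
  intro hs
  obtain ⟨θ, -, b, hb, ρ, h1, h2⟩ := h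
  obtain ⟨z, hz, hz'⟩ := hs _ ⟨b, hb, rfl⟩
  have := h2 z hz
  rw [hz'] at this
  simp at this
  linarith

lemma real_gap (l : Fin 3 → ℝ) (h0 : ∀ i, l i ≠ 0) (hs : l 0 + l 1 + l 2 = 0) :
    ∃ θ : ℝ, (θ = 1 ∨ θ = -1) ∧ ∃ i, ∃ ρ : ℝ, ρ < θ * l i ∧
      ∀ p : Fin 3 → ℝ, (∀ i, 0 ≤ p i) → p 0 + p 1 + p 2 ≤ 1 →
        -(θ * (l 0 * p 0 + l 1 * p 1 + l 2 * p 2)) ≤ ρ := by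
  have key : ∀ a b c : ℝ, a + b + c = 0 → 0 < a → b < 0 → c < 0 → ∃ ρ, ρ < a ∧
      ∀ p q r : ℝ, 0 ≤ p → 0 ≤ q → 0 ≤ r → p + q + r ≤ 1 → -(a * p + b * q + c * r) ≤ ρ := by
    intro a b c h ha hb hc
    refine ⟨max (-b) (-c), by rw [max_lt_iff]; constructor <;> linarith, ?_⟩
    intro p q r hp hq hr h1
    have m1 := le_max_left (-b) (-c)
    have m2 := le_max_right (-b) (-c)
    set m := max (-b) (-c)
    nlinarith [mul_nonneg ha.le hp, mul_nonneg (sub_nonneg.2 m1) hq,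
      mul_nonneg (sub_nonneg.2 m2) hr, mul_nonneg (by linarith : (0:ℝ) ≤ m) (by linarith : 0 ≤ 1 - q - r)]
  have key2 : ∀ θ : ℝ, (θ = 1 ∨ θ = -1) → ∀ i j k : Fin 3, (i = 0 ∧ j = 1 ∧ k = 2 ∨
      i = 1 ∧ j = 0 ∧ k = 2 ∨ i = 2 ∧ j = 0 ∧ k = 1) → 0 < θ * l i → θ * l j < 0 → θ * l k < 0 →
      ∃ θ : ℝ, (θ = 1 ∨ θ = -1) ∧ ∃ i, ∃ ρ : ℝ, ρ < θ * l i ∧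
      ∀ p : Fin 3 → ℝ, (∀ i, 0 ≤ p i) → p 0 + p 1 + p 2 ≤ 1 →
        -(θ * (l 0 * p 0 + l 1 * p 1 + l 2 * p 2)) ≤ ρ := by
    intro θ hθ i j k hijk hi hj hk
    obtain ⟨ρ, h1, h2⟩ := key (θ * l i) (θ * l j) (θ * l k) (by
      rcases hijk with ⟨rfl, rfl, rfl⟩ | ⟨rfl, rfl, rfl⟩ | ⟨rfl, rfl, rfl⟩ <;>
      linear_combination θ * hs) hi hj hk
    refine ⟨θ, hθ, i, ρ, h1, fun p hp hp1 => ?_⟩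
    have := h2 (p i) (p j) (p k) (hp _) (hp _) (hp _) (by
      rcases hijk with ⟨rfl, rfl, rfl⟩ | ⟨rfl, rfl, rfl⟩ | ⟨rfl, rfl, rfl⟩ <;> linarith)
    rcases hijk with ⟨rfl, rfl, rfl⟩ | ⟨rfl, rfl, rfl⟩ | ⟨rfl, rfl, rfl⟩ <;> linarith
  rcases lt_or_gt_of_ne (h0 0) with a | a <;> rcases lt_or_gt_of_ne (h0 1) with b | b <;>
    rcases lt_or_gt_of_ne (h0 2) with c | c
  · linarith
  · exact key2 1 (by simp) 2 0 1 (by simp) (by linarith) (by linarith) (by linarith)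
  · exact key2 1 (by simp) 1 0 2 (by simp) (by linarith) (by linarith) (by linarith)
  · exact key2 (-1) (by simp) 0 1 2 (by simp) (by linarith) (by linarith) (by linarith)
  · exact key2 1 (by simp) 0 1 2 (by simp) (by linarith) (by linarith) (by linarith)
  · exact key2 (-1) (by simp) 1 0 2 (by simp) (by linarith) (by linarith) (by linarith)
  · exact key2 (-1) (by simp) 2 0 1 (by simp) (by linarith) (by linarith) (by linarith)
  · linarith

end Basics

section L2

variable {H : Type*} [NormedAddCommGroup H] [InnerProductSpace ℂ H] [CompleteSpace H]

lemma gap_op (f0 f1 f2 : H) (hli : LinearIndependent ℂ ![f0, f1, f2])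
    (htr : ⟪f0, f2⟫_ℂ + ⟪f2, f0⟫_ℂ = 2 * ⟪f1, f1⟫_ℂ) :
    Gap (Complex.I • (ro f2 f0 + ro f0 f2 - (2 : ℂ) • ro f1 f1)) := by
  set K : H →L[ℂ] H := ro f2 f0 + ro f0 f2 - (2 : ℂ) • ro f1 f1 with hK
  have hKz : ∀ z, K z = ⟪f0, z⟫_ℂ • f2 + ⟪f2, z⟫_ℂ • f0 - (2 : ℂ) • ⟪f1, z⟫_ℂ • f1 := by
    intro z; simp [hK]
  have hKsa : IsSelfAdjoint K := by
    apply sa_of; intro u v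
    simp only [hKz, inner_add_left, inner_sub_left, inner_sub_right, inner_add_right,
      inner_smul_left, inner_smul_right, inner_conj_symm, Complex.conj_ofNat]
    ring
  set M : Submodule ℂ H := Submodule.span ℂ (Set.range ![f0, f1, f2]) with hM
  have hf : ∀ i, ![f0, f1, f2] i ∈ M := fun i => Submodule.subset_span ⟨i, rfl⟩
  have m0 : f0 ∈ M := hf 0
  have m1 : f1 ∈ M := hf 1
  have m2 : f2 ∈ M := hf 2
  have hKM : ∀ z, K z ∈ M := by
    intro z; rw [hKz]
    exact M.sub_mem (M.add_mem (M.smul_mem _ m2) (M.smul_mem _ m0))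
      (M.smul_mem _ (M.smul_mem _ m1))
  have hfin : Module.finrank ℂ M = 3 := by
    rw [hM, finrank_span_eq_card hli]; simp
  haveI : FiniteDimensional ℂ M := FiniteDimensional.span_of_finite ℂ (Set.finite_range _)
  let KM : M →ₗ[ℂ] M := (K : H →ₗ[ℂ] H).restrict (fun z _ => hKM z)
  have hsym : KM.IsSymmetric := by
    intro x y
    exact sa_inner hKsa (x : H) (y : H)
  let b := hsym.eigenvectorBasis hfin
  let l := hsym.eigenvalues hfin
  have hb : ∀ i, K (b i : H) = (l i : ℂ) • (b i : H) := by
    intro i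
    have := hsym.apply_eigenvectorBasis hfin i
    have := congrArg (Subtype.val) this
    exact this
  have hinj : ∀ z ∈ M, K z = 0 → z = 0 := by
    intro z hz h
    rw [hKz] at h
    have h3 := Fintype.linearIndependent_iff.1 hli ![⟪f2, z⟫_ℂ, -(2 * ⟪f1, z⟫_ℂ), ⟪f0, z⟫_ℂ] (by
      rw [Fin.sum_univ_three]
      simp only [Matrix.cons_val]
      rw [← h]; module)
    have e0 : ⟪f2, z⟫_ℂ = 0 := by simpa using h3 0
    have e1 : ⟪f1, z⟫_ℂ = 0 := by simpa using h3 1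
    have e2 : ⟪f0, z⟫_ℂ = 0 := by simpa using h3 2
    have : ∀ w ∈ M, ⟪w, z⟫_ℂ = 0 := by
      intro w hw
      induction hw using Submodule.span_induction with
      | mem x hx =>
        obtain ⟨i, rfl⟩ := hx
        fin_cases i <;> simp [e0, e1, e2]
      | zero => simp
      | add x y _ _ hx hy => simp [inner_add_left, hx, hy]
      | smul a x _ hx => simp [inner_smul_left, hx]
    exact inner_self_eq_zero.1 (this z hz)
  have hbn : ∀ i, ‖(b i : H)‖ = 1 := fun i => b.orthonormal.1 i
  have hl0 : ∀ i, l i ≠ 0 := by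
    intro i hi
    have := hb i
    rw [hi] at this
    have h0 := hinj _ (b i).2 (by simpa using this)
    have := hbn i
    rw [h0] at this; simp at this
  have hbsum : ∀ u v : H, u ∈ M → v ∈ M → ∑ i, ⟪u, (b i : H)⟫_ℂ * ⟪(b i : H), v⟫_ℂ = ⟪u, v⟫_ℂ := by
    intro u v hu hv
    exact b.sum_inner_mul_inner ⟨u, hu⟩ ⟨v, hv⟩
  have hlK : ∀ i, (l i : ℂ) = ⟪(b i : H), K (b i : H)⟫_ℂ := by
    intro i; rw [hb i, inner_smul_right, inner_self_one (hbn i), mul_one]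
  have hsum : l 0 + l 1 + l 2 = 0 := by
    have : ((∑ i, l i : ℝ) : ℂ) = 0 := by
      push_cast
      calc ∑ i, (l i : ℂ) = ∑ i, ⟪(b i : H), K (b i : H)⟫_ℂ := by simp_rw [hlK]
        _ = ∑ i, (⟪f0, (b i : H)⟫_ℂ * ⟪(b i : H), f2⟫_ℂ) + ∑ i, (⟪f2, (b i : H)⟫_ℂ * ⟪(b i : H), f0⟫_ℂ)
            - 2 * ∑ i, (⟪f1, (b i : H)⟫_ℂ * ⟪(b i : H), f1⟫_ℂ) := by
          rw [Finset.mul_sum, ← Finset.sum_add_distrib, ← Finset.sum_sub_distrib]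
          refine Finset.sum_congr rfl fun i _ => ?_
          rw [hKz]
          simp only [inner_sub_right, inner_add_right, inner_smul_right]
        _ = 0 := by
          rw [hbsum _ _ m0 m2, hbsum _ _ m2 m0, hbsum _ _ m1 m1, htr]; ring
    rw [Fin.sum_univ_three] at this
    exact_mod_cast this
  have hform : ∀ z, ⟪z, K z⟫_ℂ = ((∑ i, l i * ‖⟪(b i : H), z⟫_ℂ‖ ^ 2 : ℝ) : ℂ) := by
    intro z
    have h1 : K z = ∑ i, ⟪(b i : H), K z⟫_ℂ • (b i : H) := by
      have := b.sum_repr' ⟨K z, hKM z⟩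
      have := congrArg Subtype.val this
      simpa using this.symm
    conv_lhs => rw [h1]
    rw [inner_sum]; push_cast
    refine Finset.sum_congr rfl fun i _ => ?_
    rw [inner_smul_right, ← sa_inner hKsa, hb i, inner_smul_left, ← inner_conj_symm z (b i : H),
      mul_assoc, Complex.mul_conj, Complex.normSq_eq_norm_sq]
    simp
  have hbes : ∀ z : H, ‖z‖ = 1 → ‖⟪(b 0 : H), z⟫_ℂ‖ ^ 2 + ‖⟪(b 1 : H), z⟫_ℂ‖ ^ 2
      + ‖⟪(b 2 : H), z⟫_ℂ‖ ^ 2 ≤ 1 := by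
    intro z hz
    have ho : Orthonormal ℂ (fun i => (b i : H)) := by
      exact b.orthonormal.comp_linearIsometry M.subtypeₗᵢ
    have := ho.sum_inner_products_le z (s := Finset.univ)
    rw [Fin.sum_univ_three, hz] at this
    simpa using this
  obtain ⟨θ, hθ, i, ρ, h1, h2⟩ := real_gap l hl0 hsum
  refine ⟨θ, hθ, b i, hbn i, ρ, ?_, ?_⟩
  · rw [smul_apply, inner_smul_right, ← hlK]
    simpa using h1
  · intro z hz
    rw [smul_apply, inner_smul_right, hform]
    have := h2 (fun i => ‖⟪(b i : H), z⟫_ℂ‖ ^ 2) (fun i => by positivity) (hbes z hz)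
    rw [Fin.sum_univ_three]
    rw [Complex.I_mul_im, Complex.ofReal_re]
    exact this

lemma gap_of_indep {A : H →L[ℂ] H} (hA : IsSelfAdjoint A) {x : H}
    (hli : LinearIndependent ℂ ![x, A x, A (A x)]) :
    Gap (cm A (Complex.I • (ro (A x) x - ro x (A x)))) := by
  have := gap_op x (A x) (A (A x)) hli (by
    rw [← sa_inner hA, sa_inner hA (A x) x]; ring)
  convert this using 1
  ext z
  simp only [cm, sub_apply, mul_apply_eq_comp, smul_apply, add_apply, ro_apply, map_smul, map_sub,
    sa_inner hA]
  have h1 : ⟪x, A z⟫_ℂ = ⟪A x, z⟫_ℂ := (sa_inner hA _ _).symm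
  have h2 : ⟪x, A (A z)⟫_ℂ = ⟪A (A x), z⟫_ℂ := by rw [sa_inner hA, sa_inner hA]
  module


lemma indep_pair {x y : H} (hx : x ≠ 0) (h : ∀ c : ℂ, y ≠ c • x) : LinearIndependent ℂ ![x, y] := by
  rw [LinearIndependent.pair_iff' hx]
  intro a ha; exact h a ha.symm

lemma scalar_of_all_eigen {A : H →L[ℂ] H} (h : ∀ x, ∃ c : ℂ, A x = c • x) :
    ∃ c : ℂ, A = c • 1 := by
  by_cases hz : ∀ x : H, x = 0
  · exact ⟨0, by ext x; rw [hz x]; simp⟩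
  push Not at hz
  obtain ⟨x, hx⟩ := hz
  obtain ⟨c, hc⟩ := h x
  refine ⟨c, ?_⟩
  ext y
  simp only [smul_apply, one_apply_eq_self]
  by_cases hxy : ∃ d : ℂ, y = d • x
  · obtain ⟨d, rfl⟩ := hxy
    rw [map_smul, hc, smul_comm]
  push Not at hxy
  have hli := LinearIndependent.pair_iff.1 (indep_pair hx hxy)
  obtain ⟨d, hd⟩ := h y
  obtain ⟨s, hs⟩ := h (x + y)
  rw [map_add, hc, hd] at hs
  obtain ⟨h1, h2⟩ := hli (c - s) (d - s) (by
    rw [← sub_eq_zero] at hs; rw [← hs]; module)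
  rw [hd]
  congr 1
  linear_combination h2 - h1

lemma sa_scalar_real {c : ℂ} [Nontrivial H] (h : IsSelfAdjoint (c • (1 : H →L[ℂ] H))) :
    (c.re : ℂ) = c := by
  obtain ⟨x, hx⟩ := exists_unit (H := H)
  have := sa_real h x
  simpa [inner_smul_right, hx] using this

lemma scalar_mem_D (r : ℝ) : ((r : ℂ) • (1 : H →L[ℂ] H)) ∈ DSet H :=
  ⟨0, 0, r, IsSelfAdjoint.zero _, by simp, by simp⟩

/-- Self-adjoint, real quadratic relation. -/
lemma mem_D_of_quadratic {A : H →L[ℂ] H} (hA : IsSelfAdjoint A) (a c : ℝ)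
    (h : ∀ x, (A - (a : ℂ) • 1) ((A - (a : ℂ) • 1) x) = (c : ℂ) • x) : A ∈ DSet H := by
  set T := A - (a : ℂ) • (1 : H →L[ℂ] H) with hT
  have hTsa : IsSelfAdjoint T := hA.sub (sa_scalar a)
  have hAT : A = T + (a : ℂ) • 1 := by rw [hT]; abel
  have hn : ∀ x, ‖T x‖ ^ 2 = c * ‖x‖ ^ 2 := by
    intro x
    have e : ∀ y : H, ((‖y‖ : ℂ)) ^ 2 = ⟪y, y⟫_ℂ := fun y =>
        (inner_self_eq_norm_sq_to_K (𝕜 := ℂ) y).symm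
    apply Complex.ofReal_injective
    push_cast
    rw [e, e, sa_inner hTsa, h, inner_smul_right]
  rcases le_or_gt c 0 with hc | hc
  · have : T = 0 := by
      ext x
      have : ‖T x‖ ^ 2 ≤ 0 := by rw [hn]; exact mul_nonpos_of_nonpos_of_nonneg hc (by positivity)
      have : ‖T x‖ = 0 := by nlinarith [norm_nonneg (T x)]
      simpa using this
    rw [hAT, this, zero_add]
    exact scalar_mem_D a
  · set s := Real.sqrt c
    have hs : 0 < s := Real.sqrt_pos.2 hc
    have hs2 : (s : ℂ) * s = c := by
      rw [← Complex.ofReal_mul, Real.mul_self_sqrt hc.le]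
    have hs0 : (s : ℂ) ≠ 0 := by exact_mod_cast hs.ne'
    refine ⟨((1 / 2 : ℝ) : ℂ) • (1 + ((s⁻¹ : ℝ) : ℂ) • T), 2 * s, a - s, ?_, ?_, ?_⟩
    · exact sa_smul ((IsSelfAdjoint.one _).add (sa_smul hTsa _)) _
    · ext x
      simp only [mul_apply_eq_comp, smul_apply, add_apply, one_apply_eq_self, map_add, map_smul, h]
      rw [← hs2]; push_cast
      match_scalars <;> field_simp <;> ring
    · rw [hAT]
      ext x
      simp only [smul_apply, add_apply, one_apply_eq_self]
      push_cast
      match_scalars <;> field_simp <;> ring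

lemma exists_indep {A : H →L[ℂ] H} (hA : IsSelfAdjoint A) (hD : A ∉ DSet H) :
    ∃ x, LinearIndependent ℂ ![x, A x, A (A x)] := by
  by_contra hcon
  push Not at hcon
  apply hD
  haveI : Nontrivial H := by
    by_contra hnt
    rw [not_nontrivial_iff_subsingleton] at hnt
    apply hD
    have : A = ((0 : ℝ) : ℂ) • 1 := by ext x; exact Subsingleton.elim _ _
    rw [this]; exact scalar_mem_D 0
  by_cases hsc : ∀ x, ∃ c : ℂ, A x = c • x
  · obtain ⟨c, hc⟩ := scalar_of_all_eigen hsc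
    rw [hc] at hA ⊢
    rw [← sa_scalar_real hA]
    exact scalar_mem_D _
  push Not at hsc
  obtain ⟨x0, hx0⟩ := hsc
  have hx00 : x0 ≠ 0 := by rintro rfl; exact hx0 0 (by simp)
  have hli := LinearIndependent.pair_iff.1 (indep_pair hx00 hx0)
  have dep : ∀ x, ∃ p q r : ℂ, (p ≠ 0 ∨ q ≠ 0 ∨ r ≠ 0) ∧ p • x + q • A x + r • A (A x) = 0 := by
    intro x
    have := hcon x
    rw [Fintype.not_linearIndependent_iff] at this
    obtain ⟨g, hg, i, hi⟩ := this
    rw [Fin.sum_univ_three] at hg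
    refine ⟨g 0, g 1, g 2, ?_, by simpa using hg⟩
    fin_cases i
    · exact Or.inl hi
    · exact Or.inr (Or.inl hi)
    · exact Or.inr (Or.inr hi)
  obtain ⟨α, β, hαβ⟩ : ∃ α β : ℂ, A (A x0) = α • A x0 + β • x0 := by
    obtain ⟨p, q, r, h0, h⟩ := dep x0
    have hr : r ≠ 0 := by
      rintro rfl
      obtain ⟨h1, h2⟩ := hli p q (by simpa using h)
      simp [h1, h2] at h0
    refine ⟨-(q / r), -(p / r), ?_⟩
    apply smul_right_injective H hr
    simp only [smul_add, smul_smul]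
    rw [← sub_eq_zero, ← h]
    match_scalars <;> field_simp
  -- on the orthogonal complement
  set M : Submodule ℂ H := Submodule.span ℂ {x0, A x0} with hM
  haveI : FiniteDimensional ℂ M := FiniteDimensional.span_of_finite ℂ (by simp)
  have hMm : ∀ m ∈ M, A (A m) = α • A m + β • m := by
    intro m hm
    obtain ⟨a, b, rfl⟩ := Submodule.mem_span_pair.1 hm
    simp only [map_add, map_smul, hαβ]
    module
  have hMperp : ∀ y, ⟪x0, y⟫_ℂ = 0 → ⟪A x0, y⟫_ℂ = 0 → A (A y) = α • A y + β • y := by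
    intro y h1 h2
    have g1 : ⟪x0, A y⟫_ℂ = 0 := by rw [← sa_inner hA, h2]
    have g2 : ⟪A x0, A y⟫_ℂ = 0 := by
      rw [← sa_inner hA, hαβ, inner_add_left, inner_smul_left, inner_smul_left, h1, h2]; simp
    have g3 : ⟪x0, A (A y)⟫_ℂ = 0 := by rw [← sa_inner hA, g2]
    have g4 : ⟪A x0, A (A y)⟫_ℂ = 0 := by
      rw [← sa_inner hA, hαβ, inner_add_left, inner_smul_left, inner_smul_left, g1, g2]; simp
    obtain ⟨p, q, r, h0, h⟩ := dep (x0 + y)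
    simp only [map_add, hαβ] at h
    set u := (p + r * β) • x0 + (q + r * α) • A x0 with hu
    set v := p • y + q • A y + r • A (A y) with hv
    have huv : u + v = 0 := by rw [hu, hv, ← h]; module
    have hort : ⟪u, v⟫_ℂ = 0 := by
      simp only [hu, hv, inner_add_left, inner_add_right, inner_smul_left, inner_smul_right, h1, h2,
        g1, g2, g3, g4]; simp
    have hu0 : u = 0 := by
      have : ⟪u, u + v⟫_ℂ = 0 := by rw [huv]; simp
      rw [inner_add_right, hort, add_zero] at this
      exact inner_self_eq_zero.1 this
    have hv0 : v = 0 := by rw [hu0, zero_add] at huv; exact huv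
    obtain ⟨k1, k2⟩ := hli _ _ hu0
    have hr : r ≠ 0 := by
      rintro rfl
      simp at k1 k2
      simp [k1, k2] at h0
    apply smul_right_injective H hr
    simp only [smul_add, smul_smul]
    rw [← sub_eq_zero, ← hv0, hv]
    match_scalars
    · ring
    · linear_combination -k2
    · linear_combination -k1
  have hall : ∀ y, A (A y) = α • A y + β • y := by
    intro y
    obtain ⟨m, hm, n, hn, rfl⟩ := M.exists_add_mem_mem_orthogonal y
    have h1 := hMm m hm
    have h2 := hMperp n (hn x0 (Submodule.subset_span (by simp)))
      (hn (A x0) (Submodule.subset_span (by simp)))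
    simp only [map_add, h1, h2]; module
  -- reality
  have hre : ∀ x y : H, (α - (starRingEnd ℂ) α) * ⟪x, A y⟫_ℂ + (β - (starRingEnd ℂ) β) * ⟪x, y⟫_ℂ = 0 := by
    intro x y
    have h1 : ⟪A (A x), y⟫_ℂ = ⟪x, A (A y)⟫_ℂ := by rw [sa_inner hA, sa_inner hA]
    rw [hall, hall, inner_add_left, inner_add_right, inner_smul_left, inner_smul_left,
      inner_smul_right, inner_smul_right, sa_inner hA] at h1
    linear_combination -h1
  have hre2 := hli (β - (starRingEnd ℂ) β) (α - (starRingEnd ℂ) α) (by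
    apply ext_inner_left ℂ
    intro w
    rw [inner_add_right, inner_smul_right, inner_smul_right, inner_zero_right]
    linear_combination hre w x0)
  have hαr : (α.re : ℂ) = α := Complex.conj_eq_iff_re.1 (sub_eq_zero.1 hre2.2).symm
  have hβr : (β.re : ℂ) = β := Complex.conj_eq_iff_re.1 (sub_eq_zero.1 hre2.1).symm
  apply mem_D_of_quadratic hA (α.re / 2) (β.re + α.re ^ 2 / 4)
  intro x
  simp only [sub_apply, smul_apply, one_apply_eq_self, map_sub, map_smul, hall]
  push_cast
  rw [hαr, hβr]
  match_scalars <;> ring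

lemma exists_gap {A : H →L[ℂ] H} (hA : IsSelfAdjoint A) (hD : A ∉ DSet H) :
    ∃ B, IsSelfAdjoint B ∧ Gap (cm A B) := by
  obtain ⟨x, hx⟩ := exists_indep hA hD
  exact ⟨_, sa_ro_sub _ _, gap_of_indep hA hx⟩

lemma mem_D_iff {A : H →L[ℂ] H} (hA : IsSelfAdjoint A) :
    A ∈ DSet H ↔ ∀ B, IsSelfAdjoint B → SymR (cm A B) := by
  constructor
  · intro h B _; exact symR_of_D h
  · intro h
    by_contra hD
    obtain ⟨B, hB, hg⟩ := exists_gap hA hD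
    exact hg.not_sym (h B hB)

end L2

section RankOne

variable {H : Type*} [NormedAddCommGroup H] [InnerProductSpace ℂ H] [CompleteSpace H]

def Dim3 (H : Type*) [NormedAddCommGroup H] [InnerProductSpace ℂ H] : Prop :=
  ∀ x y : H, ∃ z, ‖z‖ = 1 ∧ ⟪x, z⟫_ℂ = 0 ∧ ⟪y, z⟫_ℂ = 0

lemma exists_notMem_span (hdim : 3 ≤ Module.rank ℂ H) (x y : H) :
    Submodule.span ℂ {x, y} ≠ ⊤ := by
  intro h
  have h1 : Module.rank ℂ (Submodule.span ℂ ({x, y} : Set H)) ≤ 2 := by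
    refine (rank_span_le _).trans ?_
    refine (Cardinal.mk_insert_le).trans ?_
    rw [Cardinal.mk_singleton]
    norm_num
  rw [h, rank_top] at h1
  have := hdim.trans h1
  norm_cast at this

lemma norm_unit {x : H} (hx : x ≠ 0) : ‖((‖x‖⁻¹ : ℝ) : ℂ) • x‖ = 1 := by
  rw [norm_smul]; simp [norm_ne_zero_iff.2 hx]

lemma dim3_of_rank (hdim : 3 ≤ Module.rank ℂ H) : Dim3 H := by
  intro x y
  set M : Submodule ℂ H := Submodule.span ℂ {x, y} with hM
  haveI : FiniteDimensional ℂ M := FiniteDimensional.span_of_finite ℂ (by simp)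
  have h1 : Mᗮ ≠ ⊥ := by
    intro h
    exact exists_notMem_span hdim x y (by rwa [Submodule.orthogonal_eq_bot_iff] at h)
  obtain ⟨z, hz, hz0⟩ := Submodule.exists_mem_ne_zero_of_ne_bot h1
  refine ⟨((‖z‖⁻¹ : ℝ) : ℂ) • z, norm_unit hz0, ?_, ?_⟩
  · rw [inner_smul_right, hz x (Submodule.subset_span (by simp)), mul_zero]
  · rw [inner_smul_right, hz y (Submodule.subset_span (by simp)), mul_zero]

/-- (homogeneous) variance -/
noncomputable def vr (B : H →L[ℂ] H) (x : H) : ℝ := ‖x‖ ^ 2 * ‖B x‖ ^ 2 - (⟪x, B x⟫_ℂ).re ^ 2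

lemma nsq (y : H) : ((‖y‖ : ℂ)) ^ 2 = ⟪y, y⟫_ℂ := (inner_self_eq_norm_sq_to_K (𝕜 := ℂ) y).symm

lemma norm_sq_eq_of {a b : H} {r : ℝ} (h : ⟪a, a⟫_ℂ = r) : ‖a‖ ^ 2 = r := by
  apply Complex.ofReal_injective; push_cast; rw [nsq, h]

lemma pairBound {x v z : H} (hx : ‖x‖ = 1) (hz : ‖z‖ = 1) (hxv : ⟪x, v⟫_ℂ = 0) :
    ‖⟪v, z⟫_ℂ‖ ^ 2 ≤ ‖v‖ ^ 2 * (1 - ‖⟪x, z⟫_ℂ‖ ^ 2) := by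
  have hvx : ⟪v, x⟫_ℂ = 0 := by rw [← inner_conj_symm, hxv]; simp
  have h1 : ⟪v, z⟫_ℂ = ⟪v, z - ⟪x, z⟫_ℂ • x⟫_ℂ := by
    rw [inner_sub_right, inner_smul_right, hvx]; simp
  have h2 : ‖z - ⟪x, z⟫_ℂ • x‖ ^ 2 = 1 - ‖⟪x, z⟫_ℂ‖ ^ 2 := by
    apply Complex.ofReal_injective; push_cast
    rw [nsq, ← Complex.conj_mul']
    simp only [inner_sub_left, inner_sub_right, inner_smul_left, inner_smul_right,
      inner_self_one hx, inner_self_one hz, inner_conj_symm]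
    ring
  rw [h1, ← h2, ← mul_pow]
  gcongr
  exact norm_inner_le_norm _ _

lemma var_char {B : H →L[ℂ] H} (hB : IsSelfAdjoint B) {x : H} (hx : ‖x‖ = 1) (α δ : ℝ) :
    (∀ z ∈ numRange (cm ((α : ℂ) • ro x x + (δ : ℂ) • 1) B), ‖z‖ ^ 2 ≤ α ^ 2 * vr B x) ∧
    ∃ z ∈ numRange (cm ((α : ℂ) • ro x x + (δ : ℂ) • 1) B), ‖z‖ ^ 2 = α ^ 2 * vr B x := by
  set b : ℝ := (⟪x, B x⟫_ℂ).re with hb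
  have hb' : ⟪x, B x⟫_ℂ = (b : ℂ) := (sa_real hB x).symm
  set v : H := B x - (b : ℂ) • x with hv
  have hxv : ⟪x, v⟫_ℂ = 0 := by
    rw [hv, inner_sub_right, inner_smul_right, inner_self_one hx, hb']; simp
  have hvx : ⟪v, x⟫_ℂ = 0 := by rw [← inner_conj_symm, hxv]; simp
  have hBx : B x = v + (b : ℂ) • x := by rw [hv]; abel
  have hvn : vr B x = ‖v‖ ^ 2 := by
    have : ‖B x‖ ^ 2 = ‖v‖ ^ 2 + b ^ 2 := by
      apply Complex.ofReal_injective; push_cast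
      rw [nsq, nsq, hBx]
      simp only [inner_add_left, inner_add_right, inner_smul_left, inner_smul_right, hxv, hvx,
        inner_self_one hx, Complex.conj_ofReal]
      ring
    rw [vr, hx, this, ← hb]; ring
  have hform : ∀ z, ⟪z, cm ((α : ℂ) • ro x x + (δ : ℂ) • 1) B z⟫_ℂ
      = α * (⟪v, z⟫_ℂ * ⟪z, x⟫_ℂ - ⟪x, z⟫_ℂ * ⟪z, v⟫_ℂ) := by
    intro z
    have h1 : ⟪x, B z⟫_ℂ = ⟪v, z⟫_ℂ + b * ⟪x, z⟫_ℂ := by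
      rw [← sa_inner hB, hBx, inner_add_left, inner_smul_left]; simp
    simp only [cm, sub_apply, mul_apply_eq_comp, add_apply, smul_apply, one_apply_eq_self, ro_apply,
      map_add, map_smul, h1, hBx, inner_sub_right, inner_add_right, inner_smul_right]
    ring
  rw [hvn]
  constructor
  · rintro _ ⟨z, hz, rfl⟩
    rw [hform, norm_mul, mul_pow, Complex.norm_real, Real.norm_eq_abs, sq_abs]
    refine mul_le_mul_of_nonneg_left ?_ (sq_nonneg α)
    have h1 : ‖⟪v, z⟫_ℂ * ⟪z, x⟫_ℂ - ⟪x, z⟫_ℂ * ⟪z, v⟫_ℂ‖ ≤ 2 * (‖⟪v, z⟫_ℂ‖ * ‖⟪x, z⟫_ℂ‖) := by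
      refine (norm_sub_le _ _).trans ?_
      rw [norm_mul, norm_mul, norm_inner_symm z x, norm_inner_symm z v]; linarith
    have h2 := pairBound hx hz hxv
    set p := ‖⟪x, z⟫_ℂ‖
    set q := ‖⟪v, z⟫_ℂ‖
    calc _ ≤ (2 * (q * p)) ^ 2 := by gcongr
      _ = 4 * p ^ 2 * q ^ 2 := by ring
      _ ≤ 4 * p ^ 2 * (‖v‖ ^ 2 * (1 - p ^ 2)) := by gcongr
      _ ≤ ‖v‖ ^ 2 := by nlinarith [mul_nonneg (sq_nonneg ‖v‖) (sq_nonneg (2 * p ^ 2 - 1))]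
  · by_cases hv0 : v = 0
    · exact ⟨_, ⟨x, hx, rfl⟩, by rw [hform, hv0]; simp⟩
    have hvn0 : ‖v‖ ≠ 0 := norm_ne_zero_iff.2 hv0
    set s : ℝ := (Real.sqrt 2)⁻¹ with hs
    have hs2 : s * s = 1 / 2 := by
      rw [hs, ← mul_inv, Real.mul_self_sqrt (by norm_num)]; norm_num
    have hs2' : (s : ℂ) * s = 1 / 2 := by rw [← Complex.ofReal_mul, hs2]; norm_num
    have hvC : (‖v‖ : ℂ) ≠ 0 := by exact_mod_cast hvn0
    set z : H := (s : ℂ) • (x + (Complex.I * ((‖v‖⁻¹ : ℝ) : ℂ)) • v) with hz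
    refine ⟨_, ⟨z, ?_, rfl⟩, ?_⟩
    · have : ‖z‖ ^ 2 = 1 := by
        apply Complex.ofReal_injective; push_cast
        rw [nsq, hz]
        simp only [inner_add_left, inner_add_right, inner_smul_left, inner_smul_right, hxv, hvx,
          inner_self_one hx, Complex.conj_ofReal, map_mul, Complex.conj_I]
        rw [← nsq v]; push_cast
        field_simp
        linear_combination (2*(‖v‖:ℂ)) * hs2' - ((s:ℂ)^2*(‖v‖:ℂ)) * Complex.I_sq
      nlinarith [norm_nonneg z]
    · have hf : ⟪v, z⟫_ℂ * ⟪z, x⟫_ℂ - ⟪x, z⟫_ℂ * ⟪z, v⟫_ℂ = Complex.I * ‖v‖ := by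
        rw [hz]
        simp only [inner_add_left, inner_add_right, inner_smul_left, inner_smul_right, hxv, hvx,
          inner_self_one hx, Complex.conj_ofReal, map_mul, Complex.conj_I]
        rw [← nsq v]; push_cast
        field_simp
        linear_combination (2*Complex.I*(‖v‖:ℂ)^2) * hs2'
      rw [hform, hf]
      simp [mul_pow]

lemma var_eq {B B' : H →L[ℂ] H} (hB : IsSelfAdjoint B) (hB' : IsSelfAdjoint B') {x y : H}
    (hx : ‖x‖ = 1) (hy : ‖y‖ = 1) (α δ α' δ' : ℝ)
    (h : numRange (cm ((α : ℂ) • ro x x + (δ : ℂ) • 1) B) =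
      numRange (cm ((α' : ℂ) • ro y y + (δ' : ℂ) • 1) B')) :
    α ^ 2 * vr B x = α' ^ 2 * vr B' y := by
  obtain ⟨h1, z, hz, hz'⟩ := var_char hB hx α δ
  obtain ⟨h2, w, hw, hw'⟩ := var_char hB' hy α' δ'
  apply le_antisymm
  · rw [← hz']; exact h2 _ (h ▸ hz)
  · rw [← hw']; exact h1 _ (h ▸ hw)

/-- rank-one class -/
def IsR1 (A : H →L[ℂ] H) : Prop :=
  ∃ (x : H) (α δ : ℝ), ‖x‖ = 1 ∧ α ≠ 0 ∧ A = (α : ℂ) • ro x x + (δ : ℂ) • 1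

lemma comm_aff {T p : H →L[ℂ] H} {α δ : ℝ} (hα : α ≠ 0) :
    Commute T ((α : ℂ) • p + (δ : ℂ) • 1) ↔ Commute T p := by
  have hα' : (α : ℂ) ≠ 0 := by exact_mod_cast hα
  constructor
  · intro h
    have h1 : Commute T (((α : ℂ)⁻¹) • (((α : ℂ) • p + (δ : ℂ) • 1) - (δ : ℂ) • 1)) :=
      (h.sub_right ((Commute.one_right T).smul_right _)).smul_right _
    rwa [add_sub_cancel_right, smul_smul, inv_mul_cancel₀ hα', one_smul] at h1
  · intro h
    exact (h.smul_right _).add_right ((Commute.one_right T).smul_right _)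

lemma comm_apply {T p : H →L[ℂ] H} (h : Commute T p) (x : H) : T (p x) = p (T x) :=
  congrArg (fun f : H →L[ℂ] H => f x) h.eq

lemma comm_of_apply {T p : H →L[ℂ] H} (h : ∀ x, T (p x) = p (T x)) : Commute T p := by
  ext x; exact h x

def Prk (A : H →L[ℂ] H) : Prop :=
  A ∈ DSet H ∧ (∃ B, IsSelfAdjoint B ∧ ¬ Commute B A) ∧
  ∀ Q E : H →L[ℂ] H, IsSelfAdjoint Q → IsSelfAdjoint E → Q ∈ DSet H → E ∈ DSet H → Commute Q A →
    (∀ T, IsSelfAdjoint T → Commute T A → Commute T Q → Commute T E) →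
    (∀ T, IsSelfAdjoint T → Commute T A → Commute T E) ∨
    (∀ T, IsSelfAdjoint T → Commute T A → Commute T E → Commute T Q)

/-- D element commuting with a rank-one projection, normalised. -/
lemma D_normal {x : H} (hx : ‖x‖ = 1) {Q : H →L[ℂ] H} (hQ : Q ∈ DSet H)
    (hc : Commute (ro x x) Q) : (∀ T, Commute T Q) ∨
    ∃ (q : H →L[ℂ] H) (β γ : ℝ), β ≠ 0 ∧ IsSelfAdjoint q ∧ (∀ y, q (q y) = q y) ∧ q x = 0 ∧
      Q = (β : ℂ) • q + (γ : ℂ) • 1 := by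
  obtain ⟨q, β, γ, hq, hqq, rfl⟩ := hQ
  by_cases hβ : β = 0
  · left; intro T; subst hβ
    simpa using (Commute.one_right T).smul_right _
  right
  have hqq' : ∀ x, q (q x) = q x := fun x => congrArg (fun f : H →L[ℂ] H => f x) hqq
  rw [comm_aff hβ] at hc
  have h1 := comm_apply hc x
  simp only [ro_apply, inner_self_one hx, one_smul] at h1
  set κ := ⟪x, q x⟫_ℂ
  have h2 : κ = 0 ∨ κ = 1 := by
    have := hqq' x
    rw [← h1, map_smul, ← h1, smul_smul] at this
    have hx0 : x ≠ 0 := by rintro rfl; simp at hx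
    have := smul_left_injective ℂ hx0 this
    have : κ * (κ - 1) = 0 := by linear_combination this
    rcases mul_eq_zero.1 this with h | h
    · exact Or.inl h
    · exact Or.inr (by linear_combination h)
  rcases h2 with h2 | h2
  · exact ⟨q, β, γ, hβ, hq, hqq', by rw [← h1, h2, zero_smul], rfl⟩
  · refine ⟨1 - q, -β, γ + β, by simpa using hβ, (IsSelfAdjoint.one _).sub hq, ?_, ?_, ?_⟩
    · intro y; simp [hqq']
    · simp [← h1, h2]
    · ext y
      simp only [smul_apply, add_apply, sub_apply, one_apply_eq_self]
      push_cast; module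

lemma dichot {e : H →L[ℂ] H} (hee : ∀ y, e (e y) = e y) (S : Submodule ℂ H)
    (h : ∀ y ∈ S, ‖y‖ = 1 → Commute (ro y y) e) : (∀ y ∈ S, e y = 0) ∨ (∀ y ∈ S, e y = y) := by
  have h1 : ∀ y ∈ S, e y = 0 ∨ e y = y := by
    intro y hy
    by_cases hy0 : y = 0
    · left; rw [hy0, map_zero]
    have hc := comm_apply (h _ (S.smul_mem ((‖y‖⁻¹ : ℝ) : ℂ) hy) (norm_unit hy0)) y
    set n : ℂ := ((‖y‖⁻¹ : ℝ) : ℂ) with hn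
    have hn0 : n ≠ 0 := by simp [hn, hy0]
    simp only [ro_apply, inner_smul_left, map_smul, smul_smul] at hc
    have hyy : ⟪y, y⟫_ℂ ≠ 0 := fun h => hy0 (inner_self_eq_zero.1 h)
    have hcn : (starRingEnd ℂ) n ≠ 0 := by simpa using hn0
    set c := (starRingEnd ℂ) n * ⟪y, y⟫_ℂ * n with hcdef
    have hc0 : c ≠ 0 := by simp [hcdef, hn0, hy0]
    set d := (starRingEnd ℂ) n * ⟪y, e y⟫_ℂ * n
    have h3 : e y = (c⁻¹ * d) • y := by
      rw [mul_smul, hc, smul_smul, inv_mul_cancel₀ hc0, one_smul]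
    set k := c⁻¹ * d
    have h4 := hee y
    rw [h3, map_smul, h3, smul_smul] at h4
    have := smul_left_injective ℂ hy0 h4
    have : k * (k - 1) = 0 := by linear_combination this
    rcases mul_eq_zero.1 this with h | h
    · left; rw [h3, h, zero_smul]
    · right; rw [h3, sub_eq_zero.1 h, one_smul]
  by_contra hcon
  push Not at hcon
  obtain ⟨⟨y, hy, hy1⟩, z, hz, hz1⟩ := hcon
  have hy2 := (h1 y hy).resolve_left hy1
  have hz2 := (h1 z hz).resolve_right hz1
  rcases h1 _ (S.add_mem hy hz) with h | h
  · rw [map_add, hy2, hz2, add_zero] at h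
    exact hy1 (by rw [h, map_zero])
  · rw [map_add, hy2, hz2, add_zero] at h
    have : z = 0 := by simpa using h.symm
    exact hz1 (by rw [this, map_zero])

lemma inner_zero_symm {x y : H} (h : ⟪x, y⟫_ℂ = 0) : ⟪y, x⟫_ℂ = 0 := by
  rw [← inner_conj_symm, h]; simp

lemma prk_of_R1 (hd : Dim3 H) {A : H →L[ℂ] H} (hA : IsR1 A) : Prk A := by
  obtain ⟨x, α, δ, hx, hα, rfl⟩ := hA
  refine ⟨⟨ro x x, α, δ, sa_ro x, ?_, rfl⟩, ?_, ?_⟩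
  · ext z; simp [inner_smul_right, hx]
  · obtain ⟨y, hy, hxy, -⟩ := hd x x
    refine ⟨ro x y + ro y x, sa_ro_add x y, ?_⟩
    rw [comm_aff hα]
    intro h
    have := comm_apply h x
    simp [hx, inner_zero_symm hxy, hxy] at this
    rw [this] at hy; simp at hy
  · intro Q E hQ hE hQD hED hQA hDC
    simp only [comm_aff hα] at hQA hDC ⊢
    have hcE : Commute (ro x x) E := hDC _ (sa_ro x) (Commute.refl _) hQA.symm
    rcases D_normal hx hQD hQA.symm with h | ⟨q, β, γ, hβ, hq, hqq, hqx, rfl⟩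
    · right; intro T _ _ _; exact h T
    rcases D_normal hx hED hcE with h | ⟨e, η, ζ, hη, he, hee, hex, rfl⟩
    · left; intro T _ _; exact h T
    simp only [comm_aff hβ, comm_aff hη] at hDC ⊢
    let S1 : Submodule ℂ H := LinearMap.ker ((1 - q : H →L[ℂ] H) : H →ₗ[ℂ] H)
    let S2 : Submodule ℂ H := LinearMap.ker ((q + ro x x : H →L[ℂ] H) : H →ₗ[ℂ] H)
    have hS1 : ∀ y, y ∈ S1 ↔ q y = y := by
      intro y
      simp only [S1, LinearMap.mem_ker, ContinuousLinearMap.coe_coe, sub_apply, one_apply_eq_self,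
        sub_eq_zero]
      exact eq_comm
    have hqxi : ∀ y, ⟪x, q y⟫_ℂ = 0 := by intro y; rw [← sa_inner hq, hqx]; simp
    have hS2 : ∀ y, y ∈ S2 ↔ q y = 0 ∧ ⟪x, y⟫_ℂ = 0 := by
      intro y
      simp only [S2, LinearMap.mem_ker, ContinuousLinearMap.coe_coe, add_apply, ro_apply]
      constructor
      · intro h
        have h1 : ⟪x, y⟫_ℂ = 0 := by
          have := congrArg (fun v => ⟪x, v⟫_ℂ) h
          simpa [inner_add_right, hqxi, inner_smul_right, hx] using this
        rw [h1] at h; exact ⟨by simpa using h, h1⟩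
      · rintro ⟨h1, h2⟩; simp [h1, h2]
    have hcom : ∀ y, ⟪x, y⟫_ℂ = 0 → (q y = y ∨ q y = 0) → Commute (ro y y) e := by
      intro y hxy hqy
      apply hDC _ (sa_ro y)
      · apply comm_of_apply; intro z
        simp [inner_smul_right, inner_zero_symm hxy, hxy, inner_smul_left]
      · apply comm_of_apply; intro z
        simp only [ro_apply, map_smul]
        rw [← sa_inner hq]
        rcases hqy with h | h <;> simp [h]
    have d1 := dichot hee S1 (by
      intro y hy _
      rw [hS1] at hy
      exact hcom y (by rw [← hy, hqxi]) (Or.inl hy))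
    have d2 := dichot hee S2 (by
      intro y hy _
      rw [hS2] at hy
      exact hcom y hy.2 (Or.inr hy.1))
    have hdec : ∀ z, z = ⟪x, z⟫_ℂ • x + q z + (z - ⟪x, z⟫_ℂ • x - q z) := by intro z; abel
    have m1 : ∀ z, q z ∈ S1 := fun z => (hS1 _).2 (hqq z)
    have m2 : ∀ z, z - ⟪x, z⟫_ℂ • x - q z ∈ S2 := by
      intro z
      rw [hS2]
      constructor
      · simp [hqq, hqx]
      · simp [inner_sub_right, hqxi, inner_smul_right, hx]
    have hez : ∀ z, e z = e (q z) + e (z - ⟪x, z⟫_ℂ • x - q z) := by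
      intro z
      conv_lhs => rw [hdec z]
      rw [map_add, map_add, map_smul, hex, smul_zero, zero_add]
    rcases d1 with d1 | d1 <;> rcases d2 with d2 | d2
    · left; intro T _ _
      have : e = 0 := by ext z; rw [hez, d1 _ (m1 z), d2 _ (m2 z)]; simp
      rw [this]; exact Commute.zero_right T
    · right; intro T _ h1 h2
      have : q = 1 - ro x x - e := by
        ext z
        rw [sub_apply, hez z, d1 _ (m1 z), d2 _ (m2 z)]; simp
      rw [this]
      exact ((Commute.one_right T).sub_right h1).sub_right h2
    · right; intro T _ h1 h2
      have : q = e := by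
        ext z; rw [hez, d1 _ (m1 z), d2 _ (m2 z)]; simp
      rw [this]; exact h2
    · left; intro T _ h1
      have : e = 1 - ro x x := by
        ext z; rw [hez, d1 _ (m1 z), d2 _ (m2 z)]; simp
      rw [this]
      exact (Commute.one_right T).sub_right h1

/-- Either a nonzero projection is rank one, or its range has two orthonormal vectors. -/
lemma proj_two {p : H →L[ℂ] H} (hp : IsSelfAdjoint p) (hpp : ∀ y, p (p y) = p y) (h0 : p ≠ 0) :
    (∃ a, ‖a‖ = 1 ∧ p = ro a a) ∨ ∃ a b, ‖a‖ = 1 ∧ ‖b‖ = 1 ∧ ⟪a, b⟫_ℂ = 0 ∧ p a = a ∧ p b = b := by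
  obtain ⟨z, hz⟩ : ∃ z, p z ≠ 0 := by
    by_contra h; push Not at h; exact h0 (by ext z; simp [h z])
  set a := ((‖p z‖⁻¹ : ℝ) : ℂ) • p z with ha
  have han : ‖a‖ = 1 := norm_unit hz
  have hpa : p a = a := by rw [ha, map_smul, hpp]
  by_cases h : ∀ y, p y = ⟪a, y⟫_ℂ • a
  · left; exact ⟨a, han, by ext y; simp [h y]⟩
  · right
    push Not at h
    obtain ⟨y, hy⟩ := h
    set w := p y - ⟪a, y⟫_ℂ • a with hw
    have hw0 : w ≠ 0 := sub_ne_zero.2 hy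
    have haw : ⟪a, w⟫_ℂ = 0 := by
      rw [hw, inner_sub_right, ← sa_inner hp, hpa, inner_smul_right, inner_self_one han]; simp
    refine ⟨a, ((‖w‖⁻¹ : ℝ) : ℂ) • w, han, norm_unit hw0, ?_, hpa, ?_⟩
    · rw [inner_smul_right, haw, mul_zero]
    · rw [map_smul, hw, map_sub, hpp, map_smul, hpa]

lemma R1_of_prk {A : H →L[ℂ] H} (hA : Prk A) : IsR1 A := by
  obtain ⟨⟨p, α, δ, hp, hpp, rfl⟩, ⟨B, hB, hBA⟩, hP⟩ := hA
  have hpp' : ∀ x, p (p x) = p x := fun x => congrArg (fun f : H →L[ℂ] H => f x) hpp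
  have hα : α ≠ 0 := by
    rintro rfl
    apply hBA
    simpa using (Commute.one_right B).smul_right _
  simp only [comm_aff hα] at hBA hP
  have hp0 : p ≠ 0 := by rintro rfl; exact hBA (Commute.zero_right _)
  have hp1 : (1 - p) ≠ 0 := by
    intro h; rw [← sub_eq_zero.1 h] at hBA; exact hBA (Commute.one_right _)
  rcases proj_two hp hpp' hp0 with ⟨a, ha, rfl⟩ | ⟨a, a', ha, ha', haa, hpa, hpa'⟩
  · exact ⟨a, α, δ, ha, hα, rfl⟩
  rcases proj_two ((IsSelfAdjoint.one _).sub hp) (by intro y; simp [hpp']) hp1 with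
    ⟨b, hb, hpb⟩ | ⟨b, b', hb, hb', hbb, hpb, hpb'⟩
  · refine ⟨b, -α, δ + α, hb, by simpa using hα, ?_⟩
    rw [← hpb]; push_cast; module
  exfalso
  have hpb : p b = 0 := by simpa using hpb
  have hpb' : p b' = 0 := by simpa using hpb'
  have hort : ∀ u v, p u = u → p v = 0 → ⟪u, v⟫_ℂ = 0 := by
    intro u v hu hv; rw [← hu, sa_inner hp, hv, inner_zero_right]
  have hab := hort a b hpa hpb
  have hab' := hort a b' hpa hpb'
  have hba := inner_zero_symm hab
  have hb'a := inner_zero_symm hab'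
  have hbb2 := inner_zero_symm hbb
  have haa2 := inner_zero_symm haa
  have hproj : ∀ u v, (p u = u ∨ p u = 0) → (p v = v ∧ p u = u ∨ p v = 0 ∧ p u = 0) →
      Commute (ro u v) p := by
    intro u v hu hv
    apply comm_of_apply; intro z
    simp only [ro_apply, map_smul]
    rw [← sa_inner hp]
    rcases hv with ⟨h1, h2⟩ | ⟨h1, h2⟩ <;> simp [h1, h2]
  have hca : Commute (ro a a) p := hproj _ _ (Or.inl hpa) (Or.inl ⟨hpa, hpa⟩)
  have hcb : Commute (ro b b) p := hproj _ _ (Or.inr hpb) (Or.inr ⟨hpb, hpb⟩)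
  have key := hP (ro a a + ro b b) (ro a a) ((sa_ro a).add (sa_ro b)) (sa_ro a)
    ⟨ro a a + ro b b, 1, 0, (sa_ro a).add (sa_ro b), by
      ext z; simp [inner_smul_right, inner_add_right, ha, hb, hab, hba], by simp⟩
    ⟨ro a a, 1, 0, sa_ro a, by ext z; simp [inner_smul_right, ha], by simp⟩
    (hca.add_left hcb) (by
      intro T _ h1 h2
      have : ro a a = p * (ro a a + ro b b) := by
        ext z; simp [hpa, hpb]
      rw [this]; exact h1.mul_right h2)
  rcases key with key | key
  · have := comm_apply (key (ro a a' + ro a' a) (sa_ro_add _ _)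
      ((hproj _ _ (Or.inl hpa) (Or.inl ⟨hpa', hpa⟩)).add_left
        (hproj _ _ (Or.inl hpa') (Or.inl ⟨hpa, hpa'⟩)))) a
    simp [ha, haa, haa2, inner_add_right] at this
    rw [this] at ha'; simp at ha'
  · have := comm_apply (key (ro b b' + ro b' b) (sa_ro_add _ _)
      ((hproj _ _ (Or.inr hpb) (Or.inr ⟨hpb', hpb⟩)).add_left
        (hproj _ _ (Or.inr hpb') (Or.inr ⟨hpb, hpb'⟩))) (by
        apply comm_of_apply; intro z
        simp [inner_add_right, inner_smul_right, hab, hab', hba, hb'a])) b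
    simp [hb, hbb, hbb2, hab', hab, inner_add_right] at this
    rw [this] at hb'; simp at hb'

lemma R1_iff_prk (hd : Dim3 H) {A : H →L[ℂ] H} : IsR1 A ↔ Prk A :=
  ⟨prk_of_R1 hd, R1_of_prk⟩

end RankOne

section Transfer

variable {H : Type*} [NormedAddCommGroup H] [InnerProductSpace ℂ H] [CompleteSpace H]

/-- the preserver hypothesis, for a map on all operators (only self-adjoint ones matter) -/
structure Pres (F : (H →L[ℂ] H) → (H →L[ℂ] H)) : Prop where
  sa : ∀ A, IsSelfAdjoint A → IsSelfAdjoint (F A)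
  surj : ∀ B, IsSelfAdjoint B → ∃ A, IsSelfAdjoint A ∧ F A = B
  W : ∀ A B, IsSelfAdjoint A → IsSelfAdjoint B → numRange (cm A B) = numRange (cm (F A) (F B))

lemma cm_zero_iff {A B : H →L[ℂ] H} : cm A B = 0 ↔ Commute A B := by
  rw [cm, sub_eq_zero]; rfl

lemma Dim3.nontrivial (hd : Dim3 H) : Nontrivial H := by
  obtain ⟨z, hz, -⟩ := hd 0 0
  exact ⟨z, 0, by rintro rfl; simp at hz⟩

variable {F : (H →L[ℂ] H) → (H →L[ℂ] H)}

lemma Pres.comm (hF : Pres F) (hd : Dim3 H) {A B : H →L[ℂ] H} (hA : IsSelfAdjoint A)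
    (hB : IsSelfAdjoint B) : Commute A B ↔ Commute (F A) (F B) := by
  haveI := hd.nontrivial
  rw [← cm_zero_iff, ← cm_zero_iff, ← numRange_zero_iff, ← numRange_zero_iff, hF.W A B hA hB]

lemma symR_congr {S T : H →L[ℂ] H} (h : numRange S = numRange T) : SymR S ↔ SymR T := by
  unfold SymR; rw [h]

lemma Pres.memD (hF : Pres F) (hd : Dim3 H) {A : H →L[ℂ] H} (hA : IsSelfAdjoint A) :
    A ∈ DSet H ↔ F A ∈ DSet H := by
  haveI := hd.nontrivial
  rw [mem_D_iff hA, mem_D_iff (hF.sa A hA)]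
  constructor
  · intro h B hB
    obtain ⟨C, hC, rfl⟩ := hF.surj B hB
    exact (symR_congr (hF.W A C hA hC)).1 (h C hC)
  · intro h B hB
    exact (symR_congr (hF.W A B hA hB)).2 (h _ (hF.sa B hB))

lemma Pres.prk (hF : Pres F) (hd : Dim3 H) {A : H →L[ℂ] H} (hA : IsSelfAdjoint A) :
    Prk A ↔ Prk (F A) := by
  have hc : ∀ {B C : H →L[ℂ] H}, IsSelfAdjoint B → IsSelfAdjoint C →
    (Commute B C ↔ Commute (F B) (F C)) := fun h1 h2 => hF.comm hd h1 h2
  constructor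
  · rintro ⟨h1, ⟨B, hB, hBA⟩, h3⟩
    refine ⟨(hF.memD hd hA).1 h1, ⟨F B, hF.sa B hB, fun h => hBA ((hc hB hA).2 h)⟩, ?_⟩
    intro Q E hQ hE hQD hED hQA hT
    obtain ⟨Q, hQ', rfl⟩ := hF.surj Q hQ
    obtain ⟨E, hE', rfl⟩ := hF.surj E hE
    rcases h3 Q E hQ' hE' ((hF.memD hd hQ').2 hQD) ((hF.memD hd hE').2 hED) ((hc hQ' hA).2 hQA)
      (fun T hTs a b => (hc hTs hE').2 (hT _ (hF.sa T hTs) ((hc hTs hA).1 a) ((hc hTs hQ').1 b)))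
      with h | h
    · left; intro T hTs a
      obtain ⟨T, hT', rfl⟩ := hF.surj T hTs
      exact (hc hT' hE').1 (h T hT' ((hc hT' hA).2 a))
    · right; intro T hTs a b
      obtain ⟨T, hT', rfl⟩ := hF.surj T hTs
      exact (hc hT' hQ').1 (h T hT' ((hc hT' hA).2 a) ((hc hT' hE').2 b))
  · rintro ⟨h1, ⟨B, hB, hBA⟩, h3⟩
    obtain ⟨B, hB', rfl⟩ := hF.surj B hB
    refine ⟨(hF.memD hd hA).2 h1, ⟨B, hB', fun h => hBA ((hc hB' hA).1 h)⟩, ?_⟩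
    intro Q E hQ hE hQD hED hQA hT
    rcases h3 (F Q) (F E) (hF.sa Q hQ) (hF.sa E hE) ((hF.memD hd hQ).1 hQD)
      ((hF.memD hd hE).1 hED) ((hc hQ hA).1 hQA) (by
        intro T hTs a b
        obtain ⟨T, hT', rfl⟩ := hF.surj T hTs
        exact (hc hT' hE).1 (hT T hT' ((hc hT' hA).2 a) ((hc hT' hQ).2 b))) with h | h
    · left; intro T hTs a
      exact (hc hTs hE).2 (h _ (hF.sa T hTs) ((hc hTs hA).1 a))
    · right; intro T hTs a b
      exact (hc hTs hQ).2 (h _ (hF.sa T hTs) ((hc hTs hA).1 a) ((hc hTs hE).1 b))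

/-! ### rank one facts -/

lemma ro_eq_imp {x y : H} (hx : ‖x‖ = 1) (hy : ‖y‖ = 1) (h : ro x x = ro y y) :
    ‖⟪x, y⟫_ℂ‖ = 1 ∧ x = ⟪y, x⟫_ℂ • y := by
  have h1 : x = ⟪y, x⟫_ℂ • y := by
    have := congrArg (fun f : H →L[ℂ] H => f x) h
    simpa [hx] using this
  refine ⟨?_, h1⟩
  have := congrArg norm h1
  rw [norm_smul, hx, hy, mul_one] at this
  rw [norm_inner_symm]; exact this.symm

lemma ro_comm_iff {x y : H} (hx : ‖x‖ = 1) (hy : ‖y‖ = 1) :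
    Commute (ro x x) (ro y y) ↔ ⟪x, y⟫_ℂ = 0 ∨ ro x x = ro y y := by
  constructor
  · intro h
    by_cases h0 : ⟪x, y⟫_ℂ = 0
    · exact Or.inl h0
    right
    have h1 := comm_apply h y
    simp [hy, inner_smul_right] at h1
    -- ⟪x,y⟫ x = ⟪y, ..⟫ y
    set c := ⟪x, y⟫_ℂ
    have hxy : x = (c⁻¹ * (c * ⟪y, x⟫_ℂ)) • y := by
      rw [mul_smul, mul_smul, ← h1, smul_smul, inv_mul_cancel₀ h0, one_smul]
    set k := c⁻¹ * (c * ⟪y, x⟫_ℂ)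
    have hk : ‖k‖ = 1 := by
      have := congrArg norm hxy
      rw [norm_smul, hx, hy, mul_one] at this
      exact this.symm
    have hk2 : (starRingEnd ℂ) k * k = 1 := by rw [Complex.conj_mul', hk]; simp
    ext z
    rw [hxy]
    simp only [ro_apply, inner_smul_left, smul_smul]
    congr 1
    linear_combination ⟪y, z⟫_ℂ * hk2
  · rintro (h | h)
    · apply comm_of_apply; intro z
      simp [inner_smul_right, h, inner_zero_symm h]
    · rw [h]

lemma par_iff (hd : Dim3 H) {x y : H} (hx : ‖x‖ = 1) (hy : ‖y‖ = 1) :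
    (∀ T, IsSelfAdjoint T → Commute T (ro x x) → Commute T (ro y y)) ↔ ro x x = ro y y := by
  constructor
  · intro h
    rcases (ro_comm_iff hx hy).1 (h _ (sa_ro x) (Commute.refl _)) with h1 | h1
    · exfalso
      obtain ⟨z, hz, hxz, hyz⟩ := hd x y
      have := comm_apply (h (ro y z + ro z y) (sa_ro_add _ _) (by
        apply comm_of_apply; intro w
        simp [inner_smul_right, inner_add_right, h1, inner_zero_symm h1, hxz,
          inner_zero_symm hxz])) y
      simp [hy, hyz, inner_zero_symm hyz, inner_add_right] at this
      rw [this] at hz; simp at hz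
    · exact h1
  · intro h T _ h2; rwa [← h]

lemma inner_ne_of_ro_eq {x y : H} (hx : ‖x‖ = 1) (hy : ‖y‖ = 1) (h : ro x x = ro y y) :
    ⟪x, y⟫_ℂ ≠ 0 := by
  intro h0
  have := (ro_eq_imp hx hy h).1
  rw [h0] at this; simp at this

lemma vr_aff {x y : H} (hx : ‖x‖ = 1) (hy : ‖y‖ = 1) (c d : ℝ) :
    vr ((c : ℂ) • ro y y + (d : ℂ) • 1) x = c ^ 2 * (‖⟪x, y⟫_ℂ‖ ^ 2 - (‖⟪x, y⟫_ℂ‖ ^ 2) ^ 2) := by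
  set q : ℝ := ‖⟪x, y⟫_ℂ‖ ^ 2 with hq
  have hq' : ⟪x, y⟫_ℂ * ⟪y, x⟫_ℂ = q := by
    rw [hq, ← inner_conj_symm y x, Complex.mul_conj']; push_cast; rfl
  have h1 : ⟪x, ((c : ℂ) • ro y y + (d : ℂ) • 1) x⟫_ℂ = ((c * q + d : ℝ) : ℂ) := by
    simp only [add_apply, smul_apply, ro_apply, one_apply_eq_self, inner_add_right,
      inner_smul_right, inner_self_one hx]
    push_cast
    linear_combination (c : ℂ) * hq'
  have h2 : ‖((c : ℂ) • ro y y + (d : ℂ) • 1) x‖ ^ 2 = c ^ 2 * q + 2 * c * d * q + d ^ 2 := by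
    apply Complex.ofReal_injective
    rw [Complex.ofReal_pow, nsq]
    simp only [add_apply, smul_apply, ro_apply, one_apply_eq_self, inner_add_right, inner_add_left,
      inner_smul_right, inner_smul_left, inner_self_one hx, inner_self_one hy, Complex.conj_ofReal,
      inner_conj_symm]
    push_cast
    linear_combination ((c : ℂ) ^ 2 + 2 * c * d) * hq'
  rw [vr, h1, h2, hx, Complex.ofReal_re]; ring

end Transfer

section GMap

variable {H : Type*} [NormedAddCommGroup H] [InnerProductSpace ℂ H] [CompleteSpace H]

/-- intermediate package -/
structure GM (g : H → H) (K : H → ℝ) : Prop where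
  unit : ∀ x, ‖x‖ = 1 → ‖g x‖ = 1
  pos : ∀ x, ‖x‖ = 1 → 0 < K x
  orth : ∀ x y, ‖x‖ = 1 → ‖y‖ = 1 → (⟪x, y⟫_ℂ = 0 ↔ ⟪g x, g y⟫_ℂ = 0)
  par : ∀ x y, ‖x‖ = 1 → ‖y‖ = 1 → (ro x x = ro y y ↔ ro (g x) (g x) = ro (g y) (g y))
  surj : ∀ u, ‖u‖ = 1 → ∃ x, ‖x‖ = 1 ∧ ro u u = ro (g x) (g x)
  var : ∀ x y, ‖x‖ = 1 → ‖y‖ = 1 → ‖⟪x, y⟫_ℂ‖ ^ 2 - (‖⟪x, y⟫_ℂ‖ ^ 2) ^ 2 =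
    K x * K y * (‖⟪g x, g y⟫_ℂ‖ ^ 2 - (‖⟪g x, g y⟫_ℂ‖ ^ 2) ^ 2)

variable {F : (H →L[ℂ] H) → (H →L[ℂ] H)}

lemma ro_aff (x : H) : ro x x = ((1 : ℝ) : ℂ) • ro x x + ((0 : ℝ) : ℂ) • (1 : H →L[ℂ] H) := by simp

lemma Pres.exists_gm (hF : Pres F) (hd : Dim3 H) : ∃ (g : H → H) (K : H → ℝ), GM g K ∧
    ∀ A, IsSelfAdjoint A → ∀ x, ‖x‖ = 1 → vr A x = K x * vr (F A) (g x) := by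
  have h1 : ∀ x : H, ∃ (y : H) (c d : ℝ), ‖x‖ = 1 → (‖y‖ = 1 ∧ c ≠ 0 ∧
      F (ro x x) = (c : ℂ) • ro y y + (d : ℂ) • 1) := by
    intro x
    by_cases hx : ‖x‖ = 1
    · have : IsR1 (F (ro x x)) := by
        rw [R1_iff_prk hd, ← hF.prk hd (sa_ro x), ← R1_iff_prk hd]
        exact ⟨x, 1, 0, hx, one_ne_zero, ro_aff x⟩
      obtain ⟨y, c, d, h⟩ := this
      exact ⟨y, c, d, fun _ => h⟩
    · exact ⟨0, 0, 0, fun h => absurd h hx⟩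
  choose g c d h using h1
  have hcom : ∀ x, ‖x‖ = 1 → ∀ T, IsSelfAdjoint T →
      (Commute T (ro x x) ↔ Commute (F T) (ro (g x) (g x))) := by
    intro x hx T hT
    obtain ⟨h1, h2, h3⟩ := h x hx
    rw [hF.comm hd hT (sa_ro x), h3, comm_aff h2]
  have hpar : ∀ x y, ‖x‖ = 1 → ‖y‖ = 1 → (ro x x = ro y y ↔ ro (g x) (g x) = ro (g y) (g y)) := by
    intro x y hx hy
    rw [← par_iff hd hx hy, ← par_iff hd (h x hx).1 (h y hy).1]
    constructor
    · intro h4 T hT hT2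
      obtain ⟨T, hT', rfl⟩ := hF.surj T hT
      exact (hcom y hy T hT').1 (h4 T hT' ((hcom x hx T hT').2 hT2))
    · intro h4 T hT hT2
      exact (hcom y hy T hT).2 (h4 _ (hF.sa T hT) ((hcom x hx T hT).1 hT2))
  have hvar : ∀ A, IsSelfAdjoint A → ∀ x, ‖x‖ = 1 → vr A x = c x ^ 2 * vr (F A) (g x) := by
    intro A hA x hx
    obtain ⟨h1, h2, h3⟩ := h x hx
    have := var_eq hA (hF.sa A hA) hx h1 1 0 (c x) (d x) (by
      rw [← h3, ← ro_aff]; exact hF.W _ _ (sa_ro x) hA)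
    simpa using this
  refine ⟨g, fun x => c x ^ 2, ⟨fun x hx => (h x hx).1, fun x hx => ?_, ?_, hpar, ?_, ?_⟩, hvar⟩
  · have := (h x hx).2.1
    positivity
  · intro x y hx hy
    have e1 : Commute (ro x x) (ro y y) ↔ Commute (ro (g x) (g x)) (ro (g y) (g y)) := by
      rw [hcom y hy _ (sa_ro x), (h x hx).2.2]
      rw [Commute.symm_iff, comm_aff (h x hx).2.1, Commute.symm_iff]
    rw [ro_comm_iff hx hy, ro_comm_iff (h x hx).1 (h y hy).1, ← hpar x y hx hy] at e1
    constructor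
    · intro h0
      rcases e1.1 (Or.inl h0) with h2 | h2
      · exact h2
      · exact absurd h0 (inner_ne_of_ro_eq hx hy h2)
    · intro h0
      rcases e1.2 (Or.inl h0) with h2 | h2
      · exact h2
      · exact absurd h0 (inner_ne_of_ro_eq (h x hx).1 (h y hy).1 ((hpar x y hx hy).1 h2))
  · intro u hu
    obtain ⟨A, hA, hAu⟩ := hF.surj _ (sa_ro u)
    have : IsR1 A := by
      rw [R1_iff_prk hd, hF.prk hd hA, hAu, ← R1_iff_prk hd]
      exact ⟨u, 1, 0, hu, one_ne_zero, ro_aff u⟩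
    obtain ⟨x, α, δ, hx, hα, hAx⟩ := this
    refine ⟨x, hx, ?_⟩
    rw [← par_iff hd hu (h x hx).1]
    intro T hT hT2
    obtain ⟨T, hT', rfl⟩ := hF.surj T hT
    rw [← hcom x hx T hT', ← comm_aff hα (δ := δ), ← hAx, hF.comm hd hT' hA, hAu]
    exact hT2
  · intro x y hx hy
    have e1 := hvar (ro y y) (sa_ro y) x hx
    rw [(h y hy).2.2, vr_aff (h x hx).1 (h y hy).1, ro_aff y, vr_aff hx hy] at e1
    rw [mul_assoc, ← e1]; simp

variable {g : H → H} {K : H → ℝ}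

lemma GM.sum3 (hg : GM g K) {a b c w : H} (ha : ‖a‖ = 1) (hb : ‖b‖ = 1) (hc : ‖c‖ = 1)
    (hw : ‖w‖ = 1) (hab : ⟪a, b⟫_ℂ = 0) (hac : ⟪a, c⟫_ℂ = 0) (hbc : ⟪b, c⟫_ℂ = 0)
    (hsp : ∀ z, ⟪a, z⟫_ℂ = 0 → ⟪b, z⟫_ℂ = 0 → ⟪c, z⟫_ℂ = 0 → ⟪w, z⟫_ℂ = 0) :
    ‖⟪g a, g w⟫_ℂ‖ ^ 2 + ‖⟪g b, g w⟫_ℂ‖ ^ 2 + ‖⟪g c, g w⟫_ℂ‖ ^ 2 = 1 := by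
  have hab' := (hg.orth a b ha hb).1 hab
  have hac' := (hg.orth a c ha hc).1 hac
  have hbc' := (hg.orth b c hb hc).1 hbc
  have hba' := inner_zero_symm hab'
  have hca' := inner_zero_symm hac'
  have hcb' := inner_zero_symm hbc'
  have na := inner_self_one (hg.unit a ha)
  have nb := inner_self_one (hg.unit b hb)
  have nc := inner_self_one (hg.unit c hc)
  have nw := inner_self_one (hg.unit w hw)
  set u := g w - ⟪g a, g w⟫_ℂ • g a - ⟪g b, g w⟫_ℂ • g b - ⟪g c, g w⟫_ℂ • g c with hu
  have hua : ⟪g a, u⟫_ℂ = 0 := by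
    simp only [hu, inner_sub_right, inner_smul_right, na, hab', hac']; ring
  have hub : ⟪g b, u⟫_ℂ = 0 := by
    simp only [hu, inner_sub_right, inner_smul_right, nb, hba', hbc']; ring
  have huc : ⟪g c, u⟫_ℂ = 0 := by
    simp only [hu, inner_sub_right, inner_smul_right, nc, hca', hcb']; ring
  have huw : ⟪g w, u⟫_ℂ = ⟪u, u⟫_ℂ := by
    have h4 : g w - u = ⟪g a, g w⟫_ℂ • g a + ⟪g b, g w⟫_ℂ • g b + ⟪g c, g w⟫_ℂ • g c := by
      rw [hu]; abel
    rw [← sub_eq_zero, ← inner_sub_left, h4]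
    rw [inner_add_left, inner_add_left, inner_smul_left, inner_smul_left,
      inner_smul_left, hua, hub, huc]; simp
  have hu0 : u = 0 := by
    by_contra hne
    obtain ⟨z, hz, hzu⟩ := hg.surj _ (norm_unit hne)
    have e1 := (ro_eq_imp (hg.unit z hz) (norm_unit hne) hzu.symm).2
    have e2 := (ro_eq_imp (norm_unit hne) (hg.unit z hz) hzu).2
    set k := ⟪((‖u‖⁻¹ : ℝ) : ℂ) • u, g z⟫_ℂ
    have o : ∀ v, ⟪v, u⟫_ℂ = 0 → ⟪v, g z⟫_ℂ = 0 := by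
      intro v hv; rw [e1, inner_smul_right, inner_smul_right, hv]; simp
    have hzw := (hg.orth w z hw hz).1 (hsp z ((hg.orth a z ha hz).2 (o _ hua))
      ((hg.orth b z hb hz).2 (o _ hub)) ((hg.orth c z hc hz).2 (o _ huc)))
    have : ⟪g w, ((‖u‖⁻¹ : ℝ) : ℂ) • u⟫_ℂ = 0 := by rw [e2, inner_smul_right, hzw, mul_zero]
    rw [inner_smul_right, huw] at this
    rcases mul_eq_zero.1 this with h | h
    · simp [hne] at h
    · exact hne (inner_self_eq_zero.1 h)
  rw [hu0, inner_zero_right] at huw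
  have e : ⟪g w, g w⟫_ℂ = ⟪g w, ⟪g a, g w⟫_ℂ • g a + ⟪g b, g w⟫_ℂ • g b + ⟪g c, g w⟫_ℂ • g c⟫_ℂ := by
    congr 1
    rw [← sub_eq_zero]; rw [← hu0, hu]; abel
  rw [nw] at e
  simp only [inner_add_right, inner_smul_right] at e
  apply Complex.ofReal_injective
  push_cast
  rw [e, ← Complex.mul_conj', ← Complex.mul_conj', ← Complex.mul_conj']
  simp only [inner_conj_symm]

/-- normalized sum of two orthonormal vectors -/
lemma half_sum {x y : H} (hx : ‖x‖ = 1) (hy : ‖y‖ = 1) (hxy : ⟪x, y⟫_ℂ = 0) :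
    ∃ s : ℝ, s * s = 1 / 2 ∧ ‖(s : ℂ) • (x + y)‖ = 1 := by
  have hs2 : (Real.sqrt 2)⁻¹ * (Real.sqrt 2)⁻¹ = 1 / 2 := by
    rw [← mul_inv, Real.mul_self_sqrt (by norm_num)]; norm_num
  set s : ℝ := (Real.sqrt 2)⁻¹
  refine ⟨s, hs2, ?_⟩
  have hs2' : (s : ℂ) * s = 1 / 2 := by rw [← Complex.ofReal_mul, hs2]; norm_num
  have : ‖(s : ℂ) • (x + y)‖ ^ 2 = 1 := by
    apply Complex.ofReal_injective
    rw [Complex.ofReal_pow, nsq]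
    simp only [inner_add_left, inner_add_right, inner_smul_left, inner_smul_right, hxy,
      inner_zero_symm hxy, inner_self_one hx, inner_self_one hy, Complex.conj_ofReal]
    push_cast
    linear_combination 2 * hs2'
  nlinarith [norm_nonneg ((s : ℂ) • (x + y))]

lemma half_q {s : ℝ} (hs : s * s = 1 / 2) {a w : H} (h : ‖⟪a, w⟫_ℂ‖ = |s|) : ‖⟪a, w⟫_ℂ‖ ^ 2 = 1 / 2 := by
  rw [h, sq_abs, sq, hs]

lemma GM.K_orth (hg : GM g K) (hd : Dim3 H) {x y : H} (hx : ‖x‖ = 1) (hy : ‖y‖ = 1)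
    (hxy : ⟪x, y⟫_ℂ = 0) : K x = K y := by
  obtain ⟨s, hs, hw⟩ := half_sum hx hy hxy
  set w := (s : ℂ) • (x + y) with hwd
  obtain ⟨z, hz, hxz, hyz⟩ := hd x y
  have hwz : ⟪w, z⟫_ℂ = 0 := by rw [hwd, inner_smul_left, inner_add_left, hxz, hyz]; simp
  have hsum := hg.sum3 hx hy hz hw hxy hxz hyz (by
    intro v h1 h2 h3; rw [hwd, inner_smul_left, inner_add_left, h1, h2]; simp)
  rw [(hg.orth z w hz hw).1 (inner_zero_symm hwz)] at hsum
  have q1 : ‖⟪x, w⟫_ℂ‖ ^ 2 = 1 / 2 := half_q hs (by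
    rw [hwd, inner_smul_right, inner_add_right, hxy, inner_self_one hx]; simp)
  have q2 : ‖⟪y, w⟫_ℂ‖ ^ 2 = 1 / 2 := half_q hs (by
    rw [hwd, inner_smul_right, inner_add_right, inner_zero_symm hxy, inner_self_one hy]; simp)
  have v1 := hg.var x w hx hw
  have v2 := hg.var y w hy hw
  rw [q1] at v1
  rw [q2] at v2
  have hKw := hg.pos w hw
  set a := ‖⟪g x, g w⟫_ℂ‖ ^ 2
  set b := ‖⟪g y, g w⟫_ℂ‖ ^ 2
  have hb : b = 1 - a := by simp at hsum; linarith
  rw [hb] at v2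
  have h3 : (K x - K y) * (K w * (a - a ^ 2)) = 0 := by linear_combination v2 - v1
  rcases mul_eq_zero.1 h3 with h | h
  · linarith
  · rw [mul_assoc, h] at v1; norm_num at v1

lemma GM.K_one (hg : GM g K) (hd : Dim3 H) {x : H} (hx : ‖x‖ = 1) : K x = 1 := by
  have hconst : ∀ x y, ‖x‖ = 1 → ‖y‖ = 1 → K x = K y := by
    intro x y hx hy
    obtain ⟨z, hz, hxz, hyz⟩ := hd x y
    rw [hg.K_orth hd hx hz hxz, hg.K_orth hd hy hz hyz]
  have hpos := hg.pos x hx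
  obtain ⟨z, hz, hxz, -⟩ := hd x x
  have h1 : 1 ≤ K x * K x := by
    obtain ⟨s, hs, hw⟩ := half_sum hx hz hxz
    set w := (s : ℂ) • (x + z) with hwd
    have q1 : ‖⟪x, w⟫_ℂ‖ ^ 2 = 1 / 2 := half_q hs (by
      rw [hwd, inner_smul_right, inner_add_right, hxz, inner_self_one hx]; simp)
    have v := hg.var x w hx hw
    rw [q1, hconst w x hw hx] at v
    nlinarith [sq_nonneg (‖⟪g x, g w⟫_ℂ‖ ^ 2 - 1 / 2), mul_pos hpos hpos]
  have h2 : K x * K x ≤ 1 := by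
    have hgz := (hg.orth x z hx hz).1 hxz
    obtain ⟨s, hs, hw⟩ := half_sum (hg.unit x hx) (hg.unit z hz) hgz
    set w := (s : ℂ) • (g x + g z) with hwd
    have q1 : ‖⟪g x, w⟫_ℂ‖ ^ 2 = 1 / 2 := half_q hs (by
      rw [hwd, inner_smul_right, inner_add_right, hgz, inner_self_one (hg.unit x hx)]; simp)
    obtain ⟨y, hy, hyw⟩ := hg.surj w hw
    obtain ⟨e1, e2⟩ := ro_eq_imp hw (hg.unit y hy) hyw
    rw [e2, inner_smul_right, norm_mul, norm_inner_symm, e1, one_mul] at q1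
    have v := hg.var x y hx hy
    rw [q1, hconst y x hy hx] at v
    nlinarith [sq_nonneg (‖⟪x, y⟫_ℂ‖ ^ 2 - 1 / 2)]
  nlinarith

lemma GM.wig (hg : GM g K) (hd : Dim3 H) {x y : H} (hx : ‖x‖ = 1) (hy : ‖y‖ = 1) :
    ‖⟪g x, g y⟫_ℂ‖ = ‖⟪x, y⟫_ℂ‖ := by
  have hor : ∀ x y, ‖x‖ = 1 → ‖y‖ = 1 → ‖⟪g x, g y⟫_ℂ‖ ^ 2 = ‖⟪x, y⟫_ℂ‖ ^ 2 ∨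
      ‖⟪g x, g y⟫_ℂ‖ ^ 2 = 1 - ‖⟪x, y⟫_ℂ‖ ^ 2 := by
    intro x y hx hy
    have v := hg.var x y hx hy
    rw [hg.K_one hd hx, hg.K_one hd hy] at v
    have : (‖⟪g x, g y⟫_ℂ‖ ^ 2 - ‖⟪x, y⟫_ℂ‖ ^ 2) *
        (‖⟪g x, g y⟫_ℂ‖ ^ 2 - (1 - ‖⟪x, y⟫_ℂ‖ ^ 2)) = 0 := by linear_combination v
    rcases mul_eq_zero.1 this with h | h
    · left; linarith
    · right; linarith
  suffices h : ‖⟪g x, g y⟫_ℂ‖ ^ 2 = ‖⟪x, y⟫_ℂ‖ ^ 2 by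
    exact (sq_eq_sq₀ (norm_nonneg _) (norm_nonneg _)).1 h
  set r := y - ⟪x, y⟫_ℂ • x with hr
  have hxr : ⟪x, r⟫_ℂ = 0 := by
    rw [hr, inner_sub_right, inner_smul_right, inner_self_one hx]; simp
  by_cases hr0 : r = 0
  · have hy2 : y = ⟪x, y⟫_ℂ • x := sub_eq_zero.1 hr0
    have hk : ‖⟪x, y⟫_ℂ‖ = 1 := by
      have := congrArg norm hy2
      rw [norm_smul, hx, hy, mul_one] at this
      exact this.symm
    have hro : ro x x = ro y y := by
      rcases (ro_comm_iff hx hy).1 (by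
        set k := ⟪x, y⟫_ℂ
        rw [hy2]; apply comm_of_apply; intro z
        simp only [ro_apply, map_smul, inner_smul_left, inner_smul_right, smul_smul,
          inner_self_one hx]
        congr 1; ring) with h | h
      · rw [h] at hk; simp at hk
      · exact h
    rw [(ro_eq_imp (hg.unit x hx) (hg.unit y hy) ((hg.par x y hx hy).1 hro)).1, hk]
  -- generic case
  set f := ((‖r‖⁻¹ : ℝ) : ℂ) • r with hf
  have hfn : ‖f‖ = 1 := norm_unit hr0
  have hxf : ⟪x, f⟫_ℂ = 0 := by rw [hf, inner_smul_right, hxr, mul_zero]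
  obtain ⟨e, he, hxe, hfe⟩ := hd x f
  have hfe' := inner_zero_symm hfe
  have hrC : (‖r‖ : ℂ) ≠ 0 := by simpa using hr0
  have hrf : r = (‖r‖ : ℂ) • f := by
    rw [hf, smul_smul, Complex.ofReal_inv, mul_inv_cancel₀ hrC, one_smul]
  have hyd : y = ⟪x, y⟫_ℂ • x + (‖r‖ : ℂ) • f := by rw [← hrf, hr]; abel
  clear_value f
  obtain ⟨s, hs, hb⟩ := half_sum hfn he hfe
  have hs' : (s : ℂ) * s = 1 / 2 := by rw [← Complex.ofReal_mul, hs]; norm_num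
  have hc : ‖(s : ℂ) • (f + (-1 : ℂ) • e)‖ = 1 := by
    have : ‖(s : ℂ) • (f + (-1 : ℂ) • e)‖ ^ 2 = 1 := by
      apply Complex.ofReal_injective
      rw [Complex.ofReal_pow, nsq]
      simp only [inner_add_left, inner_add_right, inner_smul_left, inner_smul_right, hfe,
        hfe', inner_self_one hfn, inner_self_one he, Complex.conj_ofReal, map_neg, map_one]
      push_cast
      linear_combination 2 * hs'
    nlinarith [norm_nonneg ((s : ℂ) • (f + (-1 : ℂ) • e))]
  set b := (s : ℂ) • (f + e) with hbd
  set c := (s : ℂ) • (f + (-1 : ℂ) • e) with hcd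
  have hxb : ⟪x, b⟫_ℂ = 0 := by rw [hbd, inner_smul_right, inner_add_right, hxf, hxe]; simp
  have hxc : ⟪x, c⟫_ℂ = 0 := by
    rw [hcd, inner_smul_right, inner_add_right, inner_smul_right, hxf, hxe]; simp
  have hbc : ⟪b, c⟫_ℂ = 0 := by
    simp only [hbd, hcd, inner_add_left, inner_add_right, inner_smul_left, inner_smul_right, hfe,
        hfe', inner_self_one hfn, inner_self_one he, Complex.conj_ofReal]
    ring
  have hfbc : f = (s : ℂ) • (b + c) := by
    rw [hbd, hcd, ← smul_add, smul_smul, hs']; module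
  have hsum := hg.sum3 hx hb hc hy hxb hxc hbc (by
    intro v h1 h2 h3
    rw [hyd, hfbc]
    simp only [inner_add_left, inner_smul_left, h1, h2, h3]; simp)
  have hby : ⟪b, y⟫_ℂ = s * ‖r‖ := by
    rw [hyd]
    simp only [hbd, inner_add_left, inner_add_right, inner_smul_left, inner_smul_right, hxf,
      inner_zero_symm hxf, inner_zero_symm hxe, hfe', inner_self_one hfn, Complex.conj_ofReal]
    ring
  have hcy : ⟪c, y⟫_ℂ = s * ‖r‖ := by
    rw [hyd]
    simp only [hcd, inner_add_left, inner_add_right, inner_smul_left, inner_smul_right, hxf,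
      inner_zero_symm hxf, inner_zero_symm hxe, hfe', inner_self_one hfn, Complex.conj_ofReal]
    ring
  have hrn : ‖r‖ ^ 2 = 1 - ‖⟪x, y⟫_ℂ‖ ^ 2 := by
    apply Complex.ofReal_injective; push_cast
    rw [nsq, ← Complex.conj_mul', hr]
    simp only [inner_sub_left, inner_sub_right, inner_smul_left, inner_smul_right,
      inner_self_one hx, inner_self_one hy, inner_conj_symm]
    ring
  have q : ‖(s : ℂ) * ‖r‖‖ ^ 2 = (1 - ‖⟪x, y⟫_ℂ‖ ^ 2) / 2 := by
    rw [norm_mul, mul_pow, ← hrn]; simp; rw [sq s, hs]; ring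
  have hr2 : 0 < ‖r‖ ^ 2 := by have := norm_pos_iff.2 hr0; positivity
  have o1 := hor x y hx hy
  have o2 := hor b y hb hy
  have o3 := hor c y hc hy
  rw [hby, q] at o2
  rw [hcy, q] at o3
  rw [hrn] at hr2
  rcases o1 with h1 | h1
  · exact h1
  · rcases o2 with h2 | h2 <;> rcases o3 with h3 | h3 <;> rw [h1, h2, h3] at hsum <;>
      linarith [sq_nonneg ‖⟪x, y⟫_ℂ‖]

/-- Conclusion of this part -/
lemma Pres.exists_wig (hF : Pres F) (hd : Dim3 H) : ∃ g : H → H, (∀ x, ‖x‖ = 1 → ‖g x‖ = 1) ∧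
    (∀ x y, ‖x‖ = 1 → ‖y‖ = 1 → ‖⟪g x, g y⟫_ℂ‖ = ‖⟪x, y⟫_ℂ‖) ∧
    (∀ u, ‖u‖ = 1 → ∃ x, ‖x‖ = 1 ∧ ∃ c : ℂ, u = c • g x) ∧
    ∀ A, IsSelfAdjoint A → ∀ x, ‖x‖ = 1 → vr A x = vr (F A) (g x) := by
  obtain ⟨g, K, hg, hv⟩ := hF.exists_gm hd
  refine ⟨g, hg.unit, fun x y hx hy => hg.wig hd hx hy, ?_, ?_⟩
  · intro u hu
    obtain ⟨x, hx, hux⟩ := hg.surj u hu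
    exact ⟨x, hx, _, (ro_eq_imp hu (hg.unit x hx) hux).2⟩
  · intro A hA x hx
    rw [hv A hA x hx, hg.K_one hd hx, one_mul]

end GMap

section Wigner

variable {H : Type*} [NormedAddCommGroup H] [InnerProductSpace ℂ H] [CompleteSpace H]

lemma nis (x : H) : ‖⟪x, x⟫_ℂ‖ = ‖x‖ ^ 2 := by rw [← nsq]; simp

lemma norm_of_wig {g : H → H} (hg : ∀ x y, ‖⟪g x, g y⟫_ℂ‖ = ‖⟪x, y⟫_ℂ‖) (x : H) :
    ‖g x‖ = ‖x‖ := by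
  have h := hg x x
  rw [nis, nis] at h
  have : ‖g x‖ ^ 2 = ‖x‖ ^ 2 := by linarith
  exact (sq_eq_sq₀ (norm_nonneg _) (norm_nonneg _)).1 this

/-- equality case of Cauchy-Schwarz -/
lemma cs_eq {x y : H} (hx : x ≠ 0) (h : ‖⟪x, y⟫_ℂ‖ = ‖x‖ * ‖y‖) : ∃ c : ℂ, y = c • x := by
  by_cases hy : y = 0
  · exact ⟨0, by simp [hy]⟩
  have := (norm_inner_eq_norm_iff (𝕜 := ℂ) hx hy).1 h
  obtain ⟨r, _, hr⟩ := this
  exact ⟨r, hr⟩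

lemma re_of_norms {z w : ℂ} (h1 : ‖1 + z‖ = ‖1 + w‖) (h2 : ‖z‖ = ‖w‖) : z.re = w.re := by
  have h1' : ‖1 + z‖ ^ 2 = ‖1 + w‖ ^ 2 := by rw [h1]
  have h2' : ‖z‖ ^ 2 = ‖w‖ ^ 2 := by rw [h2]
  simp only [Complex.sq_norm, Complex.normSq_apply, Complex.add_re, Complex.add_im, Complex.one_re,
    Complex.one_im] at h1' h2'
  linarith

lemma normsq_re (x : H) : ‖x‖ ^ 2 = (⟪x, x⟫_ℂ).re := by
  rw [← nsq, ← Complex.ofReal_pow, Complex.ofReal_re]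

lemma wigner_aux {g : H → H} (hg : ∀ x y, ‖⟪g x, g y⟫_ℂ‖ = ‖⟪x, y⟫_ℂ‖) {e : H} (he : ‖e‖ = 1) :
    ∃ (f : H) (τ : H → H), ‖f‖ = 1 ∧ (∃ d : ℂ, f = d • g e) ∧
      (∀ a, ⟪e, a⟫_ℂ = 0 → ⟪f, τ a⟫_ℂ = 0) ∧
      (∀ a, ⟪e, a⟫_ℂ = 0 → ∃ d : ℂ, τ a = d • g a) ∧
      (∀ a, ⟪e, a⟫_ℂ = 0 → ∃ d : ℂ, f + τ a = d • g (e + a)) ∧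
      (∀ a b, ⟪e, a⟫_ℂ = 0 → ⟪e, b⟫_ℂ = 0 → (⟪τ a, τ b⟫_ℂ).re = (⟪a, b⟫_ℂ).re) ∧
      (∀ a b, ⟪e, a⟫_ℂ = 0 → ⟪e, b⟫_ℂ = 0 → ‖⟪τ a, τ b⟫_ℂ‖ = ‖⟪a, b⟫_ℂ‖) := by
  have hn := norm_of_wig hg
  set f := g e with hf
  have hfn : ‖f‖ = 1 := by rw [hf, hn, he]
  have hff := inner_self_one hfn
  have hee := inner_self_one he
  have hk : ∀ a, ⟪e, a⟫_ℂ = 0 → ‖⟪f, g (e + a)⟫_ℂ‖ = 1 := by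
    intro a ha; rw [hf, hg, inner_add_right, ha, hee]; simp
  set h : H → H := fun a => (⟪f, g (e + a)⟫_ℂ)⁻¹ • g (e + a) with hh
  have hfh : ∀ a, ⟪e, a⟫_ℂ = 0 → ⟪f, h a⟫_ℂ = 1 := by
    intro a ha
    have : ⟪f, g (e + a)⟫_ℂ ≠ 0 := by intro h0; have := hk a ha; rw [h0] at this; simp at this
    rw [hh]; simp only [inner_smul_right]; exact inv_mul_cancel₀ this
  have hhf : ∀ a, ⟪e, a⟫_ℂ = 0 → ⟪h a, f⟫_ℂ = 1 := by
    intro a ha; rw [← inner_conj_symm, hfh a ha]; simp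
  set τ : H → H := fun a => h a - f with hτ
  have hht : ∀ a, h a = f + τ a := by intro a; simp [hτ]
  have hft : ∀ a, ⟪e, a⟫_ℂ = 0 → ⟪f, τ a⟫_ℂ = 0 := by
    intro a ha; simp only [hτ, inner_sub_right, hfh a ha, hff, sub_self]
  have hin : ∀ a b, ⟪e, a⟫_ℂ = 0 → ⟪e, b⟫_ℂ = 0 → ⟪h a, h b⟫_ℂ = 1 + ⟪τ a, τ b⟫_ℂ := by
    intro a b ha hb
    rw [hht a, hht b]
    simp only [inner_add_left, inner_add_right, hff, hft b hb, inner_zero_symm (hft a ha)]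
    ring
  have hone : ∀ a b, ⟪e, a⟫_ℂ = 0 → ⟪e, b⟫_ℂ = 0 → ‖1 + ⟪τ a, τ b⟫_ℂ‖ = ‖1 + ⟪a, b⟫_ℂ‖ := by
    intro a b ha hb
    rw [← hin a b ha hb]
    simp only [hh, inner_smul_left, inner_smul_right, norm_mul, norm_inv, hk a ha, hk b hb,
      RCLike.norm_conj, hg, inner_add_left, inner_add_right, hee, inner_zero_symm ha, hb]
    simp
  have hnt : ∀ a, ⟪e, a⟫_ℂ = 0 → ‖τ a‖ = ‖a‖ := by
    intro a ha
    have h1 := hone a a ha ha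
    rw [← nsq, ← nsq] at h1
    have e1 : ∀ r : ℝ, ‖1 + (r : ℂ) ^ 2‖ = 1 + r ^ 2 := by
      intro r
      rw [show (1 : ℂ) + (r : ℂ) ^ 2 = ((1 + r ^ 2 : ℝ) : ℂ) by push_cast; rfl, Complex.norm_real,
        Real.norm_eq_abs, abs_of_nonneg (by positivity)]
    rw [e1, e1] at h1
    exact (sq_eq_sq₀ (norm_nonneg _) (norm_nonneg _)).1 (by linarith)
  have hpar : ∀ a, ⟪e, a⟫_ℂ = 0 → ∃ d : ℂ, (a ≠ 0 → ‖d‖ = 1) ∧ τ a = d • g a := by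
    intro a ha
    by_cases ha0 : a = 0
    · refine ⟨0, fun h => absurd ha0 h, ?_⟩
      have := hnt a ha; rw [ha0, norm_zero, norm_eq_zero] at this; rw [ha0, this, zero_smul]
    have hga0 : g a ≠ 0 := by rw [← norm_ne_zero_iff, hn]; simpa using ha0
    have h1 : ⟪f, g a⟫_ℂ = 0 := by rw [← norm_eq_zero, hf, hg, ha]; simp
    have h2 : ‖⟪g a, τ a⟫_ℂ‖ = ‖g a‖ * ‖τ a‖ := by
      have : ⟪g a, τ a⟫_ℂ = ⟪g a, h a⟫_ℂ := by
        rw [hht a, inner_add_right, inner_zero_symm h1, zero_add]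
      rw [this, hn, hnt a ha]
      simp only [hh, inner_smul_right, norm_mul, norm_inv, hk a ha, hg, inner_add_right,
        inner_zero_symm ha]
      simp [sq]
    obtain ⟨d, hd⟩ := cs_eq hga0 h2
    refine ⟨d, fun _ => ?_, hd⟩
    have := congrArg norm hd
    rw [norm_smul, hnt a ha, hn] at this
    have h0 : ‖a‖ ≠ 0 := norm_ne_zero_iff.2 ha0
    field_simp at this
    exact this.symm
  have hab : ∀ a b, ⟪e, a⟫_ℂ = 0 → ⟪e, b⟫_ℂ = 0 → ‖⟪τ a, τ b⟫_ℂ‖ = ‖⟪a, b⟫_ℂ‖ := by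
    intro a b ha hb
    by_cases ha0 : a = 0
    · have := hnt a ha; rw [ha0, norm_zero, norm_eq_zero] at this; rw [ha0, this]; simp
    by_cases hb0 : b = 0
    · have := hnt b hb; rw [hb0, norm_zero, norm_eq_zero] at this; rw [hb0, this]; simp
    obtain ⟨d, hd, hd'⟩ := hpar a ha
    obtain ⟨d2, hd2, hd2'⟩ := hpar b hb
    rw [hd', hd2', inner_smul_left, inner_smul_right, norm_mul, norm_mul, RCLike.norm_conj, hd ha0,
      hd2 hb0, hg]; simp
  refine ⟨f, τ, hfn, ⟨1, by simp⟩, hft, fun a ha => ?_, fun a ha => ?_, ?_, hab⟩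
  · obtain ⟨d, -, hd⟩ := hpar a ha; exact ⟨d, hd⟩
  · exact ⟨_, (hht a).symm⟩
  · intro a b ha hb
    exact re_of_norms (hone a b ha hb) (hab a b ha hb)

lemma wigner_sign {e f : H} {τ : H → H}
    (hre : ∀ a b, ⟪e, a⟫_ℂ = 0 → ⟪e, b⟫_ℂ = 0 → (⟪τ a, τ b⟫_ℂ).re = (⟪a, b⟫_ℂ).re)
    (hab : ∀ a b, ⟪e, a⟫_ℂ = 0 → ⟪e, b⟫_ℂ = 0 → ‖⟪τ a, τ b⟫_ℂ‖ = ‖⟪a, b⟫_ℂ‖) :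
    (∀ a b, ⟪e, a⟫_ℂ = 0 → ⟪e, b⟫_ℂ = 0 → τ (a + b) = τ a + τ b) ∧
    (∀ (r : ℝ) a, ⟪e, a⟫_ℂ = 0 → τ ((r : ℂ) • a) = (r : ℂ) • τ a) ∧
    ((∀ a, ⟪e, a⟫_ℂ = 0 → τ (Complex.I • a) = Complex.I • τ a) ∨
     (∀ a, ⟪e, a⟫_ℂ = 0 → τ (Complex.I • a) = -(Complex.I • τ a))) := by
  have hnt : ∀ a, ⟪e, a⟫_ℂ = 0 → ‖τ a‖ = ‖a‖ := by
    intro a ha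
    have := hre a a ha ha
    rw [← normsq_re, ← normsq_re] at this
    exact (sq_eq_sq₀ (norm_nonneg _) (norm_nonneg _)).1 this
  have zer : ∀ v : H, (⟪v, v⟫_ℂ).re = 0 → v = 0 := by
    intro v hv; rw [← normsq_re] at hv; simpa using hv
  have hsm : ∀ (c : ℂ) a, ⟪e, a⟫_ℂ = 0 → ⟪e, c • a⟫_ℂ = 0 := by
    intro c a ha; rw [inner_smul_right, ha, mul_zero]
  have hadd : ∀ a b, ⟪e, a⟫_ℂ = 0 → ⟪e, b⟫_ℂ = 0 → ⟪e, a + b⟫_ℂ = 0 := by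
    intro a b ha hb; rw [inner_add_right, ha, hb, add_zero]
  have A : ∀ a b, ⟪e, a⟫_ℂ = 0 → ⟪e, b⟫_ℂ = 0 → τ (a + b) = τ a + τ b := by
    intro a b ha hb
    have hc := hadd a b ha hb
    rw [← sub_eq_zero]
    apply zer
    simp only [inner_sub_left, inner_sub_right, inner_add_left, inner_add_right, Complex.sub_re,
      Complex.add_re, hre _ _ hc hc, hre _ _ hc ha, hre _ _ hc hb, hre _ _ ha ha, hre _ _ ha hb,
      hre _ _ hb ha, hre _ _ hb hb, hre _ _ ha hc, hre _ _ hb hc]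
    ring
  have R : ∀ (r : ℝ) a, ⟪e, a⟫_ℂ = 0 → τ ((r : ℂ) • a) = (r : ℂ) • τ a := by
    intro r a ha
    have hc := hsm r a ha
    rw [← sub_eq_zero]
    apply zer
    simp only [inner_sub_left, inner_sub_right, inner_smul_left, inner_smul_right, Complex.sub_re,
      Complex.conj_ofReal, Complex.re_ofReal_mul, hre _ _ hc hc, hre _ _ hc ha, hre _ _ ha ha,
      hre _ _ ha hc]
    ring
  refine ⟨A, R, ?_⟩
  have I1 : ∀ a, ⟪e, a⟫_ℂ = 0 → τ (Complex.I • a) = Complex.I • τ a ∨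
      τ (Complex.I • a) = -(Complex.I • τ a) := by
    intro a ha
    have hc := hsm Complex.I a ha
    have h1 := hre _ _ ha hc
    have h2 := hab _ _ ha hc
    have h3 : (⟪τ a, τ a⟫_ℂ).re = ‖a‖ ^ 2 := by rw [← normsq_re, hnt a ha]
    have h4 : (⟪τ (Complex.I • a), τ (Complex.I • a)⟫_ℂ).re = ‖a‖ ^ 2 := by
      rw [← normsq_re, hnt _ hc, norm_smul]; simp
    rw [inner_smul_right, ← nsq, ← Complex.ofReal_pow, Complex.I_mul_re, Complex.ofReal_im,
      neg_zero] at h1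
    rw [inner_smul_right, norm_mul, Complex.norm_I, one_mul, nis] at h2
    have h5 : |(⟪τ a, τ (Complex.I • a)⟫_ℂ).im| = ‖a‖ ^ 2 := by
      rw [Complex.abs_im_eq_norm.2 h1, h2]
    have h6 : (⟪τ (Complex.I • a), τ a⟫_ℂ).im = - (⟪τ a, τ (Complex.I • a)⟫_ℂ).im := by
      rw [← inner_conj_symm, Complex.conj_im]
    rcases abs_choice (⟪τ a, τ (Complex.I • a)⟫_ℂ).im with hs | hs
    · left
      rw [← sub_eq_zero]
      apply zer
      simp only [inner_sub_left, inner_sub_right, inner_smul_left, inner_smul_right, Complex.sub_re,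
        Complex.conj_I, Complex.neg_re, Complex.neg_im, Complex.sub_im, Complex.add_im, neg_mul, Complex.I_mul_re, Complex.I_mul_im, h3, h4, h6]
      rw [hs] at h5
      linarith
    · right
      rw [← sub_eq_zero, sub_neg_eq_add]
      apply zer
      simp only [inner_add_left, inner_add_right, inner_smul_left, inner_smul_right, Complex.add_re,
        Complex.conj_I, Complex.neg_re, Complex.neg_im, Complex.sub_im, Complex.add_im, neg_mul, Complex.I_mul_re, Complex.I_mul_im, h3, h4, h6]
      rw [hs] at h5
      linarith
  by_contra hcon
  push Not at hcon
  obtain ⟨⟨b, hb, hb1⟩, a, ha, ha1⟩ := hcon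
  have hb2 := (I1 b hb).resolve_left hb1
  have ha2 := (I1 a ha).resolve_right ha1
  have h1 := I1 _ (hadd a b ha hb)
  rw [smul_add, A _ _ (hsm _ a ha) (hsm _ b hb), ha2, hb2, A a b ha hb] at h1
  have hI : ∀ v : H, Complex.I • v = -(Complex.I • v) → v = 0 := by
    intro v hv
    have : (2 * Complex.I) • v = 0 := by
      rw [two_mul, add_smul]; nth_rewrite 1 [hv]; simp
    rcases smul_eq_zero.1 this with h | h
    · simp at h
    · exact h
  rcases h1 with h1 | h1
  · apply hb1
    rw [smul_add, add_right_inj] at h1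
    rw [hb2, h1]
  · apply ha1
    rw [smul_add, neg_add, add_left_inj] at h1
    rw [ha2]; exact h1

/-- Wigner, in the form: a surjective isometric linear or conjugate-linear map. -/
lemma wigner {g : H → H} (hg : ∀ x y, ‖⟪g x, g y⟫_ℂ‖ = ‖⟪x, y⟫_ℂ‖)
    (hs : ∀ u, ∃ x, ∃ c : ℂ, u = c • g x) {e : H} (he : ‖e‖ = 1) :
    ∃ (V : H → H) (κ : ℂ →+* ℂ), (κ = RingHom.id ℂ ∨ κ = starRingEnd ℂ) ∧
      (∀ x y, V (x + y) = V x + V y) ∧ (∀ (c : ℂ) x, V (c • x) = κ c • V x) ∧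
      (∀ x, ‖V x‖ = ‖x‖) ∧ Function.Surjective V ∧ ∀ x, ∃ d : ℂ, V x = d • g x := by
  have hn := norm_of_wig hg
  obtain ⟨f, τ, hf, ⟨d0, hfd⟩, hft, htg, hhg, hre, hab⟩ := wigner_aux hg he
  obtain ⟨hA, hR, hI⟩ := wigner_sign (f := f) hre hab
  have hee := inner_self_one he
  have hff := inner_self_one hf
  have hsm : ∀ (c : ℂ) a, ⟪e, a⟫_ℂ = 0 → ⟪e, c • a⟫_ℂ = 0 := by
    intro c a ha; rw [inner_smul_right, ha, mul_zero]
  have hκ : ∃ κ : ℂ →+* ℂ, (κ = RingHom.id ℂ ∨ κ = starRingEnd ℂ) ∧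
      ∀ (c : ℂ) a, ⟪e, a⟫_ℂ = 0 → τ (c • a) = κ c • τ a := by
    have hc : ∀ (c : ℂ) a, ⟪e, a⟫_ℂ = 0 → τ (c • a) = (c.re : ℂ) • τ a +
        (c.im : ℂ) • τ (Complex.I • a) := by
      intro c a ha
      conv_lhs => rw [← Complex.re_add_im c]
      rw [add_smul, hA _ _ (hsm _ _ ha) (hsm _ _ ha), hR _ _ ha, mul_smul,
        hR _ _ (hsm _ _ ha)]
    rcases hI with hI | hI
    · refine ⟨RingHom.id ℂ, Or.inl rfl, fun c a ha => ?_⟩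
      rw [hc c a ha, hI a ha]
      conv_rhs => rw [RingHom.id_apply, ← Complex.re_add_im c]
      module
    · refine ⟨starRingEnd ℂ, Or.inr rfl, fun c a ha => ?_⟩
      rw [hc c a ha, hI a ha]
      conv_rhs => rw [← Complex.re_add_im c]
      simp only [map_add, map_mul, Complex.conj_ofReal, Complex.conj_I]
      module
  obtain ⟨κ, hκ, hτκ⟩ := hκ
  have hκn : ∀ c, ‖κ c‖ = ‖c‖ := by
    intro c; rcases hκ with rfl | rfl
    · rfl
    · exact RCLike.norm_conj c
  have hκs : ∀ c, ∃ c', κ c' = c := by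
    intro c; rcases hκ with rfl | rfl
    · exact ⟨c, rfl⟩
    · exact ⟨starRingEnd ℂ c, by simp⟩
  have hpe : ∀ x, ⟪e, x - ⟪e, x⟫_ℂ • e⟫_ℂ = 0 := by
    intro x; rw [inner_sub_right, inner_smul_right, hee]; simp
  set V : H → H := fun x => κ ⟪e, x⟫_ℂ • f + τ (x - ⟪e, x⟫_ℂ • e) with hV
  have hVadd : ∀ x y, V (x + y) = V x + V y := by
    intro x y
    simp only [hV, inner_add_right, map_add]
    rw [show x + y - (⟪e, x⟫_ℂ + ⟪e, y⟫_ℂ) • e = (x - ⟪e, x⟫_ℂ • e) + (y - ⟪e, y⟫_ℂ • e) by module,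
      hA _ _ (hpe x) (hpe y)]
    module
  have hVsm : ∀ (c : ℂ) x, V (c • x) = κ c • V x := by
    intro c x
    simp only [hV, inner_smul_right, map_mul]
    rw [show c • x - (c * ⟪e, x⟫_ℂ) • e = c • (x - ⟪e, x⟫_ℂ • e) by module, hτκ _ _ (hpe x)]
    module
  have hVn : ∀ x, ‖V x‖ = ‖x‖ := by
    intro x
    have h1 : ‖V x‖ ^ 2 = ‖κ ⟪e, x⟫_ℂ • f‖ ^ 2 + ‖τ (x - ⟪e, x⟫_ℂ • e)‖ ^ 2 := by
      rw [sq, sq, sq]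
      apply norm_add_sq_eq_norm_sq_add_norm_sq_of_inner_eq_zero (𝕜 := ℂ)
      rw [inner_smul_left, hft _ (hpe x), mul_zero]
    have h2 : ‖x‖ ^ 2 = ‖⟪e, x⟫_ℂ • e‖ ^ 2 + ‖x - ⟪e, x⟫_ℂ • e‖ ^ 2 := by
      have h3 := norm_add_sq_eq_norm_sq_add_norm_sq_of_inner_eq_zero (𝕜 := ℂ) (⟪e, x⟫_ℂ • e)
        (x - ⟪e, x⟫_ℂ • e) (by rw [inner_smul_left, hpe, mul_zero])
      rw [add_sub_cancel] at h3
      rw [sq, sq, sq, h3]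
    have h4 : ‖τ (x - ⟪e, x⟫_ℂ • e)‖ ^ 2 = ‖x - ⟪e, x⟫_ℂ • e‖ ^ 2 := by
      rw [normsq_re, normsq_re, hre _ _ (hpe x) (hpe x)]
    rw [h4, norm_smul, hf, hκn] at h1
    rw [norm_smul, he] at h2
    exact (sq_eq_sq₀ (norm_nonneg _) (norm_nonneg _)).1 (by linarith)
  have hVg : ∀ x, ∃ d : ℂ, V x = d • g x := by
    intro x
    by_cases hα : ⟪e, x⟫_ℂ = 0
    · obtain ⟨d, hd⟩ := htg x hα
      refine ⟨d, ?_⟩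
      simp only [hV, hα, map_zero, zero_smul, sub_zero, zero_add]; exact hd
    · set α := ⟪e, x⟫_ℂ with hαd
      have hb : ⟪e, α⁻¹ • (x - α • e)⟫_ℂ = 0 := hsm _ _ (hpe x)
      set b := α⁻¹ • (x - α • e) with hbd
      have hx : x = α • (e + b) := by
        rw [hbd, smul_add, smul_smul, mul_inv_cancel₀ hα, one_smul]; abel
      have hx0 : x ≠ 0 := by rintro h; rw [hαd, h] at hα; simp at hα
      have hgx0 : g x ≠ 0 := by rw [← norm_ne_zero_iff, hn]; simpa using hx0
      obtain ⟨d, hd⟩ := hhg b hb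
      obtain ⟨d', hd'⟩ := cs_eq (x := g x) (y := g (e + b)) hgx0 (by
        rw [hg, hn, hn]
        conv_lhs => rw [hx]
        conv_rhs => rw [hx]
        rw [inner_smul_left, norm_mul, RCLike.norm_conj, nis, norm_smul]; ring)
      refine ⟨κ α * (d * d'), ?_⟩
      have : V (e + b) = f + τ b := by
        simp only [hV, inner_add_right, hb, hee, add_zero, map_one, one_smul, add_sub_cancel_left]
      conv_lhs => rw [hx]
      rw [hVsm, this, hd, hd', smul_smul, smul_smul, mul_assoc]
  refine ⟨V, κ, hκ, hVadd, hVsm, hVn, ?_, hVg⟩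
  intro u
  obtain ⟨x, c, hu⟩ := hs u
  obtain ⟨d, hd⟩ := hVg x
  by_cases hx0 : x = 0
  · refine ⟨0, ?_⟩
    have h1 : g x = 0 := by rw [← norm_eq_zero, hn, hx0, norm_zero]
    rw [hu, h1, smul_zero, ← norm_eq_zero, hVn, norm_zero]
  · have hd0 : d ≠ 0 := by
      rintro rfl
      rw [zero_smul, ← norm_eq_zero, hVn] at hd; exact hx0 (norm_eq_zero.1 hd)
    obtain ⟨c', hc'⟩ := hκs (c * d⁻¹)
    refine ⟨c' • x, ?_⟩
    rw [hVsm, hc', hd, smul_smul, mul_assoc, inv_mul_cancel₀ hd0, mul_one, hu]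

end Wigner

section Variance

variable {H : Type*} [NormedAddCommGroup H] [InnerProductSpace ℂ H] [CompleteSpace H]

lemma polar_aux {B C E : H →L[ℂ] H}
    (h : ∀ x, ⟪x, B x⟫_ℂ * ⟪x, C x⟫_ℂ = ⟪x, x⟫_ℂ * ⟪x, E x⟫_ℂ) (x y : H) :
    (⟪y, B x⟫_ℂ * ⟪y, C x⟫_ℂ - ⟪y, x⟫_ℂ * ⟪y, E x⟫_ℂ) +
      (⟪x, B y⟫_ℂ * ⟪x, C y⟫_ℂ - ⟪x, y⟫_ℂ * ⟪x, E y⟫_ℂ) = 0 := by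
  have h1 := h (x + y)
  have h2 := h (x + (-1 : ℂ) • y)
  have h3 := h (x + Complex.I • y)
  have h4 := h (x + (-Complex.I) • y)
  simp only [map_add, map_smul, inner_add_left, inner_add_right, inner_smul_left, inner_smul_right,
    map_neg, map_one, Complex.conj_I] at h1 h2 h3 h4
  have hI : Complex.I ^ 2 = -1 := Complex.I_sq
  have hI4 : Complex.I ^ 4 = 1 := Complex.I_pow_four
  have hI3 : Complex.I ^ 3 = -Complex.I := Complex.I_pow_three
  ring_nf at h1 h2 h3 h4
  simp only [hI, hI3, hI4] at h1 h2 h3 h4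
  linear_combination (h1 + h2 - h3 - h4) / 4

lemma polar {B C E : H →L[ℂ] H}
    (h : ∀ x, ⟪x, B x⟫_ℂ * ⟪x, C x⟫_ℂ = ⟪x, x⟫_ℂ * ⟪x, E x⟫_ℂ) (x y : H) :
    ⟪y, B x⟫_ℂ * ⟪y, C x⟫_ℂ = ⟪y, x⟫_ℂ * ⟪y, E x⟫_ℂ := by
  have h1 := polar_aux h x y
  have h2 := polar_aux h x ((1 + Complex.I) • y)
  simp only [map_smul, inner_smul_left, inner_smul_right, map_add, map_one, Complex.conj_I] at h2
  have hI : Complex.I ^ 2 = -1 := Complex.I_sq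
  ring_nf at h2
  simp only [hI] at h2
  have h3 : Complex.I * Complex.I = -1 := Complex.I_mul_I
  linear_combination (1 / 2) * h1 + (Complex.I / 4) * h2 +
    (1 / 2) * (⟪y, B x⟫_ℂ * ⟪y, C x⟫_ℂ - ⟪y, x⟫_ℂ * ⟪y, E x⟫_ℂ - ⟪x, B y⟫_ℂ * ⟪x, C y⟫_ℂ +
      ⟪x, y⟫_ℂ * ⟪x, E y⟫_ℂ) * h3

lemma eigen_or {B C E : H →L[ℂ] H}
    (h : ∀ x, ⟪x, B x⟫_ℂ * ⟪x, C x⟫_ℂ = ⟪x, x⟫_ℂ * ⟪x, E x⟫_ℂ) (x : H) :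
    (∃ k : ℂ, B x = k • x) ∨ ∃ k : ℂ, C x = k • x := by
  by_cases hx0 : x = 0
  · left; exact ⟨0, by simp [hx0]⟩
  have hxx : ⟪x, x⟫_ℂ ≠ 0 := fun h => hx0 (inner_self_eq_zero.1 h)
  have key : ∀ y, ⟪y, x⟫_ℂ = 0 → ⟪y, B x⟫_ℂ * ⟪y, C x⟫_ℂ = 0 := by
    intro y hy; rw [polar h x y, hy, zero_mul]
  set k := ⟪x, B x⟫_ℂ / ⟪x, x⟫_ℂ with hk
  set l := ⟪x, C x⟫_ℂ / ⟪x, x⟫_ℂ with hl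
  set b := B x - k • x with hb
  set c := C x - l • x with hc
  have hxb : ⟪x, b⟫_ℂ = 0 := by
    rw [hb, inner_sub_right, inner_smul_right, hk, div_mul_cancel₀ _ hxx, sub_self]
  have hxc : ⟪x, c⟫_ℂ = 0 := by
    rw [hc, inner_sub_right, inner_smul_right, hl, div_mul_cancel₀ _ hxx, sub_self]
  have hB : B x = b + k • x := by rw [hb]; abel
  have hC : C x = c + l • x := by rw [hc]; abel
  have key2 : ∀ y, ⟪y, x⟫_ℂ = 0 → ⟪y, b⟫_ℂ * ⟪y, c⟫_ℂ = 0 := by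
    intro y hy
    have := key y hy
    rw [hB, hC, inner_add_right, inner_add_right, inner_smul_right, inner_smul_right, hy] at this
    simpa using this
  have hbx := inner_zero_symm hxb
  have hcx := inner_zero_symm hxc
  by_cases hb0 : b = 0
  · left; exact ⟨k, by rw [hB, hb0, zero_add]⟩
  by_cases hc0 : c = 0
  · right; exact ⟨l, by rw [hC, hc0, zero_add]⟩
  exfalso
  have hbb : ⟪b, b⟫_ℂ ≠ 0 := fun h => hb0 (inner_self_eq_zero.1 h)
  have hcc : ⟪c, c⟫_ℂ ≠ 0 := fun h => hc0 (inner_self_eq_zero.1 h)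
  have h1 := (mul_eq_zero.1 (key2 b hbx)).resolve_left hbb
  have h2 := key2 (b + c) (by rw [inner_add_left, hbx, hcx, add_zero])
  rw [inner_add_left, inner_add_left, h1, inner_zero_symm h1, add_zero, zero_add] at h2
  exact (mul_ne_zero hbb hcc) h2

lemma two_t1 {B : H →L[ℂ] H} {x y : H} (hli : ∀ α β : ℂ, α • x + β • y = 0 → α = 0 ∧ β = 0)
    {b k k' t s : ℂ} (hts : t ≠ s) (hy : B y = b • y) (h1 : B (x + t • y) = k • (x + t • y))
    (h2 : B (x + s • y) = k' • (x + s • y)) : ∃ c : ℂ, B x = c • x := by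
  rw [map_add, map_smul, hy] at h1 h2
  obtain ⟨e1, e2⟩ := hli (k - k') (k * t - k' * s - (t - s) * b) (by
    have : k • (x + t • y) - k' • (x + s • y) - ((t - s) * b) • y = 0 := by
      rw [← h1, ← h2]; module
    rw [← this]; module)
  have e3 : k' = k := by linear_combination -e1
  rw [e3] at e2
  have e4 : k = b := by
    have : (t - s) * (k - b) = 0 := by linear_combination e2
    rcases mul_eq_zero.1 this with h | h
    · exact absurd (sub_eq_zero.1 h) hts
    · exact sub_eq_zero.1 h
  refine ⟨b, ?_⟩
  have : B x = k • (x + t • y) - t • b • y := by rw [← h1]; abel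
  rw [this, e4]; module

lemma two_t2 {C : H →L[ℂ] H} {x y : H} (hli : ∀ α β : ℂ, α • x + β • y = 0 → α = 0 ∧ β = 0)
    {c k k' t s : ℂ} (hts : t ≠ s) (ht : t ≠ 0) (hs : s ≠ 0) (hx : C x = c • x)
    (h1 : C (x + t • y) = k • (x + t • y))
    (h2 : C (x + s • y) = k' • (x + s • y)) : ∃ c : ℂ, C y = c • y := by
  refine two_t1 (x := y) (y := x) (t := t⁻¹) (s := s⁻¹) (k := k) (k' := k') (b := c) ?_ ?_ hx ?_ ?_
  · intro α β h
    have := hli β α (by rw [add_comm]; exact h)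
    exact ⟨this.2, this.1⟩
  · intro h; exact hts (inv_injective h)
  · rw [show y + t⁻¹ • x = t⁻¹ • (x + t • y) by
      rw [smul_add, smul_smul, inv_mul_cancel₀ ht, one_smul, add_comm], map_smul, h1, smul_comm]
  · rw [show y + s⁻¹ • x = s⁻¹ • (x + s • y) by
      rw [smul_add, smul_smul, inv_mul_cancel₀ hs, one_smul, add_comm], map_smul, h2, smul_comm]

lemma all_eigen_or {B C : H →L[ℂ] H}
    (h : ∀ x, (∃ k : ℂ, B x = k • x) ∨ ∃ k : ℂ, C x = k • x) :
    (∀ x, ∃ k : ℂ, B x = k • x) ∨ (∀ x, ∃ k : ℂ, C x = k • x) := by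
  by_contra hcon
  push Not at hcon
  obtain ⟨⟨x, hx⟩, y, hy⟩ := hcon
  obtain ⟨c, hc⟩ := (h x).resolve_left (by push Not; exact hx)
  obtain ⟨b, hb⟩ := (h y).resolve_right (by push Not; exact hy)
  have hli : ∀ α β : ℂ, α • x + β • y = 0 → α = 0 ∧ β = 0 := by
    intro α β he
    have hβ : β = 0 := by
      by_contra hβ
      have : y = (-(β⁻¹ * α)) • x := by
        have : β • y = -(α • x) := by rw [eq_neg_iff_add_eq_zero, add_comm]; exact he
        rw [← one_smul ℂ y, ← inv_mul_cancel₀ hβ, mul_smul, this]; module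
      exact hy c (by rw [this, map_smul, hc, smul_comm])
    refine ⟨?_, hβ⟩
    rw [hβ, zero_smul, add_zero] at he
    rcases smul_eq_zero.1 he with h | h
    · exact h
    · exact absurd (by rw [h]; simp) (hx 0)
  have n1 : ∀ t s : ℂ, t ≠ s → (∃ k : ℂ, B (x + t • y) = k • (x + t • y)) →
      (∃ k : ℂ, B (x + s • y) = k • (x + s • y)) → False := by
    rintro t s hts ⟨k, h1⟩ ⟨k', h2⟩
    obtain ⟨c, hc⟩ := two_t1 hli hts hb h1 h2
    exact hx c hc
  have n2 : ∀ t s : ℂ, t ≠ s → t ≠ 0 → s ≠ 0 → (∃ k : ℂ, C (x + t • y) = k • (x + t • y)) →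
      (∃ k : ℂ, C (x + s • y) = k • (x + s • y)) → False := by
    rintro t s hts ht hs ⟨k, h1⟩ ⟨k', h2⟩
    obtain ⟨c, hc⟩ := two_t2 hli hts ht hs hc h1 h2
    exact hy c hc
  have a12 : (1 : ℂ) ≠ 2 := by norm_num
  have a13 : (1 : ℂ) ≠ 3 := by norm_num
  have a23 : (2 : ℂ) ≠ 3 := by norm_num
  have z1 : (1 : ℂ) ≠ 0 := by norm_num
  have z2 : (2 : ℂ) ≠ 0 := by norm_num
  have z3 : (3 : ℂ) ≠ 0 := by norm_num
  rcases h (x + (1 : ℂ) • y) with h1 | h1 <;> rcases h (x + (2 : ℂ) • y) with h2 | h2 <;>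
    rcases h (x + (3 : ℂ) • y) with h3 | h3
  · exact n1 _ _ a12 h1 h2
  · exact n1 _ _ a12 h1 h2
  · exact n1 _ _ a13 h1 h3
  · exact n2 _ _ a23 z2 z3 h2 h3
  · exact n1 _ _ a23 h2 h3
  · exact n2 _ _ a13 z1 z3 h1 h3
  · exact n2 _ _ a12 z1 z2 h1 h2
  · exact n2 _ _ a12 z1 z2 h1 h2

lemma vr_complex {A : H →L[ℂ] H} (hA : IsSelfAdjoint A) (x : H) :
    (vr A x : ℂ) = ⟪x, x⟫_ℂ * ⟪x, A (A x)⟫_ℂ - ⟪x, A x⟫_ℂ ^ 2 := by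
  rw [vr]
  push_cast
  rw [nsq, nsq, sa_real hA, sa_inner hA]

/-- operators with the same variance -/
lemma eq_of_vr [Nontrivial H] {A A' : H →L[ℂ] H} (hA : IsSelfAdjoint A) (hA' : IsSelfAdjoint A')
    (h : ∀ x, vr A x = vr A' x) : ∃ (s c : ℝ), (s = 1 ∨ s = -1) ∧ A' = (s : ℂ) • A + (c : ℂ) • 1 := by
  have h1 : ∀ x, ⟪x, (A - A') x⟫_ℂ * ⟪x, (A + A') x⟫_ℂ = ⟪x, x⟫_ℂ * ⟪x, (A * A - A' * A') x⟫_ℂ := by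
    intro x
    have := congrArg (fun r : ℝ => (r : ℂ)) (h x)
    simp only [vr_complex hA, vr_complex hA'] at this
    simp only [sub_apply, add_apply, mul_apply_eq_comp, inner_add_right, inner_sub_right]
    linear_combination -this
  rcases all_eigen_or (eigen_or h1) with h2 | h2
  · obtain ⟨c, hc⟩ := scalar_of_all_eigen h2
    have hs := sa_scalar_real (c := c) (by rw [← hc]; exact hA.sub hA')
    refine ⟨1, -c.re, Or.inl rfl, ?_⟩
    have : A' = A - c • 1 := by rw [← hc]; abel
    rw [this]; push_cast; rw [hs]; module
  · obtain ⟨c, hc⟩ := scalar_of_all_eigen h2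
    have hs := sa_scalar_real (c := c) (by rw [← hc]; exact hA.add hA')
    refine ⟨-1, c.re, Or.inr rfl, ?_⟩
    have : A' = c • 1 - A := by rw [← hc]; abel
    rw [this]; push_cast; rw [hs]; module

end Variance

section Rep

variable {H : Type*} [NormedAddCommGroup H] [InnerProductSpace ℂ H] [CompleteSpace H]

/-- surjective isometric linear or conjugate-linear map -/
structure VM (V : H → H) (κ : ℂ →+* ℂ) : Prop where
  kap : κ = RingHom.id ℂ ∨ κ = starRingEnd ℂ
  add : ∀ x y, V (x + y) = V x + V y
  smul : ∀ (c : ℂ) x, V (c • x) = κ c • V x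
  norm : ∀ x, ‖V x‖ = ‖x‖
  surj : Function.Surjective V

variable {V : H → H} {κ : ℂ →+* ℂ} {F : (H →L[ℂ] H) → (H →L[ℂ] H)}

lemma VM.real (hV : VM V κ) (r : ℝ) : κ (r : ℂ) = r := by
  rcases hV.kap with rfl | rfl
  · rfl
  · exact Complex.conj_ofReal r

lemma VM.re (hV : VM V κ) (z : ℂ) : (κ z).re = z.re := by
  rcases hV.kap with rfl | rfl
  · rfl
  · exact Complex.conj_re z

lemma VM.sub (hV : VM V κ) (x y : H) : V (x - y) = V x - V y := by
  rw [eq_sub_iff_add_eq, ← hV.add, sub_add_cancel]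

lemma VM.inj (hV : VM V κ) : Function.Injective V := by
  intro x y h
  rw [← sub_eq_zero, ← norm_eq_zero, ← hV.norm, hV.sub, h, sub_self, norm_zero]

lemma VM.inner_re (hV : VM V κ) (x y : H) : (⟪V x, V y⟫_ℂ).re = (⟪x, y⟫_ℂ).re := by
  have h1 := hV.norm (x + y)
  have h2 : ‖V (x + y)‖ ^ 2 = ‖x + y‖ ^ 2 := by rw [h1]
  rw [hV.add, @norm_add_sq ℂ, @norm_add_sq ℂ, hV.norm, hV.norm] at h2
  simp only [RCLike.re_to_complex] at h2
  linarith

lemma VM.inner (hV : VM V κ) (x y : H) : ⟪V x, V y⟫_ℂ = κ ⟪x, y⟫_ℂ := by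
  have h1 := hV.inner_re x y
  have h2 := hV.inner_re x (Complex.I • y)
  rw [hV.smul, inner_smul_right, inner_smul_right] at h2
  rcases hV.kap with rfl | rfl
  · simp only [RingHom.id_apply, Complex.I_mul_re] at h2
    apply Complex.ext h1
    simpa using h2
  · simp only [Complex.conj_I, neg_mul, Complex.neg_re, Complex.I_mul_re] at h2
    apply Complex.ext
    · rw [h1, Complex.conj_re]
    · rw [Complex.conj_im]; linarith

lemma vr_smul (B : H →L[ℂ] H) (d : ℂ) (x : H) : vr B (d • x) = ‖d‖ ^ 4 * vr B x := by
  simp only [vr, map_smul, inner_smul_left, inner_smul_right, norm_smul]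
  rw [← mul_assoc, Complex.mul_conj', ← Complex.ofReal_pow, Complex.re_ofReal_mul]
  ring

lemma VM.rep [Nontrivial H] (hV : VM V κ) {A B : H →L[ℂ] H} (hA : IsSelfAdjoint A)
    (hB : IsSelfAdjoint B) (h : ∀ x, vr A x = vr B (V x)) :
    ∃ (s c : ℝ), (s = 1 ∨ s = -1) ∧ ∀ x, B (V x) = (s : ℂ) • V (A x) + (c : ℂ) • V x := by
  choose W hW using hV.surj
  have hWV : ∀ x, W (V x) = x := fun x => hV.inj (hW _)
  let L : H →ₗ[ℂ] H :=
    { toFun := fun x => W (B (V x))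
      map_add' := by
        intro x y; apply hV.inj; simp only [hW, hV.add, map_add]
      map_smul' := by
        intro c x; apply hV.inj
        simp only [RingHom.id_apply, hW, hV.smul, map_smul] }
  let A' : H →L[ℂ] H := L.mkContinuous ‖B‖ (by
    intro x
    show ‖W (B (V x))‖ ≤ _
    rw [← hV.norm, hW, ← hV.norm x]; exact B.le_opNorm _)
  have hA'V : ∀ x, V (A' x) = B (V x) := fun x => hW _
  have hκi : Function.Injective κ := κ.injective
  have hA' : IsSelfAdjoint A' := by
    apply sa_of; intro x y
    apply hκi
    rw [← hV.inner, ← hV.inner, hA'V, hA'V, sa_inner hB]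
  obtain ⟨s, c, hs, he⟩ := eq_of_vr hA hA' (by
    intro x
    rw [h x, vr, vr, ← hA'V, hV.norm, hV.norm, hV.inner, hV.re])
  refine ⟨s, c, hs, fun x => ?_⟩
  rw [← hA'V, he]
  simp only [add_apply, smul_apply, one_apply_eq_self, hV.add, hV.smul, hV.real]

lemma Pres.exists_V (hF : Pres F) (hd : Dim3 H) : ∃ (V : H → H) (κ : ℂ →+* ℂ) , VM V κ ∧
    ∀ A, IsSelfAdjoint A → ∃ (s c : ℝ), (s = 1 ∨ s = -1) ∧
      ∀ x, F A (V x) = (s : ℂ) • V (A x) + (c : ℂ) • V x := by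
  haveI := hd.nontrivial
  obtain ⟨g0, h1, h2, h3, h4⟩ := hF.exists_wig hd
  set g : H → H := fun x => (‖x‖ : ℂ) • g0 (((‖x‖⁻¹ : ℝ) : ℂ) • x) with hg
  have hx' : ∀ x : H, x ≠ 0 → x = (‖x‖ : ℂ) • ((‖x‖⁻¹ : ℝ) : ℂ) • x := by
    intro x hx
    rw [smul_smul, Complex.ofReal_inv, mul_inv_cancel₀ (by simpa using hx), one_smul]
  have hgw : ∀ x y, ‖⟪g x, g y⟫_ℂ‖ = ‖⟪x, y⟫_ℂ‖ := by
    intro x y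
    by_cases hx : x = 0
    · simp [hg, hx]
    by_cases hy : y = 0
    · simp [hg, hy]
    simp only [hg, inner_smul_left, inner_smul_right, norm_mul, h2 _ _ (norm_unit hx) (norm_unit hy)]
    have := norm_ne_zero_iff.2 hx
    have := norm_ne_zero_iff.2 hy
    simp
    field_simp
  have hgs : ∀ u, ∃ x, ∃ c : ℂ, u = c • g x := by
    intro u
    by_cases hu : u = 0
    · exact ⟨0, 0, by simp [hu]⟩
    obtain ⟨x, hx, c, hc⟩ := h3 _ (norm_unit hu)
    refine ⟨x, ‖u‖ * c, ?_⟩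
    have : g x = g0 x := by simp [hg, hx]
    rw [this, mul_smul, ← hc]
    exact hx' u hu
  obtain ⟨e, he⟩ := exists_unit (H := H)
  obtain ⟨V, κ, hk, ha, hs, hn, hsu, hVg⟩ := wigner hgw hgs he
  have hV : VM V κ := ⟨hk, ha, hs, hn, hsu⟩
  refine ⟨V, κ, hV, fun A hA => hV.rep hA (hF.sa A hA) ?_⟩
  intro x
  by_cases hx : x = 0
  · have : V x = 0 := by rw [← norm_eq_zero, hn, hx, norm_zero]
    rw [this, hx]; simp [vr]
  obtain ⟨d, hd⟩ := hVg x
  have hdn : ‖d‖ = 1 := by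
    have := congrArg norm hd
    rw [norm_smul, hn, norm_of_wig hgw] at this
    have h0 := norm_ne_zero_iff.2 hx
    field_simp at this
    exact this.symm
  rw [hd, vr_smul, hdn, hg]
  simp only
  rw [vr_smul, ← h4 A hA _ (norm_unit hx)]
  conv_lhs => rw [hx' x hx, vr_smul]
  simp

end Rep

section Signs

variable {H : Type*} [NormedAddCommGroup H] [InnerProductSpace ℂ H] [CompleteSpace H]

lemma cm_re {A B : H →L[ℂ] H} (hA : IsSelfAdjoint A) (hB : IsSelfAdjoint B) (x : H) :
    (⟪x, cm A B x⟫_ℂ).re = 0 := by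
  simp only [cm, sub_apply, mul_apply_eq_comp, inner_sub_right, Complex.sub_re]
  rw [← sa_inner hA x (B x), ← sa_inner hB x (A x)]
  have := inner_re_symm (𝕜 := ℂ) (A x) (B x)
  simp only [RCLike.re_to_complex] at this
  linarith

lemma Gap.nhds {T : H →L[ℂ] H} (h : Gap T) : ∀ᶠ T' in nhds T, Gap T' := by
  obtain ⟨θ, hθ, b, hb, ρ, h1, h2⟩ := h
  set d := θ * (⟪b, T b⟫_ℂ).im - ρ with hd
  have hd0 : 0 < d := by linarith
  filter_upwards [Metric.ball_mem_nhds T (by positivity : 0 < d / 3)] with T' hT'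
  rw [Metric.mem_ball, dist_eq_norm] at hT'
  have key : ∀ z : H, ‖z‖ = 1 → |θ * (⟪z, T' z⟫_ℂ).im - θ * (⟪z, T z⟫_ℂ).im| ≤ d / 3 := by
    intro z hz
    have e : θ * (⟪z, T' z⟫_ℂ).im - θ * (⟪z, T z⟫_ℂ).im = θ * (⟪z, (T' - T) z⟫_ℂ).im := by
      rw [sub_apply, inner_sub_right, Complex.sub_im]; ring
    rw [e, abs_mul]
    have h3 : |θ| = 1 := by rcases hθ with rfl | rfl <;> simp
    rw [h3, one_mul]
    refine (Complex.abs_im_le_norm _).trans ((norm_inner_le_norm _ _).trans ?_)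
    have := (T' - T).le_opNorm z
    rw [hz] at this ⊢
    linarith
  refine ⟨θ, hθ, b, hb, ρ + d / 3, ?_, ?_⟩
  · have := abs_le.1 (key b hb)
    linarith [this.1]
  · intro z hz
    have := abs_le.1 (key z hz)
    linarith [this.1, h2 z hz]

/-- the rank two self-adjoint operator attached to a pair -/
noncomputable def NN (u v : H) : H →L[ℂ] H := Complex.I • (ro v u - ro u v)

lemma sa_NN (u v : H) : IsSelfAdjoint (NN u v) := sa_ro_sub v u

lemma NN_notD (hd : Dim3 H) {u v : H} (h : LinearIndependent ℂ ![u, v]) : NN u v ∉ DSet H := by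
  intro hD
  rw [LinearIndependent.pair_iff] at h
  obtain ⟨P, α, δ, hP, hPP, hN⟩ := hD
  have hPP' : ∀ x, P (P x) = P x := fun x => congrArg (fun f : H →L[ℂ] H => f x) hPP
  have hNz : ∀ z, NN u v z = (α : ℂ) • P z + (δ : ℂ) • z := by intro z; rw [hN]; simp
  have hNa : ∀ z, NN u v z = (Complex.I * ⟪u, z⟫_ℂ) • v - (Complex.I * ⟪v, z⟫_ℂ) • u := by
    intro z; simp [NN, smul_sub, smul_smul]
  have hq : ∀ z, NN u v (NN u v z) = ((α : ℂ) + 2 * δ) • NN u v z - ((δ : ℂ) * (α + δ)) • z := by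
    intro z
    rw [hNz z, map_add, map_smul, map_smul, hNz (P z), hNz z, hPP']
    module
  obtain ⟨z, hz, huz, hvz⟩ := hd u v
  have h0 : NN u v z = 0 := by rw [hNa, huz, hvz]; simp
  have hz0 : z ≠ 0 := by rintro rfl; simp at hz
  have hc : (δ : ℂ) * (α + δ) = 0 := by
    have := hq z
    rw [h0, map_zero, smul_zero, zero_sub, eq_comm, neg_eq_zero, smul_eq_zero] at this
    exact this.resolve_right hz0
  set β : ℂ := (α : ℂ) + 2 * δ with hβ
  -- `N u - β u` is in the span and in the kernel
  set w := NN u v u - β • u with hw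
  have hw0 : NN u v w = 0 := by
    rw [hw, map_sub, map_smul, hq u, hc]; simp
  rw [hNa w, sub_eq_add_neg, ← neg_smul] at hw0
  have h1 := h _ _ (by rw [add_comm]; exact hw0)
  have huw : ⟪u, w⟫_ℂ = 0 := by simpa using h1.2
  have hvw : ⟪v, w⟫_ℂ = 0 := by simpa using h1.1
  have hww : w = 0 := by
    have : ⟪w, w⟫_ℂ = 0 := by
      have e : ∀ y, ⟪w, y⟫_ℂ = ⟪NN u v u - β • u, y⟫_ℂ := fun y => by rw [hw]
      rw [e w, hNa u]
      simp only [inner_sub_left, inner_smul_left, huw, hvw, mul_zero, sub_zero]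
    exact inner_self_eq_zero.1 this
  rw [hw, hNa u] at hww
  have h2 := (h (-(Complex.I * ⟪v, u⟫_ℂ) - β) (Complex.I * ⟪u, u⟫_ℂ) (by
    rw [← hww]; module)).2
  have h3 : u = 0 := by simpa using h2
  have := (h 1 0 (by simp [h3])).1
  simp at this

lemma NN_cont (u v a b : H) : Continuous fun t : ℝ => NN (u + (t : ℂ) • a) (v + (t : ℂ) • b) := by
  have e : (fun t : ℝ => NN (u + (t : ℂ) • a) (v + (t : ℂ) • b)) = fun t : ℝ =>
      NN u v + (t : ℂ) • (NN a v + NN u b) + ((t : ℂ) * t) • NN a b := by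
    funext t; ext z
    simp only [NN, add_apply, smul_apply, sub_apply, ro_apply, inner_add_left, inner_smul_left,
      Complex.conj_ofReal]
    module
  rw [e]
  fun_prop

/-- abstract sign function -/
structure Sgn (σ : (H →L[ℂ] H) → ℝ) : Prop where
  gap : ∀ A B, IsSelfAdjoint A → IsSelfAdjoint B → Gap (cm A B) → σ A = σ B

variable {σ : (H →L[ℂ] H) → ℝ}

lemma Sgn.loc (hs : Sgn σ) {A : H →L[ℂ] H} (hA : IsSelfAdjoint A) (hD : A ∉ DSet H) :
    ∀ᶠ A' in nhds A, IsSelfAdjoint A' → σ A' = σ A := by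
  obtain ⟨B, hB, hG⟩ := exists_gap hA hD
  have hc : Continuous fun A' : H →L[ℂ] H => cm A' B := by
    unfold cm; fun_prop
  filter_upwards [hc.continuousAt.eventually hG.nhds] with A' h' hA'
  rw [hs.gap _ _ hA' hB h', hs.gap _ _ hA hB hG]

lemma Sgn.path (hs : Sgn σ) (hd : Dim3 H) (u v a b : H)
    (h : ∀ t : ℝ, LinearIndependent ℂ ![u + (t : ℂ) • a, v + (t : ℂ) • b]) :
    σ (NN u v) = σ (NN (u + a) (v + b)) := by
  have hl : IsLocallyConstant fun t : ℝ => σ (NN (u + (t : ℂ) • a) (v + (t : ℂ) • b)) := by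
    rw [IsLocallyConstant.iff_eventually_eq]
    intro t
    have := (NN_cont u v a b).continuousAt.eventually (hs.loc (sa_NN _ _) (NN_notD hd (h t)))
    filter_upwards [this] with t' ht'
    exact ht' (sa_NN _ _)
  have := hl.apply_eq_of_preconnectedSpace 0 1
  simpa using this

lemma coef_zero {u v w : H} (hw : w ∉ Submodule.span ℂ {u, v}) {a b c : ℂ}
    (h : a • u + b • v + c • w = 0) : c = 0 := by
  by_contra hc
  apply hw
  rw [Submodule.mem_span_pair]
  refine ⟨-(c⁻¹ * a), -(c⁻¹ * b), ?_⟩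
  have : w = c⁻¹ • (c • w) := by rw [smul_smul, inv_mul_cancel₀ hc, one_smul]
  rw [this]
  have h2 : c • w = -(a • u + b • v) := by rw [eq_neg_iff_add_eq_zero, add_comm]; exact h
  rw [h2]; module

lemma Sgn.step1 (hs : Sgn σ) (hd : Dim3 H) {u v w : H} (h : LinearIndependent ℂ ![u, v])
    (hw : w ∉ Submodule.span ℂ {u, v}) : σ (NN u v) = σ (NN u w) := by
  have := hs.path hd u v 0 (w - v) (by
    intro t
    rw [LinearIndependent.pair_iff] at h ⊢
    intro α β he
    have h1 : β * t = 0 := coef_zero hw (a := α) (b := β - β * t) (by rw [← he]; module)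
    apply h
    have : α • u + β • v = (α • (u + (t : ℂ) • 0) + β • (v + (t : ℂ) • (w - v)))
      + (β * t) • (v - w) := by module
    rw [this, he, h1]; simp)
  simpa using this

lemma Sgn.step2 (hs : Sgn σ) (hd : Dim3 H) {u u' w : H} (h : LinearIndependent ℂ ![u, u'])
    (hw : w ∉ Submodule.span ℂ {u, u'}) : σ (NN u w) = σ (NN u' w) := by
  have := hs.path hd u w (u' - u) 0 (by
    intro t
    rw [LinearIndependent.pair_iff] at h ⊢
    intro α β he
    have h1 : β = 0 := coef_zero hw (a := α - α * t) (b := α * t) (by rw [← he]; module)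
    have h2 := h (α - α * t) (α * t) (by rw [← he, h1]; module)
    refine ⟨?_, h1⟩
    linear_combination h2.1 + h2.2)
  simpa using this

lemma exists_avoid (hdim : 3 ≤ Module.rank ℂ H) (a b c d e f : H) :
    ∃ w, w ∉ Submodule.span ℂ {a, b} ∧ w ∉ Submodule.span ℂ {c, d} ∧
      w ∉ Submodule.span ℂ {e, f} := by
  classical
  have := Subspace.biUnion_ne_univ_of_top_notMem (k := ℂ) (E := H)
    (s := {Submodule.span ℂ {a, b}, Submodule.span ℂ {c, d}, Submodule.span ℂ {e, f}}) (by
      simp only [Finset.mem_insert, Finset.mem_singleton, not_or]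
      exact ⟨(exists_notMem_span hdim _ _).symm, (exists_notMem_span hdim _ _).symm,
        (exists_notMem_span hdim _ _).symm⟩)
  rw [Set.ne_univ_iff_exists_notMem] at this
  obtain ⟨w, hw⟩ := this
  refine ⟨w, ?_⟩
  simpa using hw

lemma Sgn.conn1 (hs : Sgn σ) (hd : Dim3 H) (hdim : 3 ≤ Module.rank ℂ H) {u v u' v' : H}
    (h : LinearIndependent ℂ ![u, v]) (h' : LinearIndependent ℂ ![u', v'])
    (hu : LinearIndependent ℂ ![u, u']) : σ (NN u v) = σ (NN u' v') := by
  obtain ⟨w, h1, h2, h3⟩ := exists_avoid hdim u v u' v' u u'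
  rw [hs.step1 hd h h1, hs.step2 hd hu h3, hs.step1 hd h' h2]

lemma indep_out {u v w : H} (h : LinearIndependent ℂ ![u, v])
    (hw : w ∉ Submodule.span ℂ {u, v}) : LinearIndependent ℂ ![w, u] := by
  rw [LinearIndependent.pair_iff] at h ⊢
  intro α β he
  have h1 : α = 0 := coef_zero hw (a := β) (b := 0) (by rw [← he]; module)
  refine ⟨h1, (h β 0 ?_).1⟩
  rw [← he, h1]; module

lemma indep_swap {u v : H} (h : LinearIndependent ℂ ![u, v]) : LinearIndependent ℂ ![v, u] := by
  rw [LinearIndependent.pair_iff] at h ⊢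
  intro α β he
  exact (h β α (by rw [← he, add_comm])).symm

lemma Sgn.conn (hs : Sgn σ) (hd : Dim3 H) (hdim : 3 ≤ Module.rank ℂ H) {u v u' v' : H}
    (h : LinearIndependent ℂ ![u, v]) (h' : LinearIndependent ℂ ![u', v']) :
    σ (NN u v) = σ (NN u' v') := by
  obtain ⟨w, h1, h2, -⟩ := exists_avoid hdim u v u' v' u' v'
  have i1 := indep_out h h1
  have i2 := indep_out h' h2
  rw [hs.conn1 hd hdim h i1 (indep_swap i1), hs.conn1 hd hdim i1 h' i2]

lemma Sgn.to_NN (hs : Sgn σ) {A : H →L[ℂ] H} (hA : IsSelfAdjoint A) (hD : A ∉ DSet H) :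
    ∃ u v, LinearIndependent ℂ ![u, v] ∧ σ A = σ (NN u v) := by
  obtain ⟨x, hx⟩ := exists_indep hA hD
  refine ⟨x, A x, ?_, hs.gap A _ hA (sa_NN _ _) (gap_of_indep hA hx)⟩
  rw [LinearIndependent.pair_iff]
  intro s t hst
  have := Fintype.linearIndependent_iff.1 hx ![s, t, 0] (by simpa [Fin.sum_univ_three] using hst)
  exact ⟨this 0, this 1⟩

lemma Sgn.global (hs : Sgn σ) (hd : Dim3 H) (hdim : 3 ≤ Module.rank ℂ H) {A B : H →L[ℂ] H}
    (hA : IsSelfAdjoint A) (hDA : A ∉ DSet H) (hB : IsSelfAdjoint B) (hDB : B ∉ DSet H) :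
    σ A = σ B := by
  obtain ⟨u, v, h, e⟩ := hs.to_NN hA hDA
  obtain ⟨u', v', h', e'⟩ := hs.to_NN hB hDB
  rw [e, e', hs.conn hd hdim h h']

lemma exists_indep_pair (hd : Dim3 H) : ∃ u v : H, LinearIndependent ℂ ![u, v] := by
  obtain ⟨u, hu, -⟩ := hd 0 0
  obtain ⟨v, hv, huv, -⟩ := hd u 0
  refine ⟨u, v, indep_pair (by rintro rfl; simp at hu) ?_⟩
  rintro c rfl
  rw [inner_smul_right, inner_self_one hu, mul_one] at huv
  simp [huv] at hv

end Signs

section Final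

variable {H : Type*} [NormedAddCommGroup H] [InnerProductSpace ℂ H] [CompleteSpace H]
variable {V : H → H} {κ : ℂ →+* ℂ} {F : (H →L[ℂ] H) → (H →L[ℂ] H)}

lemma neg_symm_range {S T : H →L[ℂ] H} (h : numRange S = numRange T)
    (h2 : ∀ z, z ∈ numRange T → -z ∈ numRange S) : SymR S := by
  intro z hz
  exact h2 z (h ▸ hz)

lemma VM.cm_inner (hV : VM V κ) {A B A' B' : H →L[ℂ] H} {s c s' c' : ℝ}
    (hA : ∀ x, A' (V x) = (s : ℂ) • V (A x) + (c : ℂ) • V x)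
    (hB : ∀ x, B' (V x) = (s' : ℂ) • V (B x) + (c' : ℂ) • V x) (x : H) :
    ⟪V x, cm A' B' (V x)⟫_ℂ = (s : ℂ) * s' * κ ⟪x, cm A B x⟫_ℂ := by
  rw [← hV.inner]
  simp only [cm, sub_apply, mul_apply_eq_comp, hA, hB, map_add, map_smul, hV.sub, inner_sub_right,
    inner_add_right, inner_smul_right]
  ring

lemma Pres.sign (hF : Pres F) (hV : VM V κ) {A B : H →L[ℂ] H} {s c s' c' : ℝ} 
    (hAs : IsSelfAdjoint A) (hBs : IsSelfAdjoint B)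
    (hA : ∀ x, F A (V x) = (s : ℂ) • V (A x) + (c : ℂ) • V x)
    (hB : ∀ x, F B (V x) = (s' : ℂ) • V (B x) + (c' : ℂ) • V x) 
    (hs : s = 1 ∨ s = -1) (hs' : s' = 1 ∨ s' = -1) {η : ℝ} (hη : η = 1 ∨ η = -1)
    (hκ : ∀ z : ℂ, z.re = 0 → κ z = η * z) (hG : Gap (cm A B)) : s * s' = η := by
  by_contra hne
  apply hG.not_sym
  have e : s * s' * η = -1 := by
    rcases hs with rfl | rfl <;> rcases hs' with rfl | rfl <;> rcases hη with rfl | rfl <;>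
      norm_num at *
  have e' : (s : ℂ) * s' * η = -1 := by exact_mod_cast e
  apply neg_symm_range (hF.W A B hAs hBs)
  rintro z ⟨y, hy, rfl⟩
  obtain ⟨x, rfl⟩ := hV.surj y
  refine ⟨x, by rw [← hV.norm, hy], ?_⟩
  rw [hV.cm_inner hA hB, hκ _ (cm_re hAs hBs x), ← mul_assoc, e']
  ring

lemma Pres.final (hF : Pres F) (hd : Dim3 H) (hdim : 3 ≤ Module.rank ℂ H) :
    ∃ U : H →L[ℂ] H, U ∈ unitary (H →L[ℂ] H) ∧ ∃ ε : ℝ, (ε = 1 ∨ ε = -1) ∧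
      ∀ A, IsSelfAdjoint A → ∃ s c : ℝ, (s = ε ∨ s = -ε) ∧ (A ∉ DSet H → s = ε) ∧
        F A = (s : ℂ) • (U * A * star U) + (c : ℂ) • 1 := by
  obtain ⟨V, κ, hV, hrep⟩ := hF.exists_V hd
  have hrep' : ∀ A, ∃ s c : ℝ, IsSelfAdjoint A → (s = 1 ∨ s = -1) ∧
      ∀ x, F A (V x) = (s : ℂ) • V (A x) + (c : ℂ) • V x := by
    intro A
    by_cases hA : IsSelfAdjoint A
    · obtain ⟨s, c, h⟩ := hrep A hA; exact ⟨s, c, fun _ => h⟩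
    · exact ⟨0, 0, fun h => absurd h hA⟩
  choose σ c hσ using hrep'
  obtain ⟨u, v, huv⟩ := exists_indep_pair hd
  have hND := NN_notD hd huv
  have hNs := sa_NN u v
  rcases hV.kap with hκ | hκ
  · have hs : Sgn σ := ⟨by
      intro A B hA hB hG
      have := hF.sign hV hA hB (hσ A hA).2 (hσ B hB).2 (hσ A hA).1 (hσ B hB).1 (η := 1) (by simp)
        (by intro z _; simp [hκ]) hG
      rcases (hσ A hA).1 with h | h <;> rcases (hσ B hB).1 with h' | h' <;> rw [h, h'] at this ⊢ <;>
        norm_num at this⟩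
    subst hκ
    let U0 : H ≃ₗᵢ[ℂ] H := LinearIsometryEquiv.ofSurjective
      { toFun := V, map_add' := hV.add, map_smul' := hV.smul, norm_map' := hV.norm } hV.surj
    let U : H →L[ℂ] H := (U0 : H →L[ℂ] H)
    have hUV : ∀ x, U x = V x := fun x => rfl
    have h1 : star U * U = 1 := by
      ext x
      apply ext_inner_left ℂ
      intro y
      rw [mul_apply_eq_comp, ContinuousLinearMap.star_eq_adjoint,
        ContinuousLinearMap.adjoint_inner_right, hUV, hUV, hV.inner]
      rfl
    have h1' : ∀ x, star U (U x) = x := fun x => congrArg (fun f : H →L[ℂ] H => f x) h1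
    have h2 : U * star U = 1 := by
      ext y
      obtain ⟨x, rfl⟩ := hV.surj y
      rw [mul_apply_eq_comp, ← hUV, h1']; rfl
    refine ⟨U, Unitary.mem_iff.2 ⟨h1, h2⟩, σ (NN u v), (hσ _ hNs).1, ?_⟩
    intro A hA
    refine ⟨σ A, c A, ?_, fun hD => hs.global hd hdim hA hD hNs hND, ?_⟩
    · rcases (hσ A hA).1 with h | h <;> rcases (hσ _ hNs).1 with h' | h' <;> rw [h, h'] <;> simp
    · ext y
      obtain ⟨x, rfl⟩ := hV.surj y
      rw [(hσ A hA).2]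
      simp only [add_apply, smul_apply, mul_apply_eq_comp, one_apply_eq_self]
      rw [← hUV x, h1', hUV, hUV]
  · exfalso
    have hs : ∀ A B, IsSelfAdjoint A → IsSelfAdjoint B → Gap (cm A B) → σ A * σ B = -1 := by
      intro A B hA hB hG
      refine hF.sign hV hA hB (hσ A hA).2 (hσ B hB).2 (hσ A hA).1 (hσ B hB).1 (by simp)
        ?_ hG
      intro z hz
      rw [hκ]
      apply Complex.ext <;> simp [hz]
    obtain ⟨B, hB, hG⟩ := exists_gap hNs hND
    have a1 := hs _ _ hNs hB hG
    have a2 := hs _ _ hNs (hNs.add hB) (by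
      convert hG using 1; unfold cm; noncomm_ring)
    have a3 := hs _ _ (hNs.add hB) hB (by
      convert hG using 1; unfold cm; noncomm_ring)
    have : (σ (NN u v) * σ B * σ (NN u v + B)) ^ 2 = -1 := by
      calc _ = (σ (NN u v) * σ B) * (σ (NN u v) * σ (NN u v + B)) * (σ (NN u v + B) * σ B) := by ring
        _ = -1 := by rw [a1, a2, a3]; norm_num
    nlinarith [sq_nonneg (σ (NN u v) * σ B * σ (NN u v + B))]

lemma numRange_neg {T : H →L[ℂ] H} (h : SymR T) : numRange (-T) = numRange T := by
  have key : ∀ z, z ∈ numRange (-T) ↔ -z ∈ numRange T := by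
    intro z
    constructor
    · rintro ⟨x, hx, rfl⟩; exact ⟨x, hx, by simp⟩
    · rintro ⟨x, hx, h⟩; exact ⟨x, hx, by simp [h]⟩
  ext z
  rw [key]
  exact ⟨fun hz => by simpa using h _ hz, fun hz => h _ hz⟩

lemma numRange_conj {T U : H →L[ℂ] H} (h1 : star U * U = 1) (h2 : U * star U = 1) :
    numRange (U * T * star U) = numRange T := by
  have nrm : ∀ W : H →L[ℂ] H, star W * W = 1 → ∀ x, ‖W x‖ = ‖x‖ := by
    intro W hW x
    have : ⟪W x, W x⟫_ℂ = ⟪x, x⟫_ℂ := by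
      rw [← ContinuousLinearMap.adjoint_inner_right, ← ContinuousLinearMap.star_eq_adjoint,
        ← mul_apply_eq_comp, hW]; rfl
    have h : ‖W x‖ ^ 2 = ‖x‖ ^ 2 := by
      apply Complex.ofReal_injective; push_cast; rw [nsq, nsq, this]
    exact (sq_eq_sq₀ (norm_nonneg _) (norm_nonneg _)).1 h
  have hin : ∀ x, ⟪x, (U * T * star U) x⟫_ℂ = ⟪star U x, T (star U x)⟫_ℂ := by
    intro x
    rw [ContinuousLinearMap.star_eq_adjoint, ContinuousLinearMap.adjoint_inner_left]
    rfl
  ext z; constructor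
  · rintro ⟨x, hx, rfl⟩
    exact ⟨star U x, by rw [nrm _ (by rw [star_star]; exact h2), hx], (hin x).symm⟩
  · rintro ⟨x, hx, rfl⟩
    refine ⟨U x, by rw [nrm _ h1, hx], ?_⟩
    have h1' : star U (U x) = x := congrArg (fun f : H →L[ℂ] H => f x) h1
    rw [hin, h1']

lemma cm_conj {A B U : H →L[ℂ] H} (h1 : star U * U = 1) (s c s' c' : ℂ) :
    cm (s • (U * A * star U) + c • 1) (s' • (U * B * star U) + c' • 1) =
      (s * s') • (U * cm A B * star U) := by
  have h1' : ∀ x, star U (U x) = x := fun x => congrArg (fun f : H →L[ℂ] H => f x) h1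
  ext x
  simp only [cm, sub_apply, add_apply, smul_apply, mul_apply_eq_comp, one_apply_eq_self, map_add,
    map_smul, map_sub, h1']
  module

lemma converse {A B U A' B' : H →L[ℂ] H} (h1 : star U * U = 1) (h2 : U * star U = 1)
    {s c s' c' : ℝ} (hA : A' = (s : ℂ) • (U * A * star U) + (c : ℂ) • 1)
    (hB : B' = (s' : ℂ) • (U * B * star U) + (c' : ℂ) • 1)
    (h : s * s' = 1 ∨ s * s' = -1 ∧ (A ∈ DSet H ∨ B ∈ DSet H)) :
    numRange (cm A B) = numRange (cm A' B') := by
  rw [hA, hB, cm_conj h1]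
  rcases h with h | ⟨h, hD⟩
  · have : (s : ℂ) * s' = 1 := by exact_mod_cast h
    rw [this, one_smul, numRange_conj h1 h2]
  · have e : (s : ℂ) * s' = -1 := by exact_mod_cast h
    have hs : SymR (cm A B) := by
      rcases hD with hD | hD
      · exact symR_of_D hD
      · have h3 := symR_of_D (B := A) hD
        have e2 : cm A B = -cm B A := by unfold cm; noncomm_ring
        intro z hz
        rw [e2, numRange_neg h3] at hz ⊢
        exact h3 z hz
    have e3 : (-1 : ℂ) • (U * cm A B * star U) = U * (-cm A B) * star U := by
      rw [neg_one_smul]; noncomm_ring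
    rw [e, e3, numRange_conj h1 h2, numRange_neg hs]

end Final

theorem stmt_3 {H : Type*} [NormedAddCommGroup H] [InnerProductSpace ℂ H] [CompleteSpace H]
    [TopologicalSpace.SeparableSpace H] (hdim : 3 ≤ Module.rank ℂ H)
    (Φ : {T : H →L[ℂ] H // IsSelfAdjoint T} → {T : H →L[ℂ] H // IsSelfAdjoint T})
    (hsurj : Function.Surjective Φ) :
    (∀ A B : {T : H →L[ℂ] H // IsSelfAdjoint T},
        numRange ((A : H →L[ℂ] H) * (B : H →L[ℂ] H) - (B : H →L[ℂ] H) * (A : H →L[ℂ] H)) =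
          numRange ((Φ A : H →L[ℂ] H) * (Φ B : H →L[ℂ] H) -
            (Φ B : H →L[ℂ] H) * (Φ A : H →L[ℂ] H))) ↔
      ∃ U : H →L[ℂ] H, U ∈ unitary (H →L[ℂ] H) ∧
        ∃ ε : ℝ, (ε = 1 ∨ ε = -1) ∧
          ∃ S : Set {T : H →L[ℂ] H // IsSelfAdjoint T},
            (∀ A ∈ S, (A : H →L[ℂ] H) ∈ DSet H) ∧
            ∃ f : {T : H →L[ℂ] H // IsSelfAdjoint T} → ℝ,
              ∀ A : {T : H →L[ℂ] H // IsSelfAdjoint T},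
                (A ∉ S → (Φ A : H →L[ℂ] H) =
                  (ε : ℂ) • (U * (A : H →L[ℂ] H) * star U) + (f A : ℂ) • 1) ∧
                (A ∈ S → (Φ A : H →L[ℂ] H) =
                  (-ε : ℂ) • (U * (A : H →L[ℂ] H) * star U) + (f A : ℂ) • 1) := by
  constructor
  · intro hW
    classical
    have hF : Pres (fun A : H →L[ℂ] H => if h : IsSelfAdjoint A then (Φ ⟨A, h⟩ : H →L[ℂ] H) else 0) := by
      refine ⟨?_, ?_, ?_⟩
      · intro A hA
        simp only [dif_pos hA]
        exact (Φ ⟨A, hA⟩).2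
      · intro B hB
        obtain ⟨A, hA⟩ := hsurj ⟨B, hB⟩
        refine ⟨A, A.2, ?_⟩
        simp only [dif_pos A.2]
        rw [hA]
      · intro A B hA hB
        simp only [dif_pos hA, dif_pos hB]
        exact hW ⟨A, hA⟩ ⟨B, hB⟩
    obtain ⟨U, hU, ε, hε, h⟩ := hF.final (dim3_of_rank hdim) hdim
    have h' : ∀ A : {T : H →L[ℂ] H // IsSelfAdjoint T}, ∃ s c : ℝ, (s = ε ∨ s = -ε) ∧
        ((A : H →L[ℂ] H) ∉ DSet H → s = ε) ∧
        (Φ A : H →L[ℂ] H) = (s : ℂ) • (U * (A : H →L[ℂ] H) * star U) + (c : ℂ) • 1 := by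
      intro A
      obtain ⟨s, c, h1, h2, h3⟩ := h A A.2
      refine ⟨s, c, h1, h2, ?_⟩
      simpa only [dif_pos A.2] using h3
    choose s c h1 h2 h3 using h'
    refine ⟨U, hU, ε, hε, {A | s A ≠ ε}, ?_, c, ?_⟩
    · intro A hA
      by_contra hD
      exact hA (h2 A hD)
    · intro A
      constructor
      · intro hA
        have : s A = ε := by simpa using hA
        rw [h3 A, this]
      · intro hA
        have : s A = -ε := (h1 A).resolve_left hA
        rw [h3 A, this, Complex.ofReal_neg]
  · rintro ⟨U, hU, ε, hε, S, hS, f, hf⟩ A B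
    obtain ⟨u1, u2⟩ := Unitary.mem_iff.1 hU
    have hεε : ε * ε = 1 := by rcases hε with rfl | rfl <;> norm_num
    by_cases hA : A ∈ S
    · have eA : (Φ A : H →L[ℂ] H) = ((-ε : ℝ) : ℂ) • (U * (A : H →L[ℂ] H) * star U)
          + (f A : ℂ) • 1 := by rw [Complex.ofReal_neg]; exact (hf A).2 hA
      by_cases hB : B ∈ S
      · have eB : (Φ B : H →L[ℂ] H) = ((-ε : ℝ) : ℂ) • (U * (B : H →L[ℂ] H) * star U)
          + (f B : ℂ) • 1 := by rw [Complex.ofReal_neg]; exact (hf B).2 hB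
        exact converse u1 u2 eA eB (Or.inl (by linarith))
      · exact converse u1 u2 eA ((hf B).1 hB) (Or.inr ⟨by linarith, Or.inl (hS A hA)⟩)
    · by_cases hB : B ∈ S
      · have eB : (Φ B : H →L[ℂ] H) = ((-ε : ℝ) : ℂ) • (U * (B : H →L[ℂ] H) * star U)
          + (f B : ℂ) • 1 := by rw [Complex.ofReal_neg]; exact (hf B).2 hB
        exact converse u1 u2 ((hf A).1 hA) eB (Or.inr ⟨by linarith, Or.inr (hS B hB)⟩)
      · exact converse u1 u2 ((hf A).1 hA) ((hf B).1 hB) (Or.inl hεε)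
end

section
/- Let H be a complex Hilbert space with dim H ≥ 3 and let A be a bounded self-adjoint operator on H. The following statements are equivalent: (1) A ∈ D(H), i.e. A = αP + δI for some orthogonal projection P and reals α, δ; (2) W(AB − BA) = −W(AB − BA) for every bounded self-adjoint operator B on H; (3) W(AB − BA) = −W(AB − BA) for every bounded self-adjoint operator B on H of rank at most 2. -/
open scoped InnerProductSpace

open InnerProductSpace in
/-- The trace-zero rank three operator `u w* + w u* - 2 v v*`. -/
noncomputable def trioOp {H : Type*} [NormedAddCommGroup H] [InnerProductSpace ℂ H]
    (u v w : H) : H →L[ℂ] H :=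
  rankOne ℂ u w + rankOne ℂ w u - (2 : ℂ) • rankOne ℂ v v

theorem trioOp_apply {H : Type*} [NormedAddCommGroup H] [InnerProductSpace ℂ H]
    (u v w x : H) : trioOp u v w x = ⟪w, x⟫_ℂ • u + ⟪u, x⟫_ℂ • w - (2 * ⟪v, x⟫_ℂ) • v := by
  simp [trioOp, smul_smul]

theorem trioOp_symm {H : Type*} [NormedAddCommGroup H] [InnerProductSpace ℂ H]
    (u v w : H) : (trioOp u v w).toLinearMap.IsSymmetric := by
  intro x y
  simp only [ContinuousLinearMap.coe_coe, trioOp_apply, inner_add_left, inner_sub_left,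
    inner_add_right, inner_sub_right, inner_smul_left, inner_smul_right, map_mul,
    inner_conj_symm, Complex.conj_ofNat]
  ring

theorem key_nonsymm {H : Type*} [NormedAddCommGroup H] [InnerProductSpace ℂ H]
    (u v w : H) (hli : LinearIndependent ℂ ![u, v, w]) (huw : ⟪u, w⟫_ℂ = ⟪v, v⟫_ℂ)
    (hs : ∀ x : H, ‖x‖ = 1 → ∃ y : H, ‖y‖ = 1 ∧
      ⟪y, trioOp u v w y⟫_ℂ = -⟪x, trioOp u v w x⟫_ℂ) : False := by
  let S : Submodule ℂ H := Submodule.span ℂ (Set.range ![u, v, w])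
  have hu : u ∈ S := Submodule.subset_span ⟨0, rfl⟩
  have hv : v ∈ S := Submodule.subset_span ⟨1, rfl⟩
  have hw : w ∈ S := Submodule.subset_span ⟨2, rfl⟩
  have hwu : ⟪w, u⟫_ℂ = ⟪v, v⟫_ℂ := by
    rw [← inner_conj_symm, huw, inner_conj_symm]
  have hfr : Module.finrank ℂ S = 3 := by
    simpa using finrank_span_eq_card hli
  have hfd : FiniteDimensional ℂ S := Module.finite_of_finrank_eq_succ hfr
  have hTS : ∀ x, trioOp u v w x ∈ S := fun x => by
    rw [trioOp_apply]
    exact S.sub_mem (S.add_mem (S.smul_mem _ hu) (S.smul_mem _ hw)) (S.smul_mem _ hv)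
  let TS : S →ₗ[ℂ] S := (trioOp u v w).toLinearMap.restrict (fun x _ => hTS x)
  have hsym : TS.IsSymmetric := fun x y => trioOp_symm u v w x y
  let e := hsym.eigenvectorBasis hfr
  let l := hsym.eigenvalues hfr
  have heig : ∀ i, trioOp u v w (e i : H) = (l i : ℂ) • (e i : H) := fun i => by
    have := congrArg (fun z : S => (z : H)) (hsym.apply_eigenvectorBasis hfr i)
    exact this
  have hon : ∀ i, ‖(e i : H)‖ = 1 := fun i => e.orthonormal.1 i
  have hon' : Orthonormal ℂ (fun i => (e i : H)) := e.orthonormal.comp_linearIsometry S.subtypeₗᵢ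
  -- numerical values at the basis vectors
  have hval : ∀ i, ⟪(e i : H), trioOp u v w (e i : H)⟫_ℂ = (l i : ℂ) := fun i => by
    rw [heig, inner_smul_right, inner_self_eq_norm_sq_to_K, hon]; simp
  -- the quadratic form
  have hform : ∀ x : H, ⟪x, trioOp u v w x⟫_ℂ
      = ((∑ i, l i * ‖⟪(e i : H), x⟫_ℂ‖ ^ 2 : ℝ) : ℂ) := by
    intro x
    have h1 : trioOp u v w x = ∑ i, ((l i : ℂ) * ⟪(e i : H), x⟫_ℂ) • (e i : H) := by
      have h2 := congrArg (fun z : S => (z : H)) (e.sum_repr' ⟨trioOp u v w x, hTS x⟩)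
      simp only [Submodule.coe_sum, Submodule.coe_smul, Submodule.coe_inner] at h2
      rw [← h2]
      refine Finset.sum_congr rfl fun i _ => ?_
      congr 1
      have h3 := trioOp_symm u v w (e i : H) x
      simp only [ContinuousLinearMap.coe_coe] at h3
      rw [← h3, heig, inner_smul_left]; simp
    rw [h1, inner_sum]
    push_cast
    refine Finset.sum_congr rfl fun i _ => ?_
    rw [inner_smul_right, mul_assoc, ← inner_conj_symm x (e i : H), RCLike.mul_conj]
    simp
  have htr : l 0 + l 1 + l 2 = 0 := by
    have h1 : ∑ i, ⟪(e i : H), trioOp u v w (e i : H)⟫_ℂ = 0 := by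
      have h2 := e.sum_inner_mul_inner ⟨w, hw⟩ ⟨u, hu⟩
      have h3 := e.sum_inner_mul_inner ⟨u, hu⟩ ⟨w, hw⟩
      have h4 := e.sum_inner_mul_inner ⟨v, hv⟩ ⟨v, hv⟩
      simp only [Submodule.coe_inner] at h2 h3 h4
      simp only [trioOp_apply, inner_sub_right, inner_add_right, inner_smul_right,
        Finset.sum_add_distrib, Finset.sum_sub_distrib, mul_assoc, ← Finset.mul_sum]
      rw [h2, h3, h4, huw, hwu]; ring
    simp only [hval, Fin.sum_univ_three] at h1
    exact_mod_cast h1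
  have hne : ∀ i, l i ≠ 0 := by
    intro i hi
    have h1 := heig i
    rw [hi, trioOp_apply] at h1
    have h2 := Fintype.linearIndependent_iff.1 hli
      ![⟪w, (e i : H)⟫_ℂ, -(2 * ⟪v, (e i : H)⟫_ℂ), ⟪u, (e i : H)⟫_ℂ] (by
        simp only [Fin.sum_univ_three, Matrix.cons_val]
        rw [Complex.ofReal_zero, zero_smul] at h1
        rw [← h1]; module)
    have h3 : ∀ x ∈ S, ⟪x, (e i : H)⟫_ℂ = 0 := by
      intro x hx
      induction hx using Submodule.span_induction with
      | mem x hx =>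
        obtain ⟨j, rfl⟩ := hx
        have ha := h2 0
        have hb := h2 1
        have hc := h2 2
        simp only [Matrix.cons_val, neg_eq_zero, mul_eq_zero, OfNat.ofNat_ne_zero, false_or]
          at ha hb hc
        fin_cases j
        · exact hc
        · exact hb
        · exact ha
      | zero => simp
      | add x y _ _ hx hy => rw [inner_add_left, hx, hy, add_zero]
      | smul a x _ hx => rw [inner_smul_left, hx, mul_zero]
    have h4 := h3 _ (e i).2
    rw [inner_self_eq_norm_sq_to_K, hon] at h4
    simp at h4
  have hanti := hsym.eigenvalues_antitone hfr
  have h01 : l 1 ≤ l 0 := hanti (by decide)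
  have h12 : l 2 ≤ l 1 := hanti (by decide)
  have hbes : ∀ x : H, ‖x‖ = 1 → ∑ i, ‖⟪(e i : H), x⟫_ℂ‖ ^ 2 ≤ 1 := fun x hx => by
    have := hon'.sum_inner_products_le x (s := Finset.univ)
    simpa [hx] using this
  have hpt : ∀ i, ∃ a b c : ℝ, 0 ≤ a ∧ 0 ≤ b ∧ 0 ≤ c ∧ a + b + c ≤ 1 ∧
      l 0 * a + l 1 * b + l 2 * c = - l i := by
    intro i
    obtain ⟨y, hy, hy2⟩ := hs (e i) (hon i)
    rw [hval, hform] at hy2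
    have hb := hbes y hy
    rw [Fin.sum_univ_three] at hy2 hb
    exact ⟨_, _, _, sq_nonneg _, sq_nonneg _, sq_nonneg _, hb, by exact_mod_cast hy2⟩
  have h0 : 0 < l 0 := by
    by_contra h
    apply hne 0
    linarith
  have h2 : l 2 < 0 := by
    by_contra h
    apply hne 2
    linarith
  apply hne 1
  obtain ⟨a, b, c, ha, hb, hc, hs1, he1⟩ := hpt 0
  obtain ⟨a', b', c', ha', hb', hc', hs2, he2⟩ := hpt 2
  have k1 : l 2 ≤ - l 0 := by nlinarith
  have k2 : - l 2 ≤ l 0 := by nlinarith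
  linarith

open InnerProductSpace in
/-- The rank-two test operator forces `x, A x, A² x` to be dependent. -/
theorem dependent_of_rank_two {H : Type*} [NormedAddCommGroup H] [InnerProductSpace ℂ H]
    [CompleteSpace H] (A : H →L[ℂ] H) (hA : IsSelfAdjoint A)
    (h : ∀ B : H →L[ℂ] H, IsSelfAdjoint B → LinearMap.rank (B.toLinearMap) ≤ 2 →
        numRange (A * B - B * A) = -numRange (A * B - B * A)) (u : H) :
    ¬ LinearIndependent ℂ ![u, A u, A (A u)] := by
  intro hli
  have hsym : ∀ x y, ⟪A x, y⟫_ℂ = ⟪x, A y⟫_ℂ :=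
    (ContinuousLinearMap.isSelfAdjoint_iff_isSymmetric.1 hA)
  let B : H →L[ℂ] H := Complex.I • (rankOne ℂ u (A u) - rankOne ℂ (A u) u)
  have hBx : ∀ x, B x = Complex.I • (⟪A u, x⟫_ℂ • u - ⟪u, x⟫_ℂ • A u) := fun x => by simp [B]
  have hB : IsSelfAdjoint B := by
    rw [ContinuousLinearMap.isSelfAdjoint_iff_isSymmetric]
    intro x y
    simp only [ContinuousLinearMap.coe_coe, hBx, inner_smul_left, inner_smul_right,
      inner_sub_left, inner_sub_right, inner_conj_symm, Complex.conj_I]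
    ring
  have hr : LinearMap.rank B.toLinearMap ≤ 2 := by
    have hle : LinearMap.range B.toLinearMap ≤ Submodule.span ℂ ({u, A u} : Set H) := by
      rintro _ ⟨x, rfl⟩
      simp only [ContinuousLinearMap.coe_coe, hBx]
      exact Submodule.smul_mem _ _ (Submodule.sub_mem _
        (Submodule.smul_mem _ _ (Submodule.subset_span (by simp)))
        (Submodule.smul_mem _ _ (Submodule.subset_span (by simp))))
    refine (Submodule.rank_mono hle).trans ((rank_span_le _).trans ?_)
    refine (Cardinal.mk_insert_le).trans ?_
    rw [Cardinal.mk_singleton]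
    norm_num
  have hC : ∀ x, (A * B - B * A) x = (-Complex.I) • trioOp u (A u) (A (A u)) x := by
    intro x
    simp only [sub_apply, mul_apply_eq_comp, hBx, trioOp_apply, map_smul, map_sub, hsym]
    module
  have hW := h B hB hr
  refine key_nonsymm u (A u) (A (A u)) hli ?_ ?_
  · rw [hsym]
  · intro x hx
    have h1 : ⟪x, (A * B - B * A) x⟫_ℂ ∈ -numRange (A * B - B * A) := by
      rw [← hW]; exact ⟨x, hx, rfl⟩
    obtain ⟨y, hy, hy2⟩ := h1
    refine ⟨y, hy, ?_⟩
    rw [hC, hC, inner_smul_right, inner_smul_right, ← mul_neg] at hy2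
    exact mul_left_cancel₀ (by simp) hy2

/-- Local quadratic dependence gives a decomposition into two eigenvectors. -/
theorem eigen_split {H : Type*} [NormedAddCommGroup H] [InnerProductSpace ℂ H]
    (A : H →L[ℂ] H) (hsym : ∀ x y, ⟪A x, y⟫_ℂ = ⟪x, A y⟫_ℂ) (x : H)
    (a b c : ℂ) (hne : ¬ (a = 0 ∧ b = 0 ∧ c = 0))
    (h : a • x + b • A x + c • A (A x) = 0) :
    ∃ (y z : H) (l m : ℂ), x = y + z ∧ A y = l • y ∧ A z = m • z := by
  by_cases hc : c = 0
  · subst hc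
    by_cases hb : b = 0
    · subst hb
      have ha : a ≠ 0 := fun ha => hne ⟨ha, rfl, rfl⟩
      have : x = 0 := by simpa [ha] using h
      exact ⟨0, 0, 0, 0, by simp [this], by simp, by simp⟩
    · refine ⟨x, 0, -(b⁻¹ * a), 0, by simp, ?_, by simp⟩
      have h1 : b • A x = -(a • x) := by
        rw [zero_smul, add_zero] at h
        exact eq_neg_of_add_eq_zero_right h
      have h2 := congrArg (fun t => b⁻¹ • t) h1
      simp only [smul_smul, inv_mul_cancel₀ hb, one_smul, smul_neg] at h2
      rw [h2, neg_smul]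
  · obtain ⟨s, hs⟩ := IsAlgClosed.exists_pow_nat_eq (discrim c b a) (n := 2) (by norm_num)
    set l := (-b + s) / (2 * c) with hl
    set m := (-b - s) / (2 * c) with hm
    have hsum : l + m = -(b / c) := by rw [hl, hm]; field_simp; ring
    have hprod : l * m = a / c := by
      rw [hl, hm]; field_simp; rw [discrim] at hs; linear_combination -hs
    have hq : A (A x) = (l + m) • A x - (l * m) • x := by
      have h2 := congrArg (fun t => c⁻¹ • t) h
      simp only [smul_add, smul_smul, inv_mul_cancel₀ hc, one_smul, smul_zero] at h2
      rw [hsum, hprod, div_eq_inv_mul, div_eq_inv_mul]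
      rw [← sub_eq_zero, ← h2]
      module
    by_cases hlm : l = m
    · rw [← hlm] at hq
      -- `y = (A - l) x` is an eigenvector or zero
      have hy : A (A x - l • x) = l • (A x - l • x) := by
        rw [map_sub, map_smul, hq]; module
      have hy0 : A x - l • x = 0 := by
        by_contra hy0
        have hyy : ⟪A x - l • x, A x - l • x⟫_ℂ ≠ 0 := inner_self_ne_zero.2 hy0
        have hreal : (starRingEnd ℂ) l = l := by
          have h1 := hsym (A x - l • x) (A x - l • x)
          rw [hy, inner_smul_left, inner_smul_right] at h1
          exact mul_right_cancel₀ hyy h1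
        apply hyy
        have h1 := hsym x (A x - l • x)
        rw [hy, inner_smul_right] at h1
        rw [inner_sub_left (A x), h1, inner_smul_left, hreal, sub_self]
      exact ⟨x, 0, l, 0, by simp, sub_eq_zero.1 hy0, by simp⟩
    · have hd : l - m ≠ 0 := sub_ne_zero.2 hlm
      refine ⟨(l - m)⁻¹ • (A x - m • x), -((l - m)⁻¹ • (A x - l • x)), l, m, ?_, ?_, ?_⟩
      · have : x = ((l - m)⁻¹ * (l - m)) • x := by rw [inv_mul_cancel₀ hd, one_smul]
        conv_lhs => rw [this]
        module
      · rw [map_smul, map_sub, map_smul, hq]; module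
      · rw [map_neg, map_smul, map_sub, map_smul, hq]; module

theorem three_to_one {H : Type*} [NormedAddCommGroup H] [InnerProductSpace ℂ H]
    [CompleteSpace H] (A : H →L[ℂ] H) (hA : IsSelfAdjoint A)
    (h : ∀ B : H →L[ℂ] H, IsSelfAdjoint B → LinearMap.rank (B.toLinearMap) ≤ 2 →
        numRange (A * B - B * A) = -numRange (A * B - B * A)) : A ∈ DSet H := by
  have hsym : ∀ x y, ⟪A x, y⟫_ℂ = ⟪x, A y⟫_ℂ :=
    (ContinuousLinearMap.isSelfAdjoint_iff_isSymmetric.1 hA)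
  have hdep : ∀ x, ∃ a b c : ℂ, ¬ (a = 0 ∧ b = 0 ∧ c = 0) ∧
      a • x + b • A x + c • A (A x) = 0 := by
    intro x
    obtain ⟨g, hg, i, hi⟩ :=
      Fintype.not_linearIndependent_iff.1 (dependent_of_rank_two A hA h x)
    refine ⟨g 0, g 1, g 2, ?_, by simpa [Fin.sum_univ_three] using hg⟩
    rintro ⟨h0, h1, h2⟩
    fin_cases i <;> simp_all
  let E : Set ℝ := {r | ∃ y, y ≠ 0 ∧ A y = (r : ℂ) • y}
  have hreal : ∀ (y : H) (l : ℂ), y ≠ 0 → A y = l • y → ∃ r ∈ E, l = (r : ℂ) := by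
    intro y l hy hl
    have hc : (starRingEnd ℂ) l = l := by
      have h1 := hsym y y
      rw [hl, inner_smul_left, inner_smul_right] at h1
      exact mul_right_cancel₀ (inner_self_ne_zero.2 hy) h1
    obtain ⟨r, hr⟩ := Complex.conj_eq_iff_real.1 hc
    exact ⟨r, ⟨y, hy, by rw [hl, hr]⟩, hr⟩
  have hthree : ∀ p ∈ E, ∀ q ∈ E, ∀ r ∈ E, p ≠ q → p ≠ r → q ≠ r → False := by
    rintro p ⟨x, hx, hpx⟩ q ⟨y, hy, hqy⟩ r ⟨z, hz, hrz⟩ hpq hpr hqr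
    have hli : LinearIndependent ℂ ![x, y, z] := by
      refine Module.End.eigenvectors_linearIndependent' A.toLinearMap
        (fun i => ((![p, q, r] i : ℝ) : ℂ)) ?_ _ ?_
      · intro i j hij
        have hij' : ![p, q, r] i = ![p, q, r] j := Complex.ofReal_injective hij
        fin_cases i <;> fin_cases j <;> simp_all
      · intro i
        rw [Module.End.hasEigenvector_iff, Module.End.mem_eigenspace_iff]
        fin_cases i
        · exact ⟨hpx, hx⟩
        · exact ⟨hqy, hy⟩
        · exact ⟨hrz, hz⟩
    obtain ⟨a, b, c, hne, h0⟩ := hdep (x + y + z)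
    have h2 := Fintype.linearIndependent_iff.1 hli
      ![a + b * p + c * p ^ 2, a + b * q + c * q ^ 2, a + b * r + c * r ^ 2] (by
        simp only [Fin.sum_univ_three, Matrix.cons_val]
        rw [← h0]
        simp only [map_add, hpx, hqy, hrz, map_smul]
        module)
    have e0 : a + b * p + c * p ^ 2 = 0 := h2 0
    have e1 : a + b * q + c * q ^ 2 = 0 := h2 1
    have e2 : a + b * r + c * r ^ 2 = 0 := h2 2
    have n1 : (p : ℂ) - q ≠ 0 := sub_ne_zero.2 (by exact_mod_cast hpq)
    have n2 : (p : ℂ) - r ≠ 0 := sub_ne_zero.2 (by exact_mod_cast hpr)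
    have n3 : (q : ℂ) - r ≠ 0 := sub_ne_zero.2 (by exact_mod_cast hqr)
    have f1 : b + c * (p + q) = 0 := by
      apply mul_left_cancel₀ n1; linear_combination e0 - e1
    have f2 : b + c * (p + r) = 0 := by
      apply mul_left_cancel₀ n2; linear_combination e0 - e2
    have hc : c = 0 := by
      apply mul_left_cancel₀ n3; linear_combination f1 - f2
    have hb : b = 0 := by simpa [hc] using f1
    have ha : a = 0 := by simpa [hc, hb] using e0
    exact hne ⟨ha, hb, hc⟩
  have hE : ∃ l m : ℝ, l ≠ m ∧ ∀ r ∈ E, r = l ∨ r = m := by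
    by_cases h1 : ∃ l ∈ E, ∃ m ∈ E, l ≠ m
    · obtain ⟨l, hl, m, hm, hlm⟩ := h1
      refine ⟨l, m, hlm, fun r hr => ?_⟩
      by_contra hcon
      push Not at hcon
      exact hthree r hr l hl m hm hcon.1 hcon.2 hlm
    · push Not at h1
      by_cases h2 : ∃ l, l ∈ E
      · obtain ⟨l, hl⟩ := h2
        exact ⟨l, l + 1, by simp, fun r hr => Or.inl (h1 r hr l hl)⟩
      · exact ⟨0, 1, by simp, fun r hr => absurd ⟨r, hr⟩ h2⟩
  obtain ⟨l, m, hlm, hlE⟩ := hE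
  have heig : ∀ (y : H) (t : ℂ), A y = t • y →
      A (A y) = ((l : ℂ) + m) • A y - ((l : ℂ) * m) • y := by
    intro y t ht
    by_cases hy : y = 0
    · simp [hy]
    obtain ⟨r, hr, rfl⟩ := hreal y t hy ht
    rw [ht, map_smul, ht]
    rcases hlE r hr with rfl | rfl <;> module
  have hquad : ∀ x, A (A x) = ((l : ℂ) + m) • A x - ((l : ℂ) * m) • x := by
    intro x
    obtain ⟨a, b, c, hne, h0⟩ := hdep x
    obtain ⟨y, z, s, t, rfl, hy, hz⟩ := eigen_split A hsym x a b c hne h0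
    simp only [map_add]
    rw [heig y s hy, heig z t hz]
    module
  have hd : (l : ℂ) - m ≠ 0 := sub_ne_zero.2 (by exact_mod_cast hlm)
  have hd' : l - m ≠ 0 := sub_ne_zero.2 hlm
  refine ⟨(((l - m)⁻¹ : ℝ) : ℂ) • (A - (m : ℂ) • 1), l - m, m, ?_, ?_, ?_⟩
  · rw [ContinuousLinearMap.isSelfAdjoint_iff_isSymmetric]
    intro x y
    simp only [ContinuousLinearMap.coe_coe, smul_apply, sub_apply, one_apply_eq_self,
      inner_smul_left, inner_smul_right, inner_sub_left, inner_sub_right, hsym,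
      Complex.conj_ofReal]
  · ext x
    simp only [mul_apply_eq_comp, smul_apply, sub_apply, map_smul, map_sub,
      one_apply_eq_self, hquad]
    have : (((l - m)⁻¹ : ℝ) : ℂ) = ((l - m)⁻¹ : ℝ) * (((l - m)⁻¹ : ℝ) * ((l : ℂ) - m)) := by
      push_cast; field_simp
    conv_rhs => rw [this]
    module
  · rw [smul_smul]
    have : ((l - m : ℝ) : ℂ) * (((l - m)⁻¹ : ℝ) : ℂ) = 1 := by
      rw [← Complex.ofReal_mul, mul_inv_cancel₀ hd', Complex.ofReal_one]
    rw [this, one_smul, sub_add_cancel]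

theorem one_to_two {H : Type*} [NormedAddCommGroup H] [InnerProductSpace ℂ H]
    [CompleteSpace H] (A : H →L[ℂ] H) (hA : A ∈ DSet H) (B : H →L[ℂ] H) :
    numRange (A * B - B * A) = -numRange (A * B - B * A) := by
  obtain ⟨P, α, δ, hP, hPP, rfl⟩ := hA
  have hsym : ∀ x y, ⟪P x, y⟫_ℂ = ⟪x, P y⟫_ℂ :=
    (ContinuousLinearMap.isSelfAdjoint_iff_isSymmetric.1 hP)
  have hPx : ∀ x, P (P x) = P x := fun x => congrArg (fun T : H →L[ℂ] H => T x) hPP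
  set C := ((α : ℂ) • P + (δ : ℂ) • 1) * B - B * ((α : ℂ) • P + (δ : ℂ) • 1) with hC
  have hCx : ∀ x, C x = (α : ℂ) • (P (B x) - B (P x)) := by
    intro x
    simp only [hC, sub_apply, add_apply, smul_apply, mul_apply_eq_comp,
      one_apply_eq_self, map_add, map_smul]
    module
  have hsub : ∀ x, ‖x‖ = 1 → ∃ y, ‖y‖ = 1 ∧ ⟪y, C y⟫_ℂ = -⟪x, C x⟫_ℂ := by
    intro x hx
    refine ⟨(2 : ℂ) • P x - x, ?_, ?_⟩
    · have h1 : ⟪(2 : ℂ) • P x - x, (2 : ℂ) • P x - x⟫_ℂ = ⟪x, x⟫_ℂ := by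
        simp only [inner_sub_left, inner_sub_right, inner_smul_left, inner_smul_right, hsym, hPx,
          Complex.conj_ofNat]
        ring
      rw [inner_self_eq_norm_sq_to_K, inner_self_eq_norm_sq_to_K, hx] at h1
      have h2 : ‖(2 : ℂ) • P x - x‖ ^ 2 = 1 ^ 2 := by exact_mod_cast h1
      exact (sq_eq_sq₀ (norm_nonneg _) (by norm_num)).1 h2
    · simp only [hCx, inner_sub_left, inner_sub_right, inner_smul_left, inner_smul_right, hsym,
        hPx, Complex.conj_ofNat, map_sub, map_smul]
      ring
  ext z
  constructor
  · rintro ⟨x, hx, rfl⟩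
    obtain ⟨y, hy, hy2⟩ := hsub x hx
    exact ⟨y, hy, hy2⟩
  · rintro ⟨x, hx, hz⟩
    obtain ⟨y, hy, hy2⟩ := hsub x hx
    exact ⟨y, hy, by rw [hy2, hz, neg_neg]⟩

theorem stmt_5 {H : Type*} [NormedAddCommGroup H] [InnerProductSpace ℂ H] [CompleteSpace H]
    (hdim : 3 ≤ Module.rank ℂ H) (A : H →L[ℂ] H) (hA : IsSelfAdjoint A) :
    (A ∈ DSet H ↔
      ∀ B : H →L[ℂ] H, IsSelfAdjoint B →
        numRange (A * B - B * A) = -numRange (A * B - B * A)) ∧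
    ((∀ B : H →L[ℂ] H, IsSelfAdjoint B →
        numRange (A * B - B * A) = -numRange (A * B - B * A)) ↔
      ∀ B : H →L[ℂ] H, IsSelfAdjoint B → LinearMap.rank (B.toLinearMap) ≤ 2 →
        numRange (A * B - B * A) = -numRange (A * B - B * A)) := by
  have h12 := fun h : A ∈ DSet H => fun (B : H →L[ℂ] H) (_ : IsSelfAdjoint B) => one_to_two A h B
  exact ⟨⟨h12, fun h => three_to_one A hA fun B hB _ => h B hB⟩,
    ⟨fun h B hB _ => h B hB, fun h => h12 (three_to_one A hA h)⟩⟩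
end

section
/- Let H be a complex Hilbert space of dimension at least 2 and let A = αP + γI, where P is an orthogonal projection on H and α, γ ∈ ℝ. Then for every bounded self-adjoint operator B on H, the numerical range of the commutator is symmetric about the origin: W(AB − BA) = −W(AB − BA). -/
open scoped InnerProductSpace

theorem aux_numRange {H : Type*} [NormedAddCommGroup H] [InnerProductSpace ℂ H] [CompleteSpace H]
    (U C : H →L[ℂ] H) (hU : IsSelfAdjoint U) (hU2 : U * U = 1) (hC : U * C * U = -C)
    (z : ℂ) (hz : z ∈ numRange C) : -z ∈ numRange C := by
  obtain ⟨x, hx, rfl⟩ := hz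
  have hsym : ∀ u v : H, ⟪U u, v⟫_ℂ = ⟪u, U v⟫_ℂ := fun u v => hU.isSymmetric u v
  have hUU : U (U x) = x := by
    have := congrArg (fun T : H →L[ℂ] H => T x) hU2
    simpa using this
  have hCx : U (C (U x)) = -C x := by
    have := congrArg (fun T : H →L[ℂ] H => T x) hC
    simpa using this
  refine ⟨U x, ?_, ?_⟩
  · have h1 : ⟪U x, U x⟫_ℂ = ⟪x, x⟫_ℂ := by rw [hsym, hUU]
    rw [inner_self_eq_norm_sq_to_K, inner_self_eq_norm_sq_to_K, hx] at h1
    have h2 : ‖U x‖ ^ 2 = 1 := by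
      have h3 : ‖U x‖ ^ 2 = 1 ^ 2 := by exact_mod_cast h1
      simpa using h3
    exact (pow_eq_one_iff_of_nonneg (norm_nonneg _) two_ne_zero).1 h2
  · rw [hsym, hCx, inner_neg_right]

theorem stmt_6 {H : Type*} [NormedAddCommGroup H] [InnerProductSpace ℂ H] [CompleteSpace H]
    (hdim : 2 ≤ Module.rank ℂ H)
    (P : H →L[ℂ] H) (hP : IsSelfAdjoint P) (hP2 : P * P = P) (α γ : ℝ)
    (A : H →L[ℂ] H) (hA : A = (α : ℂ) • P + (γ : ℂ) • 1) :
    ∀ B : H →L[ℂ] H, IsSelfAdjoint B →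
      numRange (A * B - B * A) = -numRange (A * B - B * A) := by
  intro B _
  have hU : IsSelfAdjoint (P + P - 1) := (hP.add hP).sub (IsSelfAdjoint.one _)
  have hU2 : (P + P - 1) * (P + P - 1) = 1 := by
    simp only [mul_add, add_mul, mul_sub, sub_mul, hP2, mul_one, one_mul]
    abel
  have hAB : A * B - B * A = (α : ℂ) • (P * B - B * P) := by
    rw [hA]
    simp only [add_mul, mul_add, smul_mul_assoc, mul_smul_comm, one_mul, mul_one, smul_sub]
    abel
  have hC : (P + P - 1) * (A * B - B * A) * (P + P - 1) = -(A * B - B * A) := by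
    rw [hAB, mul_smul_comm, smul_mul_assoc, ← smul_neg]
    congr 1
    have h3 : ∀ X : H →L[ℂ] H, P * (P * X) = P * X := fun X => by rw [← mul_assoc, hP2]
    simp only [mul_add, add_mul, mul_sub, sub_mul, mul_assoc, h3, hP2, mul_one, one_mul]
    abel
  have key := aux_numRange _ _ hU hU2 hC
  ext z
  rw [Set.mem_neg]
  exact ⟨key z, fun h => by simpa using key _ h⟩
end

section
/- Let H be a complex Hilbert space of dimension at least 2 and let A, B be bounded self-adjoint operators on H such that ⟨A²x, x⟩ − ⟨Ax, x⟩² = ⟨B²x, x⟩ − ⟨Bx, x⟩² for every unit vector x ∈ H. Then ⟨Ay, z⟩² = ⟨By, z⟩² for every pair of orthonormal vectors y, z ∈ H. -/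
open scoped InnerProductSpace

theorem stmt_10 {H : Type*} [NormedAddCommGroup H] [InnerProductSpace ℂ H] [CompleteSpace H]
    (hdim : 2 ≤ Module.rank ℂ H)
    (A B : H →L[ℂ] H) (hA : IsSelfAdjoint A) (hB : IsSelfAdjoint B)
    (hvar : ∀ x : H, ‖x‖ = 1 →
      ⟪x, A (A x)⟫_ℂ - ⟪x, A x⟫_ℂ ^ 2 = ⟪x, B (B x)⟫_ℂ - ⟪x, B x⟫_ℂ ^ 2) :
    ∀ y z : H, ‖y‖ = 1 → ‖z‖ = 1 → ⟪y, z⟫_ℂ = 0 →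
      ⟪z, A y⟫_ℂ ^ 2 = ⟪z, B y⟫_ℂ ^ 2 := by
  intro y z hy hz hyz
  have hzy : ⟪z, y⟫_ℂ = 0 := inner_eq_zero_symm.mp hyz
  have hyy : ⟪y, y⟫_ℂ = 1 := by rw [inner_self_eq_norm_sq_to_K, hy]; simp
  have hzz : ⟪z, z⟫_ℂ = 1 := by rw [inner_self_eq_norm_sq_to_K, hz]; simp
  -- homogeneous form of the hypothesis
  have hom : ∀ x : H, ⟪x, x⟫_ℂ * ⟪x, A (A x)⟫_ℂ - ⟪x, A x⟫_ℂ ^ 2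
      = ⟪x, x⟫_ℂ * ⟪x, B (B x)⟫_ℂ - ⟪x, B x⟫_ℂ ^ 2 := by
    intro x
    by_cases hx : x = 0
    · simp [hx]
    have hn : (‖x‖ : ℂ) ≠ 0 := by simpa using hx
    have h := hvar (((‖x‖ : ℂ)⁻¹) • x) (by
      rw [norm_smul, norm_inv, Complex.norm_real, norm_norm]
      exact inv_mul_cancel₀ (norm_ne_zero_iff.mpr hx))
    simp only [map_smul, inner_smul_left, inner_smul_right, map_inv₀, Complex.conj_ofReal] at h
    have hs : ⟪x, x⟫_ℂ = (‖x‖ : ℂ) ^ 2 := inner_self_eq_norm_sq_to_K x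
    rw [hs]
    field_simp at h
    linear_combination h
  -- expansion along `y + u z`
  have key : ∀ u v t s w : ℂ, (starRingEnd ℂ) u = v → v * u = t → u ^ 2 = s → v ^ 2 = w →
      (1 + t) * (⟪y, A (A y)⟫_ℂ + t * ⟪z, A (A z)⟫_ℂ + u * ⟪y, A (A z)⟫_ℂ + v * ⟪z, A (A y)⟫_ℂ)
      - ((⟪y, A y⟫_ℂ + t * ⟪z, A z⟫_ℂ) ^ 2
        + 2 * (⟪y, A y⟫_ℂ + t * ⟪z, A z⟫_ℂ) * (u * ⟪y, A z⟫_ℂ + v * ⟪z, A y⟫_ℂ)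
        + s * ⟪y, A z⟫_ℂ ^ 2 + w * ⟪z, A y⟫_ℂ ^ 2 + 2 * t * ⟪y, A z⟫_ℂ * ⟪z, A y⟫_ℂ) =
      (1 + t) * (⟪y, B (B y)⟫_ℂ + t * ⟪z, B (B z)⟫_ℂ + u * ⟪y, B (B z)⟫_ℂ + v * ⟪z, B (B y)⟫_ℂ)
      - ((⟪y, B y⟫_ℂ + t * ⟪z, B z⟫_ℂ) ^ 2
        + 2 * (⟪y, B y⟫_ℂ + t * ⟪z, B z⟫_ℂ) * (u * ⟪y, B z⟫_ℂ + v * ⟪z, B y⟫_ℂ)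
        + s * ⟪y, B z⟫_ℂ ^ 2 + w * ⟪z, B y⟫_ℂ ^ 2 + 2 * t * ⟪y, B z⟫_ℂ * ⟪z, B y⟫_ℂ) := by
    intro u v t s w hv ht hs hw
    have h := hom (y + u • z)
    simp only [map_add, map_smul, inner_add_left, inner_add_right, inner_smul_left,
      inner_smul_right, hyy, hzz, hyz, hzy, hv] at h
    subst ht hs hw
    linear_combination h
  have I2 : Complex.I ^ 2 = -1 := Complex.I_sq
  have e1 := key 1 1 1 1 1 (by simp) (by ring) (by ring) (by ring)
  have e2 := key (-1) (-1) 1 1 1 (by simp) (by ring) (by ring) (by ring)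
  have e3 := key Complex.I (-Complex.I) 1 (-1) (-1) (by simp)
    (by linear_combination -I2) I2 (by linear_combination I2)
  have e4 := key (-Complex.I) Complex.I 1 (-1) (-1) (by simp)
    (by linear_combination -I2) (by linear_combination I2) I2
  have f1 := key (1 + Complex.I) (1 - Complex.I) 2 (2 * Complex.I) (-2 * Complex.I)
    (by simp [sub_eq_add_neg])
    (by linear_combination -I2) (by linear_combination I2) (by linear_combination I2)
  have f2 := key (-1 - Complex.I) (-1 + Complex.I) 2 (2 * Complex.I) (-2 * Complex.I)
    (by simp)
    (by linear_combination -I2) (by linear_combination I2) (by linear_combination I2)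
  have f3 := key (1 - Complex.I) (1 + Complex.I) 2 (-2 * Complex.I) (2 * Complex.I)
    (by simp)
    (by linear_combination -I2) (by linear_combination I2) (by linear_combination I2)
  have f4 := key (-1 + Complex.I) (-1 - Complex.I) 2 (-2 * Complex.I) (2 * Complex.I)
    (by simp [sub_eq_add_neg])
    (by linear_combination -I2) (by linear_combination I2) (by linear_combination I2)
  have g1 : ⟪y, A z⟫_ℂ ^ 2 + ⟪z, A y⟫_ℂ ^ 2 = ⟪y, B z⟫_ℂ ^ 2 + ⟪z, B y⟫_ℂ ^ 2 := by
    linear_combination (-1 / 4 : ℂ) * (e1 + e2 - e3 - e4)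
  have g2 : Complex.I * (⟪y, A z⟫_ℂ ^ 2 - ⟪z, A y⟫_ℂ ^ 2)
      = Complex.I * (⟪y, B z⟫_ℂ ^ 2 - ⟪z, B y⟫_ℂ ^ 2) := by
    linear_combination (-1 / 8 : ℂ) * (f1 + f2 - f3 - f4)
  have g3 := mul_left_cancel₀ Complex.I_ne_zero g2
  linear_combination (1 / 2 : ℂ) * (g1 - g3)
end

section
/- Let H be a complex Hilbert space and A a bounded self-adjoint operator on H. The following statements are equivalent: (1) A = αP + δI for some orthogonal projection P on H and some α, δ ∈ ℝ; (2) the spectrum σ(A) contains at most two points; (3) for every x ∈ H the set {x, Ax, A²x} is linearly dependent. -/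
theorem aux_spec {H : Type*} [NormedAddCommGroup H] [InnerProductSpace ℂ H]
    (A : H →L[ℂ] H) (a b : ℂ) (h : (A - a • 1) * (A - b • 1) = 0) :
    spectrum ℂ A ⊆ {a, b} := by
  intro z hz
  by_contra hne
  simp only [Set.mem_insert_iff, Set.mem_singleton_iff, not_or] at hne
  apply hz
  have h0 : (z - a) * (z - b) ≠ 0 := mul_ne_zero (sub_ne_zero.2 hne.1) (sub_ne_zero.2 hne.2)
  have e : A * A = (a + b) • A - (a * b) • 1 := by
    have : (A - a • 1) * (A - b • 1) = A * A - ((a + b) • A - (a * b) • 1) := by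
      simp only [sub_mul, mul_sub, smul_mul_assoc, mul_smul_comm, one_mul, mul_one, smul_smul]
      module
    rw [this] at h
    exact sub_eq_zero.1 h
  rw [spectrum.mem_resolventSet_iff, Algebra.algebraMap_eq_smul_one]
  have e1 : (z • (1 : H →L[ℂ] H) - A) * (A + (z - a - b) • 1) = ((z - a) * (z - b)) • 1 := by
    simp only [sub_mul, mul_add, smul_mul_assoc, mul_smul_comm, one_mul, mul_one, smul_smul, e]
    module
  have e2 : (A + (z - a - b) • 1) * (z • (1 : H →L[ℂ] H) - A) = ((z - a) * (z - b)) • 1 := by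
    simp only [mul_sub, add_mul, smul_mul_assoc, mul_smul_comm, one_mul, mul_one, smul_smul, e]
    module
  refine ⟨⟨z • 1 - A, ((z - a) * (z - b))⁻¹ • (A + (z - a - b) • 1), ?_, ?_⟩, rfl⟩
  · rw [mul_smul_comm, e1, smul_smul, inv_mul_cancel₀ h0, one_smul]
  · rw [smul_mul_assoc, e2, smul_smul, inv_mul_cancel₀ h0, one_smul]

theorem aux_quad {H : Type*} [NormedAddCommGroup H] [InnerProductSpace ℂ H]
    (A : H →L[ℂ] H) (c d : ℂ) (h : ∀ x, A (A x) = c • A x + d • x) :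
    ∃ a b : ℂ, spectrum ℂ A ⊆ {a, b} := by
  obtain ⟨s, hs⟩ := IsAlgClosed.exists_pow_nat_eq (c ^ 2 + 4 * d) (n := 2) (by norm_num)
  refine ⟨(c + s) / 2, (c - s) / 2, aux_spec A _ _ ?_⟩
  have hd : d = (s ^ 2 - c ^ 2) / 4 := by rw [hs]; ring
  ext x
  simp [h, hd]
  module

theorem aux_real {H : Type*} [NormedAddCommGroup H] [InnerProductSpace ℂ H] [CompleteSpace H]
    (A : H →L[ℂ] H) (hA : IsSelfAdjoint A) (a b : ℂ) (h : spectrum ℂ A ⊆ {a, b}) :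
    spectrum ℝ A ⊆ {a.re, b.re} := by
  intro z hz
  have hz' : (z : ℂ) ∈ spectrum ℂ A := by
    have := spectrum.algebraMap_mem ℂ hz
    simpa using this
  rcases h hz' with h | h
  · left; rw [← h]; simp
  · right
    have h : (z : ℂ) = b := h
    rw [← h]; simp

theorem aux_mul {H : Type*} [NormedAddCommGroup H] [InnerProductSpace ℂ H] [CompleteSpace H]
    (A : H →L[ℂ] H) (hA : IsSelfAdjoint A) (a b : ℝ) (h : spectrum ℝ A ⊆ {a, b}) :
    (A - (a : ℂ) • 1) * (A - (b : ℂ) • 1) = 0 := by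
  have key : ∀ r : ℝ, cfc (fun x : ℝ => x - r) A = A - (r : ℂ) • 1 := by
    intro r
    rw [cfc_sub (fun x : ℝ => x) (fun _ => r) A, cfc_id' ℝ A, cfc_const r A]
    simp [Algebra.algebraMap_eq_smul_one]
  rw [← key, ← key, ← cfc_mul _ _ A, ← cfc_zero ℝ A]
  apply cfc_congr
  intro x hx
  rcases h hx with h | h
  · simp [h]
  · have h : x = b := h
    simp [h]

theorem aux_local {H : Type*} [NormedAddCommGroup H] [InnerProductSpace ℂ H] [CompleteSpace H]
    (A : H →L[ℂ] H) (hA : IsSelfAdjoint A)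
    (h : ∀ x : H, ¬ LinearIndependent ℂ ![x, A x, A (A x)]) :
    ∃ c d : ℂ, ∀ x, A (A x) = c • A x + d • x := by
  have hs : ∀ x y, inner ℂ (A x) y = inner ℂ x (A y) := fun x y => hA.isSymmetric x y
  have h' : ∀ x, ∃ α β γ : ℂ, α • x + β • A x + γ • A (A x) = 0 ∧ ¬ (α = 0 ∧ β = 0 ∧ γ = 0) := by
    intro x
    have := h x
    rw [Fintype.not_linearIndependent_iff] at this
    obtain ⟨g, hg, i, hi⟩ := this
    refine ⟨g 0, g 1, g 2, by simpa [Fin.sum_univ_three] using hg, ?_⟩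
    rintro ⟨h0, h1, h2⟩
    fin_cases i <;> simp_all
  by_cases hx : ∃ x, LinearIndependent ℂ ![x, A x]
  · obtain ⟨x, hx⟩ := hx
    rw [LinearIndependent.pair_iff] at hx
    obtain ⟨α, β, γ, e, hne⟩ := h' x
    have hγ : γ ≠ 0 := by
      rintro rfl
      obtain ⟨h1, h2⟩ := hx α β (by simpa using e)
      exact hne ⟨h1, h2, rfl⟩
    obtain ⟨c, d, hcd⟩ : ∃ c d : ℂ, A (A x) = c • A x + d • x := by
      refine ⟨-(γ⁻¹ * β), -(γ⁻¹ * α), ?_⟩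
      have : γ⁻¹ • (α • x + β • A x + γ • A (A x)) = 0 := by rw [e, smul_zero]
      rw [smul_add, smul_smul γ⁻¹ γ, inv_mul_cancel₀ hγ, one_smul] at this
      rw [eq_neg_of_add_eq_zero_right this]
      module
    refine ⟨c, d, fun y => ?_⟩
    haveI : FiniteDimensional ℂ (Submodule.span ℂ {x, A x}) :=
      FiniteDimensional.span_of_finite ℂ (Set.toFinite _)
    obtain ⟨v, hv, w, hw, rfl⟩ := (Submodule.span ℂ {x, A x}).exists_add_mem_mem_orthogonal y
    have hwx : inner ℂ x w = 0 := hw x (Submodule.subset_span (by simp))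
    have hwA : inner ℂ (A x) w = 0 := hw (A x) (Submodule.subset_span (by simp))
    obtain ⟨s, t, rfl⟩ := Submodule.mem_span_pair.1 hv
    have i1 : inner ℂ x (A w) = 0 := by rw [← hs, hwA]
    have i2 : inner ℂ (A x) (A w) = 0 := by
      rw [← hs, hcd]; simp [inner_add_left, inner_smul_left, hwx, hwA]
    have i3 : inner ℂ x (A (A w)) = 0 := by rw [← hs, i2]
    have i4 : inner ℂ (A x) (A (A w)) = 0 := by
      rw [← hs, hcd]; simp [inner_add_left, inner_smul_left, i1, i2]
    obtain ⟨p, q, r, e', hne'⟩ := h' (x + w)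
    have hu : p • x + q • A x + r • A (A x) = (p + r * d) • x + (q + r * c) • A x := by
      rw [hcd]; module
    have hsum : ((p + r * d) • x + (q + r * c) • A x) + (p • w + q • A w + r • A (A w)) = 0 := by
      rw [← hu, ← e']; simp only [map_add]; module
    have horth : inner ℂ ((p + r * d) • x + (q + r * c) • A x)
        (p • w + q • A w + r • A (A w)) = 0 := by
      simp [inner_add_left, inner_add_right, inner_smul_left, inner_smul_right, hwx, hwA, i1, i2, i3, i4]
    have hw0 : p • w + q • A w + r • A (A w) = 0 := by
      rw [eq_neg_of_add_eq_zero_left hsum, inner_neg_left, neg_eq_zero, inner_self_eq_zero] at horth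
      exact horth
    rw [hw0, add_zero] at hsum
    obtain ⟨hp, hq⟩ := hx _ _ hsum
    have hp : p = -(r * d) := eq_neg_of_add_eq_zero_left hp
    have hq : q = -(r * c) := eq_neg_of_add_eq_zero_left hq
    have hr : r ≠ 0 := by
      rintro rfl
      exact hne' ⟨by simpa using hp, by simpa using hq, rfl⟩
    have hw1 : A (A w) = c • A w + d • w := by
      have : r • (A (A w) - (c • A w + d • w)) = 0 := by
        rw [← hw0, hp, hq]; module
      exact sub_eq_zero.1 ((smul_eq_zero.1 this).resolve_left hr)
    simp only [map_add, map_smul, hcd, hw1]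
    module
  · push Not at hx
    obtain ⟨a, ha⟩ := LinearMap.exists_eq_smul_id_of_forall_notLinearIndependent
      (f := (A : H →ₗ[ℂ] H)) hx
    have ha' : ∀ x, A x = a • x := fun x => by
      simpa using LinearMap.congr_fun ha x
    refine ⟨a, 0, fun x => ?_⟩
    rw [ha' (A x)]; simp

theorem stmt_12 {H : Type*} [NormedAddCommGroup H] [InnerProductSpace ℂ H] [CompleteSpace H]
    (A : H →L[ℂ] H) (hA : IsSelfAdjoint A) :
    ((∃ (P : H →L[ℂ] H) (α δ : ℝ), IsSelfAdjoint P ∧ P * P = P ∧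
        A = (α : ℂ) • P + (δ : ℂ) • 1) ↔
      ∃ a b : ℂ, spectrum ℂ A ⊆ {a, b}) ∧
    ((∃ a b : ℂ, spectrum ℂ A ⊆ {a, b}) ↔
      ∀ x : H, ¬ LinearIndependent ℂ ![x, A x, A (A x)]) := by
  refine ⟨⟨?_, ?_⟩, ⟨?_, ?_⟩⟩
  · rintro ⟨P, α, δ, -, hP, rfl⟩
    refine ⟨δ, α + δ, aux_spec _ _ _ ?_⟩
    have : ((α : ℂ) • P + (δ : ℂ) • 1 - ((α : ℂ) + δ) • 1) = (α : ℂ) • (P - 1) := by module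
    rw [this, add_sub_cancel_right, smul_mul_assoc, mul_smul_comm, mul_sub, hP, mul_one, sub_self]
    simp
  · rintro ⟨a, b, h⟩
    have hr := aux_real A hA a b h
    generalize a.re = a at hr
    generalize b.re = b at hr
    have hm := aux_mul A hA a b hr
    have hsa : ∀ r : ℝ, IsSelfAdjoint (A - (r : ℂ) • 1) := fun r =>
      hA.sub (IsSelfAdjoint.smul (by simp [IsSelfAdjoint]) (IsSelfAdjoint.one _))
    by_cases hab : a = b
    · subst hab
      refine ⟨0, 0, a, IsSelfAdjoint.zero _, by simp, ?_⟩
      have h0 : star (A - (a : ℂ) • 1) * (A - (a : ℂ) • 1) = 0 := by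
        rw [(hsa a).star_eq, hm]
      rw [CStarRing.star_mul_self_eq_zero_iff] at h0
      rw [sub_eq_zero.1 h0]; simp
    · have hne : ((b : ℂ) - a) ≠ 0 := by
        rw [sub_ne_zero]; exact_mod_cast Ne.symm hab
      refine ⟨((b : ℂ) - a)⁻¹ • (A - (a : ℂ) • 1), b - a, a,
        IsSelfAdjoint.smul (by simp [IsSelfAdjoint]) (hsa a), ?_, ?_⟩
      · have e : (A - (a : ℂ) • 1) * (A - (a : ℂ) • 1) = ((b : ℂ) - a) • (A - (a : ℂ) • 1) := by
          have e2 : A - (a : ℂ) • 1 = (A - (b : ℂ) • 1) + ((b : ℂ) - a) • 1 := by module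
          nth_rewrite 2 [e2]
          rw [mul_add, hm, zero_add, mul_smul_comm, mul_one]
        rw [smul_mul_assoc, mul_smul_comm, e, smul_smul ((b : ℂ) - a)⁻¹ ((b : ℂ) - a),
          inv_mul_cancel₀ hne, one_smul]
      · rw [smul_smul]
        push_cast
        rw [mul_inv_cancel₀ hne]
        module
  · rintro ⟨a, b, h⟩ x hx
    have hm := aux_mul A hA _ _ (aux_real A hA a b h)
    have e := congrArg (fun T : H →L[ℂ] H => T x) hm
    rw [Fintype.linearIndependent_iff] at hx
    have := hx ![(a.re : ℂ) * b.re, -((a.re : ℂ) + b.re), 1] (by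
      simp [Fin.sum_univ_three] at e ⊢
      rw [← e]; module) 2
    simp at this
  · intro h
    obtain ⟨c, d, hcd⟩ := aux_local A hA h
    exact aux_quad A c d hcd
end
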